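/- arXiv:2601.13426 — 2 statements merged into one kernel-verified Lean document; each statement's English description precedes it below -/
import Mathlib

section
/- Quantitative Schur-concavity in dimension k ≥ 2: Fix k ≥ 2, a demand-to-supply ratio β > 0, and M ≥ max{1, 1/β}, with supply and demand locations i.i.d. uniform on [0,1]^k and m = βn. There exist positive constants N and α depending only on (k, β, M), and B and w depending only on (k, M), such that for any θ > 0 and any service-range vectors r, r' ∈ [0, M]^n with r ⪰ r' and ‖r^↓ − r'^↓‖₁ > θn, and all n ≥ N: μ_m(r') − μ_m(r) > α·θ⁴·n − B·(min{α·θ⁴/3, w})^{−k}. -/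
open MeasureTheory
open scoped Classical

noncomputable section

/-- A matching of a bipartite compatibility relation, given as a finite set of
supply-demand pairs with compatible endpoints and pairwise distinct coordinates. -/
def IsBipMatching {a b : ℕ} (adj : Fin a → Fin b → Prop) (M : Finset (Fin a × Fin b)) : Prop :=
  (∀ e ∈ M, adj e.1 e.2) ∧
    ∀ e ∈ M, ∀ e' ∈ M, e ≠ e' → e.1 ≠ e'.1 ∧ e.2 ≠ e'.2

/-- The maximum cardinality of a matching of the bipartite compatibility relation. -/
def matchingNumber {a b : ℕ} (adj : Fin a → Fin b → Prop) : ℕ :=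
  sSup {c | ∃ M : Finset (Fin a × Fin b), IsBipMatching adj M ∧ M.card = c}

/-- The uniform measure on the unit cube `[0,1]^k`. -/
def unifCube (k : ℕ) : Measure (EuclideanSpace ℝ (Fin k)) :=
  volume.restrict {x | ∀ i, x i ∈ Set.Icc (0 : ℝ) 1}

/-- Compatibility: supply node `i` can serve demand node `j` iff the demand location is
within distance `(r i / n)^(1/k)` of the supply location. -/
def adjOf (k ntot : ℕ) {a b : ℕ} (S : Fin a → EuclideanSpace ℝ (Fin k)) (r : Fin a → ℝ)
    (D : Fin b → EuclideanSpace ℝ (Fin k)) (i : Fin a) (j : Fin b) : Prop :=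
  dist (S i) (D j) ≤ (r i / (ntot : ℝ)) ^ ((1 : ℝ) / (k : ℝ))

/-- Expected maximum matching size, with supply and demand locations i.i.d. uniform
on the unit cube `[0,1]^k`. -/
def muU (k ntot m : ℕ) {a : ℕ} (r : Fin a → ℝ) : ℝ :=
  ∫ S : Fin a → EuclideanSpace ℝ (Fin k),
    ∫ D : Fin m → EuclideanSpace ℝ (Fin k),
      (matchingNumber (fun i j => adjOf k ntot S r D i j) : ℝ)
        ∂(Measure.pi fun _ => unifCube k) ∂(Measure.pi fun _ => unifCube k)

/-- The non-increasing rearrangement of a finite real vector. -/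
def descSort {n : ℕ} (x : Fin n → ℝ) : Fin n → ℝ :=
  x ∘ Tuple.sort (fun i => -x i)

/-- `x` majorizes `y`. -/
def Majorizes {n : ℕ} (x y : Fin n → ℝ) : Prop :=
  (∀ ℓ : ℕ,
      ∑ i ∈ Finset.univ.filter (fun i : Fin n => (i : ℕ) < ℓ), descSort y i ≤
        ∑ i ∈ Finset.univ.filter (fun i : Fin n => (i : ℕ) < ℓ), descSort x i) ∧
    ∑ i, x i = ∑ i, y i

/-
Deleting supply `i` leaves a set of spare demands, those missed by some maximum matching of the
remaining graph, and `i` adds one to the matching number exactly when a spare demand lies within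
its range. Hence, as a function of `r i` alone, `muU` is a constant plus the probability that a
uniform point lands within `(r i / n)^(1/k)` of the set of spare demands. This probability is the
integral over a ball of the density of the displacement to the nearest spare demand. That density
decreases along rays, strictly because with probability bounded below an isolated demand competes
with another one, and the volume of the ball is linear in `r i`; so `muU` is strongly concave in
each coordinate, with modulus independent of `n`.

To pass from one coordinate to majorization, replace the vectors `r` and `r'` by `n` independent
samples from their entries. `muU` is symmetric and changes by at most one when one range changes,
so this costs at most the Kolmogorov–Smirnov distance, which is `o(n)`. The sampled vectors can be
exchanged one coordinate at a time, and each exchange gains by Karamata's inequality.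
-/

section Matching

variable {a b : ℕ} {adj adj' : Fin a → Fin b → Prop} {P : Finset (Fin a × Fin b)}

lemma bddAbove_card_isBipMatching (adj : Fin a → Fin b → Prop) :
    BddAbove {c | ∃ P : Finset (Fin a × Fin b), IsBipMatching adj P ∧ P.card = c} := by
  refine ⟨Fintype.card (Fin a × Fin b), ?_⟩
  rintro c ⟨P, -, rfl⟩
  exact Finset.card_le_univ P

namespace IsBipMatching

lemma card_le_matchingNumber (h : IsBipMatching adj P) : P.card ≤ matchingNumber adj :=
  le_csSup (bddAbove_card_isBipMatching adj) ⟨P, h, rfl⟩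

lemma subset {P' : Finset (Fin a × Fin b)} (h : IsBipMatching adj P) (hP : P' ⊆ P)
    (hadj : ∀ e ∈ P', adj' e.1 e.2) : IsBipMatching adj' P' :=
  ⟨hadj, fun e he e' he' ↦ h.2 e (hP he) e' (hP he')⟩

lemma injOn_fst (h : IsBipMatching adj P) : Set.InjOn Prod.fst (P : Set (Fin a × Fin b)) :=
  fun e he e' he' heq ↦ by_contra fun hne ↦ (h.2 e he e' he' hne).1 heq

lemma insert (h : IsBipMatching adj P) {i : Fin a} {j : Fin b} (hij : adj i j)
    (hi : ∀ e ∈ P, e.1 ≠ i) (hj : ∀ e ∈ P, e.2 ≠ j) : IsBipMatching adj (insert (i, j) P) := by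
  refine ⟨Finset.forall_mem_insert _ _ _ |>.2 ⟨hij, h.1⟩, fun e he e' he' hne ↦ ?_⟩
  rcases Finset.mem_insert.1 he with rfl | he <;> rcases Finset.mem_insert.1 he' with rfl | he'
  · exact absurd rfl hne
  · exact ⟨(hi e' he').symm, (hj e' he').symm⟩
  · exact ⟨hi e he, hj e he⟩
  · exact h.2 e he e' he' hne

lemma image_perm {π : Equiv.Perm (Fin a)} (h : IsBipMatching (fun i j ↦ adj (π i) j) P) :
    IsBipMatching adj (P.image (Prod.map π id)) := by
  simp only [IsBipMatching, Finset.forall_mem_image]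
  refine ⟨h.1, fun e he e' he' hne ↦ ?_⟩
  simpa using h.2 e he e' he' (ne_of_apply_ne _ hne)

end IsBipMatching

lemma exists_isBipMatching_card_eq (adj : Fin a → Fin b → Prop) :
    ∃ P, IsBipMatching adj P ∧ P.card = matchingNumber adj :=
  Nat.sSup_mem (s := {c | ∃ P, IsBipMatching adj P ∧ P.card = c})
    ⟨0, ∅, by simp [IsBipMatching], Finset.card_empty⟩ (bddAbove_card_isBipMatching adj)

lemma matchingNumber_le_add_card (s : Finset (Fin a))
    (h : ∀ i ∉ s, ∀ j, adj i j → adj' i j) :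
    matchingNumber adj ≤ matchingNumber adj' + s.card := by
  obtain ⟨P, hP, hcard⟩ := exists_isBipMatching_card_eq adj
  have hkept : IsBipMatching adj' (P.filter fun e ↦ e.1 ∉ s) :=
    hP.subset (Finset.filter_subset _ _) fun e he ↦
      h _ (Finset.mem_filter.1 he).2 _ (hP.1 e (Finset.mem_filter.1 he).1)
  have hlost : (P.filter fun e ↦ e.1 ∈ s).card ≤ s.card :=
    Finset.card_le_card_of_injOn Prod.fst (fun e he ↦ (Finset.mem_filter.1 he).2)
      (hP.injOn_fst.mono (Finset.filter_subset _ _))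
  have hsplit := Finset.card_filter_add_card_filter_not (s := P) (fun e ↦ e.1 ∈ s)
  have := hkept.card_le_matchingNumber
  lia

lemma matchingNumber_mono (h : ∀ i j, adj i j → adj' i j) :
    matchingNumber adj ≤ matchingNumber adj' := by
  simpa using matchingNumber_le_add_card (adj' := adj') ∅ fun i _ ↦ h i

lemma matchingNumber_comp_perm (adj : Fin a → Fin b → Prop) (π : Equiv.Perm (Fin a)) :
    matchingNumber (fun i j ↦ adj (π i) j) = matchingNumber adj := by
  have hle (adj : Fin a → Fin b → Prop) (π : Equiv.Perm (Fin a)) :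
      matchingNumber (fun i j ↦ adj (π i) j) ≤ matchingNumber adj := by
    obtain ⟨P, hP, hcard⟩ := exists_isBipMatching_card_eq (fun i j ↦ adj (π i) j)
    rw [← hcard, ← Finset.card_image_of_injective P (π.injective.prodMap Function.injective_id)]
    exact hP.image_perm.card_le_matchingNumber
  exact (hle adj π).antisymm (by simpa using hle (fun i j ↦ adj (π i) j) π.symm)

/-- The compatibility relation left after deleting supply node `i`; the node keeps its index but
becomes isolated. -/
def eraseSupply (adj : Fin a → Fin b → Prop) (i : Fin a) (i' : Fin a) (j : Fin b) : Prop :=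
  i' ≠ i ∧ adj i' j

/-- A demand node is *inessential* if some maximum matching leaves it unmatched. These are the
demand nodes a new supply node can serve without displacing anyone. -/
def IsInessential (adj : Fin a → Fin b → Prop) (j : Fin b) : Prop :=
  ∃ P, IsBipMatching adj P ∧ P.card = matchingNumber adj ∧ ∀ e ∈ P, e.2 ≠ j

lemma isInessential_of_isolated {j : Fin b} (h : ∀ i, ¬ adj i j) : IsInessential adj j := by
  obtain ⟨P, hP, hcard⟩ := exists_isBipMatching_card_eq adj
  exact ⟨P, hP, hcard, fun e he hj ↦ h e.1 (hj ▸ hP.1 e he)⟩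

lemma matchingNumber_eraseSupply_le (adj : Fin a → Fin b → Prop) (i : Fin a) :
    matchingNumber (eraseSupply adj i) ≤ matchingNumber adj :=
  matchingNumber_mono fun _ _ h ↦ h.2

lemma matchingNumber_le_eraseSupply_add_one (adj : Fin a → Fin b → Prop) (i : Fin a) :
    matchingNumber adj ≤ matchingNumber (eraseSupply adj i) + 1 := by
  simpa using matchingNumber_le_add_card (adj := adj) (adj' := eraseSupply adj i) {i}
    fun i' hi' j h ↦ ⟨by simpa using hi', h⟩

lemma matchingNumber_eraseSupply_lt_iff (adj : Fin a → Fin b → Prop) (i : Fin a) :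
    matchingNumber (eraseSupply adj i) < matchingNumber adj ↔
      ∃ j, IsInessential (eraseSupply adj i) j ∧ adj i j := by
  constructor
  · intro hlt
    obtain ⟨P, hP, hcard⟩ := exists_isBipMatching_card_eq adj
    obtain ⟨e, he, rfl⟩ : ∃ e ∈ P, e.1 = i := by
      by_contra! hi
      have := (hP.subset (adj' := eraseSupply adj i) subset_rfl
        fun e he ↦ ⟨hi e he, hP.1 e he⟩).card_le_matchingNumber
      lia
    have hother {f} (hf : f ∈ P.erase e) : f.1 ≠ e.1 ∧ f.2 ≠ e.2 :=
      hP.2 f (Finset.mem_of_mem_erase hf) e he (Finset.ne_of_mem_erase hf)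
    refine ⟨e.2, ⟨P.erase e, hP.subset (Finset.erase_subset _ _) fun f hf ↦
      ⟨(hother hf).1, hP.1 f (Finset.mem_of_mem_erase hf)⟩, ?_, fun f hf ↦ (hother hf).2⟩,
      hP.1 e he⟩
    have := matchingNumber_le_eraseSupply_add_one adj e.1
    rw [Finset.card_erase_of_mem he]
    lia
  · rintro ⟨j, ⟨P, hP, hcard, hj⟩, hij⟩
    have hi : ∀ e ∈ P, e.1 ≠ i := fun e he ↦ (hP.1 e he).1
    have hnotMem : (i, j) ∉ P := fun h ↦ hi _ h rfl
    have hadj : IsBipMatching adj P := hP.subset subset_rfl fun e he ↦ (hP.1 e he).2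
    have := (hadj.insert hij hi hj).card_le_matchingNumber
    rw [Finset.card_insert_of_notMem hnotMem] at this
    lia

lemma matchingNumber_eq_eraseSupply_add (adj : Fin a → Fin b → Prop) (i : Fin a) :
    matchingNumber adj = matchingNumber (eraseSupply adj i) +
      if ∃ j, IsInessential (eraseSupply adj i) j ∧ adj i j then 1 else 0 := by
  have hge := matchingNumber_eraseSupply_le adj i
  have hle := matchingNumber_le_eraseSupply_add_one adj i
  have hlt := matchingNumber_eraseSupply_lt_iff adj i
  split_ifs with h
  · have := hlt.2 h
    lia
  · have := mt hlt.1 h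
    lia

end Matching

section Expect

open Finset
open scoped BigOperators

variable {ι κ : Type*} [Fintype ι] [Fintype κ] [DecidableEq ι]

lemma expect_expect_update (f : (ι → κ) → ℝ) (i : ι) :
    𝔼 σ, 𝔼 x, f (Function.update σ i x) = 𝔼 σ, f σ := by
  rcases isEmpty_or_nonempty κ with hκ | hκ
  · have : IsEmpty (ι → κ) := ⟨fun σ ↦ hκ.elim (σ i)⟩
    simp
  let e : (ι → κ) × κ ≃ (ι → κ) × κ :=
    { toFun := fun p ↦ (Function.update p.1 i p.2, p.1 i)
      invFun := fun p ↦ (Function.update p.1 i p.2, p.1 i)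
      left_inv := fun p ↦ by simp
      right_inv := fun p ↦ by simp }
  calc
    𝔼 σ, 𝔼 x, f (Function.update σ i x) = 𝔼 p : (ι → κ) × κ, f (Function.update p.1 i p.2) := by
      rw [← univ_product_univ, expect_product]
    _ = 𝔼 p : (ι → κ) × κ, f p.1 := Fintype.expect_equiv e _ _ fun p ↦ rfl
    _ = 𝔼 σ, f σ := by
      rw [← univ_product_univ, expect_product]
      simp only [Fintype.expect_const]

lemma expect_apply [Nonempty κ] (g : κ → ℝ) (i : ι) : 𝔼 σ : ι → κ, g (σ i) = 𝔼 x, g x := by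
  simp [← expect_expect_update (fun σ : ι → κ ↦ g (σ i)) i]

lemma expect_mul_apply_of_expect_eq_zero {X : κ → ℝ} (hX : 𝔼 x, X x = 0) {i j : ι} (hij : j ≠ i) :
    𝔼 σ : ι → κ, X (σ i) * X (σ j) = 0 := by
  simp [← expect_expect_update (fun σ : ι → κ ↦ X (σ i) * X (σ j)) i, hij, ← expect_mul, hX]

lemma expect_sq_sum_of_expect_eq_zero [Nonempty κ] {X : κ → ℝ} (hX : 𝔼 x, X x = 0) :
    𝔼 σ : ι → κ, (∑ i, X (σ i)) ^ 2 = Fintype.card ι * 𝔼 x, X x ^ 2 := by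
  have hrow (i : ι) : ∑ j, 𝔼 σ : ι → κ, X (σ i) * X (σ j) = 𝔼 x, X x ^ 2 := by
    rw [sum_eq_single_of_mem i (mem_univ i) fun j _ ↦ expect_mul_apply_of_expect_eq_zero hX]
    simpa only [sq] using expect_apply (fun x ↦ X x * X x) i
  simp only [sq, sum_mul_sum, expect_sum_comm] at hrow ⊢
  simp [hrow]

end Expect

section Sampling

open Finset
open scoped BigOperators

variable {n : ℕ}

/-- The number of samples of `σ` that fall among the first `ℓ` indices. -/
def sampleCount (σ : Fin n → Fin n) (ℓ : ℕ) : ℕ :=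
  #{i | (σ i : ℕ) < ℓ}

/-- The Kolmogorov–Smirnov discrepancy between the sample `σ` and the uniform distribution on
`Fin n`, scaled by `n`. -/
def discrepancy (σ : Fin n → Fin n) : ℕ :=
  (range (n + 1)).sup fun ℓ ↦ ((sampleCount σ ℓ : ℤ) - ℓ).natAbs

lemma sampleCount_comp_perm (σ : Fin n → Fin n) (π : Equiv.Perm (Fin n)) (ℓ : ℕ) :
    sampleCount (σ ∘ π) ℓ = sampleCount σ ℓ :=
  card_equiv π fun i ↦ by simp

lemma sampleCount_mono (σ : Fin n → Fin n) : Monotone (sampleCount σ) := fun _ _ h ↦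
  card_le_card <| monotone_filter_right _ fun _ _ hi ↦ hi.trans_le h

lemma abs_sampleCount_sub_le (σ : Fin n → Fin n) {ℓ : ℕ} (hℓ : ℓ ≤ n) :
    |(sampleCount σ ℓ : ℤ) - ℓ| ≤ discrepancy σ := by
  rw [Int.abs_eq_natAbs, Nat.cast_le]
  exact le_sup (f := fun ℓ : ℕ ↦ ((sampleCount σ ℓ : ℤ) - ℓ).natAbs)
    (mem_range.2 (Nat.lt_succ_of_le hℓ))

lemma expect_sq_sampleCount_sub_le {ℓ : ℕ} (hn : 0 < n) (hℓ : ℓ ≤ n) :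
    𝔼 σ : Fin n → Fin n, ((sampleCount σ ℓ : ℝ) - ℓ) ^ 2 ≤ n := by
  have : NeZero n := ⟨hn.ne'⟩
  have hn' : (0 : ℝ) < n := Nat.cast_pos.2 hn
  have hp0 : 0 ≤ (ℓ : ℝ) / n := by positivity
  have hp1 : (ℓ : ℝ) / n ≤ 1 := (div_le_one hn').2 (Nat.cast_le.2 hℓ)
  let X (x : Fin n) : ℝ := (if (x : ℕ) < ℓ then 1 else 0) - ℓ / n
  have hX : 𝔼 x, X x = 0 := by
    rw [Fintype.expect_eq_sum_div_card, sum_sub_distrib, sum_boole, Fin.card_filter_val_lt,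
      min_eq_right hℓ]
    simp [mul_div_cancel₀ _ hn'.ne']
  have hXsq (x : Fin n) : X x ^ 2 ≤ 1 := by
    rw [sq_le_one_iff_abs_le_one, abs_le]
    simp only [X]
    split_ifs <;> constructor <;> linarith
  have hcount (σ : Fin n → Fin n) : (sampleCount σ ℓ : ℝ) - ℓ = ∑ i, X (σ i) := by
    simp [X, sampleCount, sum_sub_distrib, mul_div_cancel₀ _ hn'.ne']
  simp only [hcount, expect_sq_sum_of_expect_eq_zero hX, Fintype.card_fin]
  exact mul_le_of_le_one_right hn'.le (expect_le univ_nonempty fun x _ ↦ hXsq x)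

lemma abs_le_add_sq_div {ε : ℝ} (hε : 0 < ε) (x : ℝ) : |x| ≤ ε + x ^ 2 / (4 * ε) := by
  rw [← sq_abs, ← sub_nonneg]
  have : ε + |x| ^ 2 / (4 * ε) - |x| = (2 * ε - |x|) ^ 2 / (4 * ε) := by field_simp; ring
  rw [this]
  positivity

lemma abs_sampleCount_sub_le_of_grid {s : ℕ} (hs : 0 < s) (σ : Fin n → Fin n) {R : ℝ} {ℓ : ℕ}
    (hℓ : ℓ ≤ n) (hR : ∀ q ≤ ℓ / s + 1,
      |(sampleCount σ (min (q * s) n) : ℝ) - (min (q * s) n : ℕ)| ≤ R) :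
    |(sampleCount σ ℓ : ℝ) - ℓ| ≤ s + R := by
  have hdiv := Nat.div_add_mod' ℓ s
  have hmod := Nat.mod_lt ℓ hs
  have hlow := hR (ℓ / s) (Nat.le_succ _)
  have hhigh := hR (ℓ / s + 1) le_rfl
  rw [Nat.succ_mul] at hhigh
  set g := min (ℓ / s * s) n
  set g' := min (ℓ / s * s + s) n
  have hg : (sampleCount σ g : ℝ) ≤ sampleCount σ ℓ := by
    exact_mod_cast sampleCount_mono σ (by lia : g ≤ ℓ)
  have hg' : (sampleCount σ ℓ : ℝ) ≤ sampleCount σ g' := by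
    exact_mod_cast sampleCount_mono σ (by lia : ℓ ≤ g')
  have hgℓ : (ℓ : ℝ) ≤ g + s := by exact_mod_cast (by lia : ℓ ≤ g + s)
  have hgℓ' : (g' : ℝ) ≤ ℓ + s := by exact_mod_cast (by lia : g' ≤ ℓ + s)
  rw [abs_le] at hlow hhigh ⊢
  constructor <;> linarith

lemma discrepancy_le_of_grid {s K : ℕ} (hs : 0 < s) (hK : n ≤ K * s) (σ : Fin n → Fin n)
    {ε : ℝ} (hε : 0 < ε) :
    (discrepancy σ : ℝ) ≤ s + (ε + ∑ q ∈ range (K + 2),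
      ((sampleCount σ (min (q * s) n) : ℝ) - (min (q * s) n : ℕ)) ^ 2 / (4 * ε)) := by
  obtain ⟨ℓ, hℓ, hmax⟩ := exists_mem_eq_sup (range (n + 1)) nonempty_range_add_one
    fun ℓ ↦ ((sampleCount σ ℓ : ℤ) - ℓ).natAbs
  have hℓ : ℓ ≤ n := Nat.le_of_lt_succ (mem_range.1 hℓ)
  have hdiv : ℓ / s ≤ K := Nat.div_le_of_le_mul (mul_comm K s ▸ hℓ.trans hK)
  rw [discrepancy, hmax, Nat.cast_natAbs, Int.cast_abs, Int.cast_sub, Int.cast_natCast,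
    Int.cast_natCast]
  refine abs_sampleCount_sub_le_of_grid hs σ hℓ fun q hq ↦ (abs_le_add_sq_div hε _).trans ?_
  gcongr
  exact single_le_sum (f := fun q ↦
    ((sampleCount σ (min (q * s) n) : ℝ) - (min (q * s) n : ℕ)) ^ 2 / (4 * ε))
    (fun _ _ ↦ by positivity) (mem_range.2 (by lia : q < K + 2))

lemma expect_discrepancy_le {δ : ℝ} (hδ : 0 < δ) (hδ1 : δ ≤ 1) :
    𝔼 σ : Fin n → Fin n, (discrepancy σ : ℝ) ≤ 2 * δ * n + 2 * δ⁻¹ ^ 2 := by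
  rcases Nat.eq_zero_or_pos n with rfl | hn
  · simpa [discrepancy, sampleCount] using sq_nonneg δ
  have : NeZero n := ⟨hn.ne'⟩
  set s := ⌈δ * n⌉₊
  set K := ⌈δ⁻¹⌉₊
  have hs : (s : ℝ) < δ * n + 1 := Nat.ceil_lt_add_one (by positivity)
  have hK : (K : ℝ) < δ⁻¹ + 1 := Nat.ceil_lt_add_one (by positivity)
  have hKs : n ≤ K * s := by
    have : (n : ℝ) ≤ K * s := calc
      (n : ℝ) = δ⁻¹ * (δ * n) := by field_simp
      _ ≤ K * s := by gcongr <;> exact Nat.le_ceil _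
    exact_mod_cast this
  have hinv : 1 ≤ δ⁻¹ := (one_le_inv₀ hδ).2 hδ1
  calc
    𝔼 σ : Fin n → Fin n, (discrepancy σ : ℝ)
      ≤ 𝔼 σ : Fin n → Fin n, (s + (δ * n + ∑ q ∈ range (K + 2),
          ((sampleCount σ (min (q * s) n) : ℝ) - (min (q * s) n : ℕ)) ^ 2 / (4 * (δ * n)))) :=
        expect_le_expect fun σ _ ↦
          discrepancy_le_of_grid (Nat.ceil_pos.2 (by positivity)) hKs σ (by positivity)
    _ = s + (δ * n + ∑ q ∈ range (K + 2), (𝔼 σ : Fin n → Fin n,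
          ((sampleCount σ (min (q * s) n) : ℝ) - (min (q * s) n : ℕ)) ^ 2) / (4 * (δ * n))) := by
        simp only [expect_add_distrib, Fintype.expect_const, expect_sum_comm, expect_div]
    _ ≤ s + (δ * n + ∑ q ∈ range (K + 2), n / (4 * (δ * n))) := by
        gcongr with q
        exact expect_sq_sampleCount_sub_le hn (min_le_right _ _)
    _ = s + (δ * n + (K + 2) * δ⁻¹ / 4) := by
        rw [sum_const, card_range, nsmul_eq_mul]
        push_cast
        field_simp
    _ ≤ 2 * δ * n + 2 * δ⁻¹ ^ 2 := by nlinarith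

/-- The two properties of the expected matching size that control resampling its argument: it is
symmetric, and enlarging all but the entries in `s` loses at most `#s`. -/
structure IsSymmetricStable (μ : (Fin n → ℝ) → ℝ) : Prop where
  comp_perm (r : Fin n → ℝ) (π : Equiv.Perm (Fin n)) : μ (r ∘ π) = μ r
  le_add_card {r r' : Fin n → ℝ} (s : Finset (Fin n)) (hr : ∀ i, 0 ≤ r i)
    (h : ∀ i ∉ s, r i ≤ r' i) : μ r ≤ μ r' + #s

namespace IsSymmetricStable

variable {μ : (Fin n → ℝ) → ℝ} {r : Fin n → ℝ}

-- The cyclic shift by `d` aligns `r (i + d)` with `r' i`, except at the last `d` indices.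
lemma le_add_of_shift (hμ : IsSymmetricStable μ) {r r' : Fin n → ℝ} (hr : ∀ i, 0 ≤ r i) (d : ℕ)
    (h : ∀ i j : Fin n, (j : ℕ) = i + d → r j ≤ r' i) : μ r ≤ μ r' + d := by
  rcases le_or_gt n d with hd | hd
  · calc
      μ r ≤ μ r' + #(univ : Finset (Fin n)) := hμ.le_add_card univ hr (by simp)
      _ ≤ μ r' + d := by simpa using hd
  have : NeZero n := ⟨by lia⟩
  let π : Equiv.Perm (Fin n) := Equiv.addRight ⟨d, hd⟩
  let s : Finset (Fin n) := {i | ¬ (i : ℕ) < n - d}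
  have hs : #s ≤ d := by
    have := card_filter_add_card_filter_not (s := univ) fun i : Fin n ↦ (i : ℕ) < n - d
    rw [Fin.card_filter_val_lt, card_univ, Fintype.card_fin] at this
    lia
  calc
    μ r = μ (r ∘ π) := (hμ.comp_perm r π).symm
    _ ≤ μ r' + #s := by
      refine hμ.le_add_card s (fun i ↦ hr _) fun i hi ↦ h i _ ?_
      have hi : (i : ℕ) + d < n := by
        simp only [s, mem_filter, mem_univ, true_and, not_not] at hi
        lia
      exact (Fin.val_add i ⟨d, hd⟩).trans (Nat.mod_eq_of_lt hi)
    _ ≤ μ r' + d := by gcongr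

lemma comp_le_add_discrepancy (hμ : IsSymmetricStable μ) (hanti : Antitone r)
    (hr : ∀ i, 0 ≤ r i) (σ : Fin n → Fin n) : μ (r ∘ σ) ≤ μ r + discrepancy σ := by
  rw [← hμ.comp_perm (r ∘ σ) (Tuple.sort σ)]
  refine hμ.le_add_of_shift (fun i ↦ hr _) _ fun i j hij ↦ hanti ?_
  by_contra! hlt
  have hcount : #(Iic j) ≤ sampleCount (σ ∘ Tuple.sort σ) i := card_le_card fun j' hj' ↦ by
    simpa using (Tuple.monotone_sort σ (mem_Iic.1 hj')).trans_lt hlt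
  have hdisc := (abs_le.1 (abs_sampleCount_sub_le σ i.2.le)).2
  rw [Fin.card_Iic, sampleCount_comp_perm] at hcount
  lia

lemma le_comp_add_discrepancy (hμ : IsSymmetricStable μ) (hanti : Antitone r)
    (hr : ∀ i, 0 ≤ r i) (σ : Fin n → Fin n) : μ r ≤ μ (r ∘ σ) + discrepancy σ := by
  rw [← hμ.comp_perm (r ∘ σ) (Tuple.sort σ)]
  refine hμ.le_add_of_shift hr _ fun i j hij ↦ hanti ?_
  by_contra! hlt
  have hcount : sampleCount (σ ∘ Tuple.sort σ) (j + 1) ≤ #(Iio i) := card_le_card fun j' hj' ↦ by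
    rw [mem_Iio]
    by_contra! hle
    have hj' : σ (Tuple.sort σ j') ≤ j := by
      simpa [Nat.lt_succ_iff] using hj'
    exact (hlt.trans_le (Tuple.monotone_sort σ hle)).not_ge hj'
  have hdisc := (abs_le.1 (abs_sampleCount_sub_le σ (Nat.succ_le_of_lt j.2))).1
  rw [Fin.card_Iio, sampleCount_comp_perm] at hcount
  push_cast at hdisc
  lia

lemma abs_expect_comp_sub_le (hμ : IsSymmetricStable μ) (hanti : Antitone r)
    (hr : ∀ i, 0 ≤ r i) {δ : ℝ} (hδ : 0 < δ) (hδ1 : δ ≤ 1) :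
    |𝔼 σ : Fin n → Fin n, μ (r ∘ σ) - μ r| ≤ 2 * δ * n + 2 * δ⁻¹ ^ 2 := calc
  |𝔼 σ : Fin n → Fin n, μ (r ∘ σ) - μ r| = |𝔼 σ : Fin n → Fin n, (μ (r ∘ σ) - μ r)| := by
    have : Nonempty (Fin n → Fin n) := ⟨id⟩
    rw [expect_sub_distrib, Fintype.expect_const]
  _ ≤ 𝔼 σ : Fin n → Fin n, |μ (r ∘ σ) - μ r| := abs_expect_le _ _
  _ ≤ 𝔼 σ : Fin n → Fin n, (discrepancy σ : ℝ) := expect_le_expect fun σ _ ↦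
    abs_sub_le_iff.2 ⟨sub_le_iff_le_add'.2 (hμ.comp_le_add_discrepancy hanti hr σ),
      sub_le_iff_le_add'.2 (hμ.le_comp_add_discrepancy hanti hr σ)⟩
  _ ≤ 2 * δ * n + 2 * δ⁻¹ ^ 2 := expect_discrepancy_le hδ hδ1

end IsSymmetricStable

end Sampling

section Majorization

open Finset
open scoped BigOperators

/-- `ψ v` is a supergradient of `f` at every `v ∈ s`, with a quadratic margin of modulus `c`: a
derivative-free way of saying that `f` is `2 * c`-strongly concave on `s` with derivative `ψ`. -/
def IsQuadraticSupergradient (f ψ : ℝ → ℝ) (c : ℝ) (s : Set ℝ) : Prop :=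
  ∀ u ∈ s, ∀ v ∈ s, f u - f v ≤ ψ v * (u - v) - c * (u - v) ^ 2

namespace IsQuadraticSupergradient

variable {f ψ : ℝ → ℝ} {c : ℝ} {s : Set ℝ}

lemma mono {c' : ℝ} (h : IsQuadraticSupergradient f ψ c s) (hc : c' ≤ c) :
    IsQuadraticSupergradient f ψ c' s := fun u hu v hv ↦ by
  have := h u hu v hv
  have := mul_le_mul_of_nonneg_right hc (sq_nonneg (u - v))
  linarith

lemma antitoneOn (h : IsQuadraticSupergradient f ψ c s) (hc : 0 ≤ c) : AntitoneOn ψ s := by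
  intro u hu v hv huv
  have huv' : 0 ≤ (ψ u - ψ v) * (v - u) := by
    nlinarith [h u hu v hv, h v hv u hu, mul_nonneg hc (sq_nonneg (u - v))]
  rcases huv.eq_or_lt with rfl | hlt
  · rfl
  · exact sub_nonneg.1 (nonneg_of_mul_nonneg_left huv' (sub_pos.2 hlt))

end IsQuadraticSupergradient

-- Abel summation.
lemma sum_mul_le_of_monotone_of_partialSum_nonneg : ∀ {n : ℕ} {g d : Fin n → ℝ}, Monotone g →
    (∀ ℓ : ℕ, 0 ≤ ∑ i with Fin.val i < ℓ, d i) → ∀ {u : ℝ}, (∀ i, g i ≤ u) →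
    ∑ i, g i * d i ≤ u * ∑ i, d i
  | 0, _, _, _, _, _, _ => by simp
  | n + 1, g, d, hg, hd, u, hu => by
    have hinit : ∑ i : Fin n, g i.castSucc * d i.castSucc ≤
        g (Fin.last n) * ∑ i : Fin n, d i.castSucc := by
      refine sum_mul_le_of_monotone_of_partialSum_nonneg
        (fun i j hij ↦ hg (Fin.castSucc_le_castSucc_iff.2 hij)) (fun ℓ ↦ ?_)
        (fun i ↦ hg (Fin.le_last _))
      have hpartial := hd (min ℓ n)
      rw [sum_filter, Fin.sum_univ_castSucc, if_neg (by simp), add_zero] at hpartial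
      simpa [sum_filter, Fin.val_castSucc, lt_min_iff] using hpartial
    have htotal : 0 ≤ ∑ i, d i := by
      simpa only [Fin.is_lt, filter_true] using hd (n + 1)
    calc
      ∑ i, g i * d i ≤ g (Fin.last n) * ∑ i, d i := by
        rw [Fin.sum_univ_castSucc, Fin.sum_univ_castSucc (f := d), mul_add]
        gcongr
      _ ≤ u * ∑ i, d i := mul_le_mul_of_nonneg_right (hu _) htotal

lemma sum_mul_nonpos_of_monotone_of_partialSum_nonneg {n : ℕ} {g d : Fin n → ℝ} (hg : Monotone g)
    (hd : ∀ ℓ : ℕ, 0 ≤ ∑ i with Fin.val i < ℓ, d i) (hsum : ∑ i, d i = 0) :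
    ∑ i, g i * d i ≤ 0 := by
  obtain ⟨u, hu⟩ := (Set.finite_range g).bddAbove
  simpa [hsum] using
    sum_mul_le_of_monotone_of_partialSum_nonneg hg hd fun i ↦ hu (Set.mem_range_self i)

-- Karamata's inequality with a quantitative gain. The linear terms are handled by Abel summation
-- and the quadratic ones by `d ^ 2 ≥ 2 * θ * |d| - θ ^ 2`.
lemma IsQuadraticSupergradient.mul_card_le_sum_sub {n : ℕ} {f ψ : ℝ → ℝ} {c θ : ℝ} {s : Set ℝ}
    (h : IsQuadraticSupergradient f ψ c s) (hc : 0 ≤ c) (hθ : 0 ≤ θ) {x y : Fin n → ℝ}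
    (hx : ∀ i, x i ∈ s) (hy : ∀ i, y i ∈ s) (hanti : Antitone y)
    (hmaj : ∀ ℓ : ℕ, ∑ i with Fin.val i < ℓ, y i ≤ ∑ i with Fin.val i < ℓ, x i)
    (hsum : ∑ i, x i = ∑ i, y i) (hdist : θ * n ≤ ∑ i, |x i - y i|) :
    c * θ ^ 2 * n ≤ ∑ i, (f (y i) - f (x i)) := by
  have hlinear : ∑ i, ψ (y i) * (x i - y i) ≤ 0 := by
    refine sum_mul_nonpos_of_monotone_of_partialSum_nonneg
      (fun i j hij ↦ h.antitoneOn hc (hy j) (hy i) (hanti hij)) (fun ℓ ↦ ?_) ?_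
    · simpa using hmaj ℓ
    · simpa [sub_eq_zero] using hsum
  have hterm (i : Fin n) : c * (2 * θ * |x i - y i| - θ ^ 2) - ψ (y i) * (x i - y i) ≤
      f (y i) - f (x i) := by
    have hsq : c * (2 * θ * |x i - y i| - θ ^ 2) ≤ c * (x i - y i) ^ 2 := by
      gcongr
      nlinarith [sq_abs (x i - y i), sq_nonneg (|x i - y i| - θ)]
    linarith [h _ (hx i) _ (hy i)]
  calc
    c * θ ^ 2 * n = c * (2 * θ * (θ * n) - n * θ ^ 2) := by ring
    _ ≤ c * (2 * θ * ∑ i, |x i - y i| - n * θ ^ 2) - ∑ i, ψ (y i) * (x i - y i) := by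
      rw [← sub_zero (c * _)]
      gcongr
    _ = ∑ i, (c * (2 * θ * |x i - y i| - θ ^ 2) - ψ (y i) * (x i - y i)) := by
      simp [sum_sub_distrib, ← mul_sum]
    _ ≤ ∑ i, (f (y i) - f (x i)) := sum_le_sum fun i _ ↦ hterm i

variable {n : ℕ}

lemma antitone_descSort (x : Fin n → ℝ) : Antitone (descSort x) := fun _ _ hij ↦
  neg_le_neg_iff.1 (Tuple.monotone_sort (fun i ↦ -x i) hij)

section Interpolation

variable {ι κ : Type*} [DecidableEq ι]

lemma piecewise_update_update {s : Finset ι} {i : ι} (hi : i ∉ s) (f g : ι → κ) (a b : κ) :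
    s.piecewise (Function.update f i a) (Function.update g i b) =
      Function.update (s.piecewise f g) i b := by
  rw [update_piecewise_of_notMem s f g hi]
  exact s.piecewise_congr
    (fun j hj ↦ Function.update_of_ne (ne_of_mem_of_not_mem hj hi) _ _) fun _ _ ↦ rfl

-- Lindeberg's replacement argument: the samples `x ∘ σ` are exchanged for `y ∘ σ` one coordinate
-- at a time.
lemma card_mul_le_expect_comp_sub [Fintype ι] [Fintype κ] {μ : (ι → ℝ) → ℝ} {x y : κ → ℝ}
    {s : Set ℝ} {g : ℝ} (hx : ∀ j, x j ∈ s) (hy : ∀ j, y j ∈ s)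
    (h : ∀ r : ι → ℝ, (∀ i, r i ∈ s) → ∀ i,
      g ≤ 𝔼 j, (μ (Function.update r i (y j)) - μ (Function.update r i (x j)))) [Nonempty κ] :
    Fintype.card ι * g ≤ 𝔼 σ : ι → κ, μ (y ∘ σ) - 𝔼 σ : ι → κ, μ (x ∘ σ) := by
  let mix (t : Finset ι) (σ : ι → κ) : ι → ℝ := t.piecewise (y ∘ σ) (x ∘ σ)
  suffices hmix : ∀ t : Finset ι, #t * g ≤ 𝔼 σ, μ (mix t σ) - 𝔼 σ, μ (mix ∅ σ) by
    simpa [mix] using hmix univ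
  intro t
  induction t using Finset.induction_on with
  | empty => simp
  | insert i t hi ih =>
    have hmem (σ : ι → κ) (l : ι) : mix t σ l ∈ s := by
      simp only [mix, piecewise, Function.comp_apply]
      split_ifs
      exacts [hy _, hx _]
    have hold : 𝔼 σ, μ (mix t σ) = 𝔼 σ, 𝔼 j, μ (Function.update (mix t σ) i (x j)) := by
      rw [← expect_expect_update _ i]
      simp only [mix, Function.comp_update, piecewise_update_update hi]
    have hnew : 𝔼 σ, μ (mix (insert i t) σ) = 𝔼 σ, 𝔼 j, μ (Function.update (mix t σ) i (y j)) := by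
      rw [← expect_expect_update _ i]
      simp only [mix, Function.comp_update, piecewise_insert, piecewise_update_update hi,
        Function.update_self, Function.update_idem]
    have hgain : g ≤ 𝔼 σ, μ (mix (insert i t) σ) - 𝔼 σ, μ (mix t σ) := by
      rw [hold, hnew, ← expect_sub_distrib]
      simp only [← expect_sub_distrib]
      exact le_expect univ_nonempty fun σ _ ↦ h _ (hmem σ) i
    rw [card_insert_of_notMem hi]
    push_cast
    linarith

end Interpolation

-- Both `x` and `y` are first replaced by `n` independent samples from their entries.
theorem IsSymmetricStable.le_sub_of_majorizes {μ : (Fin n → ℝ) → ℝ} (hμ : IsSymmetricStable μ)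
    {c M θ δ : ℝ} (hc : 0 ≤ c) (hθ : 0 ≤ θ) (hδ : 0 < δ) (hδ1 : δ ≤ 1)
    (hconc : ∀ r : Fin n → ℝ, (∀ i, r i ∈ Set.Icc 0 M) → ∀ i, ∃ ψ,
      IsQuadraticSupergradient (fun v ↦ μ (Function.update r i v)) ψ c (Set.Icc 0 M))
    {x y : Fin n → ℝ} (hx : ∀ i, x i ∈ Set.Icc 0 M) (hy : ∀ i, y i ∈ Set.Icc 0 M)
    (hmaj : Majorizes x y) (hdist : θ * n ≤ ∑ i, |descSort x i - descSort y i|) :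
    c * θ ^ 2 * n - (4 * δ * n + 4 * δ⁻¹ ^ 2) ≤ μ y - μ x := by
  rcases Nat.eq_zero_or_pos n with rfl | hn
  · simp [Subsingleton.elim x y, sq_nonneg]
  have : NeZero n := ⟨hn.ne'⟩
  have hsort (z : Fin n → ℝ) : μ (descSort z) = μ z := hμ.comp_perm z _
  have hsum (z : Fin n → ℝ) : ∑ i, descSort z i = ∑ i, z i := Equiv.sum_comp _ z
  have hgain := card_mul_le_expect_comp_sub (ι := Fin n) (x := descSort x) (y := descSort y)
    (fun j ↦ hx _) (fun j ↦ hy _) (g := c * θ ^ 2) fun r hr i ↦ by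
      obtain ⟨ψ, hψ⟩ := hconc r hr i
      rw [Fintype.expect_eq_sum_div_card, Fintype.card_fin, le_div_iff₀ (Nat.cast_pos.2 hn)]
      exact hψ.mul_card_le_sum_sub hc hθ (fun j ↦ hx _) (fun j ↦ hy _) (antitone_descSort y) hmaj.1
        (by rw [hsum, hsum, hmaj.2]) hdist
  have hsampling (z : Fin n → ℝ) (hz : ∀ i, z i ∈ Set.Icc 0 M) := abs_le.1 <|
    hμ.abs_expect_comp_sub_le (antitone_descSort z) (fun i ↦ (hz _).1) hδ hδ1
  have hsx := (hsampling x hx).1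
  have hsy := (hsampling y hy).2
  rw [hsort] at hsx hsy
  rw [Fintype.card_fin] at hgain
  linarith

end Majorization

section Polar

open Metric Module

section Radial

variable {d : ℕ}

lemma integral_pow_pred_mul_sub (hd : d ≠ 0) (A c x a b : ℝ) :
    ∫ t in a..b, t ^ (d - 1) * (A - c * (t ^ d - x)) =
      A / d * (b ^ d - a ^ d) - c / (2 * d) * ((b ^ d - x) ^ 2 - (a ^ d - x) ^ 2) := by
  have hd' : (d : ℝ) ≠ 0 := Nat.cast_ne_zero.2 hd
  have hderiv (t : ℝ) : HasDerivAt (fun t : ℝ ↦ A / d * t ^ d - c / (2 * d) * (t ^ d - x) ^ 2)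
      (t ^ (d - 1) * (A - c * (t ^ d - x))) t := by
    have hpow := hasDerivAt_pow d t
    refine ((hpow.const_mul _).sub (((hpow.sub_const x).pow 2).const_mul _)).congr_deriv ?_
    push_cast
    field_simp
  rw [intervalIntegral.integral_eq_sub_of_hasDerivAt (fun t _ ↦ hderiv t)
    (Continuous.intervalIntegrable (by fun_prop) _ _)]
  ring

lemma integral_pow_pred_mul_sub_le {g : ℝ → ℝ} {c R : ℝ} (hd : d ≠ 0)
    (hint : ∀ a b, IntervalIntegrable (fun t ↦ t ^ (d - 1) * g t) volume a b)
    (hg : ∀ s t, 0 ≤ s → s ≤ t → t ≤ R → g t + c * (t ^ d - s ^ d) ≤ g s) {a b : ℝ}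
    (ha : a ∈ Set.Icc 0 R) (hb : b ∈ Set.Icc 0 R) :
    (∫ t in 0..a, t ^ (d - 1) * g t) - (∫ t in 0..b, t ^ (d - 1) * g t) ≤
      g b / d * (a ^ d - b ^ d) - c / (2 * d) * (a ^ d - b ^ d) ^ 2 := by
  have hbound (x y : ℝ) : IntervalIntegrable
      (fun t ↦ t ^ (d - 1) * (g b - c * (t ^ d - b ^ d))) volume x y :=
    Continuous.intervalIntegrable (by fun_prop) _ _
  suffices h : ∫ t in b..a, t ^ (d - 1) * g t ≤
      ∫ t in b..a, t ^ (d - 1) * (g b - c * (t ^ d - b ^ d)) by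
    rw [integral_pow_pred_mul_sub hd] at h
    rw [intervalIntegral.integral_interval_sub_left (hint _ _) (hint _ _)]
    linarith
  rcases le_total b a with hab | hab
  · refine intervalIntegral.integral_mono_on hab (hint _ _) (hbound _ _) fun t ht ↦ ?_
    refine mul_le_mul_of_nonneg_left ?_ (pow_nonneg (hb.1.trans ht.1) _)
    linarith [hg b t hb.1 ht.1 (ht.2.trans ha.2)]
  · rw [intervalIntegral.integral_symm, intervalIntegral.integral_symm a b, neg_le_neg_iff]
    refine intervalIntegral.integral_mono_on hab (hbound _ _) (hint _ _) fun t ht ↦ ?_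
    refine mul_le_mul_of_nonneg_left ?_ (pow_nonneg (ha.1.trans ht.1) _)
    linarith [hg t b (ha.1.trans ht.1) ht.2 hb.2]

end Radial

variable {E : Type*} [NormedAddCommGroup E] [NormedSpace ℝ E] [FiniteDimensional ℝ E]
  [MeasurableSpace E] [BorelSpace E] (μ : Measure E) [μ.IsAddHaarMeasure]

lemma integral_volumeIoiPow (d : ℕ) (h : ℝ → ℝ) :
    ∫ t : Set.Ioi (0 : ℝ), h t ∂(Measure.volumeIoiPow d) = ∫ t in Set.Ioi (0 : ℝ), t ^ d * h t := by
  simp only [Measure.volumeIoiPow, ENNReal.ofReal]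
  rw [integral_withDensity_eq_integral_smul (measurable_subtype_coe.pow_const _).real_toNNReal,
    integral_subtype_comap measurableSet_Ioi fun t : ℝ ↦ Real.toNNReal (t ^ d) • h t]
  refine setIntegral_congr_fun measurableSet_Ioi fun t ht ↦ ?_
  simp [NNReal.smul_def, Real.coe_toNNReal _ (pow_nonneg (le_of_lt ht) d)]

lemma integral_eq_integral_sphere_smul [Nontrivial E] {f : E → ℝ} (hf : Integrable f μ) :
    ∫ y, f y ∂μ = ∫ t in Set.Ioi (0 : ℝ), t ^ (finrank ℝ E - 1) *
      ∫ u : sphere (0 : E) 1, f (t • (u : E)) ∂μ.toSphere := by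
  let g (p : sphere (0 : E) 1 × Set.Ioi (0 : ℝ)) : ℝ := f ((p.2 : ℝ) • (p.1 : E))
  have hg (x : ({0}ᶜ : Set E)) : g (homeomorphUnitSphereProd E x) = f x := by
    have hx : ‖(x : E)‖ ≠ 0 := norm_ne_zero_iff.2 x.2
    simp [g, homeomorphUnitSphereProd, smul_smul, hx]
  have hpolar := μ.measurePreserving_homeomorphUnitSphereProd
  have hemb := (homeomorphUnitSphereProd E).measurableEmbedding
  have hgint : Integrable g (μ.toSphere.prod (.volumeIoiPow (finrank ℝ E - 1))) := by
    rw [← hpolar.integrable_comp_emb hemb]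
    have hcompl := (integrableOn_iff_comap_subtypeVal (s := ({0}ᶜ : Set E))
      (measurableSet_singleton _).compl).1 hf.restrict
    exact hcompl.congr (.of_forall fun x ↦ (hg x).symm)
  calc
    ∫ y, f y ∂μ = ∫ x : ({0}ᶜ : Set E), f x ∂(μ.comap (↑)) := by
      rw [integral_subtype_comap (measurableSet_singleton _).compl fun x ↦ f x,
        restrict_compl_singleton]
    _ = ∫ p, g p ∂(μ.toSphere.prod (.volumeIoiPow (finrank ℝ E - 1))) := by
      rw [← hpolar.integral_comp hemb]
      simp only [hg]
    _ = ∫ t : Set.Ioi (0 : ℝ), ∫ u : sphere (0 : E) 1, f ((t : ℝ) • (u : E)) ∂μ.toSphere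
          ∂(Measure.volumeIoiPow (finrank ℝ E - 1)) := integral_prod_symm _ hgint
    _ = _ := integral_volumeIoiPow _ fun t ↦ ∫ u : sphere (0 : E) 1, f (t • (u : E)) ∂μ.toSphere

lemma setIntegral_closedBall_eq_integral_sphere [Nontrivial E] {φ : E → ℝ} {a : ℝ} (ha : 0 ≤ a)
    (hφ : IntegrableOn φ (closedBall 0 a) μ) :
    ∫ y in closedBall 0 a, φ y ∂μ = ∫ t in 0..a, t ^ (finrank ℝ E - 1) *
      ∫ u : sphere (0 : E) 1, φ (t • (u : E)) ∂μ.toSphere := by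
  rw [← integral_indicator measurableSet_closedBall, integral_eq_integral_sphere_smul μ
    (hφ.integrable_indicator measurableSet_closedBall), intervalIntegral.integral_of_le ha,
    ← Set.Ioi_inter_Iic, ← setIntegral_indicator measurableSet_Iic]
  refine setIntegral_congr_fun measurableSet_Ioi fun t (ht : 0 < t) ↦ ?_
  have hnorm (u : sphere (0 : E) 1) : ‖t • (u : E)‖ = t := by
    rw [norm_smul, norm_eq_of_mem_sphere, mul_one, Real.norm_of_nonneg ht.le]
  rcases le_or_gt t a with hta | hta
  · simp [Set.indicator_of_mem, hnorm, hta]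
  · simp [Set.indicator_of_notMem, hnorm, hta]

variable {φ : E → ℝ} {C : ℝ}

lemma integrable_sphere_smul (hφ : Measurable φ) (hC : ∀ y, |φ y| ≤ C) (t : ℝ) :
    Integrable (fun u : sphere (0 : E) 1 ↦ φ (t • (u : E))) μ.toSphere :=
  .of_bound (hφ.comp (by fun_prop)).aestronglyMeasurable C (.of_forall fun _ ↦ hC _)

lemma intervalIntegrable_pow_mul_integral_sphere (hφ : Measurable φ) (hC : ∀ y, |φ y| ≤ C)
    (d : ℕ) (a b : ℝ) : IntervalIntegrable
      (fun t ↦ t ^ d * ∫ u : sphere (0 : E) 1, φ (t • (u : E)) ∂μ.toSphere) volume a b := by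
  have hmeas : StronglyMeasurable fun t : ℝ ↦
      ∫ u : sphere (0 : E) 1, φ (t • (u : E)) ∂μ.toSphere :=
    StronglyMeasurable.integral_prod_right'
      (f := fun p : ℝ × sphere (0 : E) 1 ↦ φ (p.1 • (p.2 : E)))
      (hφ.comp (by fun_prop)).stronglyMeasurable
  refine IntervalIntegrable.continuousOn_mul ?_ (by fun_prop)
  rw [intervalIntegrable_iff]
  exact Measure.integrableOn_of_bounded (by simp) hmeas.aestronglyMeasurable
    (.of_forall fun t ↦ norm_integral_le_of_norm_le_const (.of_forall fun u ↦ hC _))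

lemma integral_sphere_smul_add_le (hφ : Measurable φ) (hC : ∀ y, |φ y| ≤ C) {c R : ℝ} {d : ℕ}
    (hdecr : ∀ y, ‖y‖ ≤ R → ∀ t ∈ Set.Icc (0 : ℝ) 1,
      φ y + c * (‖y‖ ^ d - (t * ‖y‖) ^ d) ≤ φ (t • y))
    {s t : ℝ} (hs : 0 ≤ s) (hst : s ≤ t) (ht : t ≤ R) :
    ∫ u : sphere (0 : E) 1, φ (t • (u : E)) ∂μ.toSphere +
        c * μ.toSphere.real Set.univ * (t ^ d - s ^ d) ≤
      ∫ u : sphere (0 : E) 1, φ (s • (u : E)) ∂μ.toSphere := by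
  have hint := integrable_sphere_smul μ hφ hC
  have hadd : ∫ u : sphere (0 : E) 1, (φ (t • (u : E)) + c * (t ^ d - s ^ d)) ∂μ.toSphere =
      ∫ u : sphere (0 : E) 1, φ (t • (u : E)) ∂μ.toSphere +
        c * μ.toSphere.real Set.univ * (t ^ d - s ^ d) := by
    rw [integral_add (hint t) (integrable_const _), integral_const, smul_eq_mul]
    ring
  rw [← hadd]
  refine integral_mono ((hint t).add (integrable_const _)) (hint s) fun u ↦ ?_
  rcases (hs.trans hst).eq_or_lt with rfl | htpos
  · simp [le_antisymm hst hs]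
  have hnorm : ‖t • (u : E)‖ = t := by
    rw [norm_smul, norm_eq_of_mem_sphere, mul_one, Real.norm_of_nonneg htpos.le]
  have hu := hdecr (t • (u : E)) (hnorm.trans_le ht) (s / t)
    ⟨by positivity, (div_le_one htpos).2 hst⟩
  rwa [hnorm, smul_smul, div_mul_cancel₀ _ htpos.ne'] at hu

lemma exists_setIntegral_closedBall_sub_le [Nontrivial E] (hφ : Measurable φ)
    (hC : ∀ y, |φ y| ≤ C) {c R : ℝ}
    (hdecr : ∀ y, ‖y‖ ≤ R → ∀ t ∈ Set.Icc (0 : ℝ) 1,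
      φ y + c * (‖y‖ ^ finrank ℝ E - (t * ‖y‖) ^ finrank ℝ E) ≤ φ (t • y)) :
    ∃ Ψ : ℝ → ℝ, ∀ a ∈ Set.Icc 0 R, ∀ b ∈ Set.Icc 0 R,
      ∫ y in closedBall 0 a, φ y ∂μ - ∫ y in closedBall 0 b, φ y ∂μ ≤
        Ψ b * (a ^ finrank ℝ E - b ^ finrank ℝ E) -
          c * μ.real (ball 0 1) / 2 * (a ^ finrank ℝ E - b ^ finrank ℝ E) ^ 2 := by
  have hdim : finrank ℝ E ≠ 0 := finrank_pos.ne'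
  refine ⟨fun b ↦ (∫ u : sphere (0 : E) 1, φ (b • (u : E)) ∂μ.toSphere) / finrank ℝ E,
    fun a ha b hb ↦ ?_⟩
  have hφint (a : ℝ) : IntegrableOn φ (closedBall 0 a) μ :=
    Measure.integrableOn_of_bounded measure_closedBall_lt_top.ne hφ.aestronglyMeasurable
      (.of_forall hC)
  rw [setIntegral_closedBall_eq_integral_sphere μ ha.1 (hφint a),
    setIntegral_closedBall_eq_integral_sphere μ hb.1 (hφint b)]
  refine (integral_pow_pred_mul_sub_le hdim
    (intervalIntegrable_pow_mul_integral_sphere μ hφ hC (finrank ℝ E - 1))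
    (fun s t hs hst ht ↦ integral_sphere_smul_add_le μ hφ hC hdecr hs hst ht) ha hb).trans_eq ?_
  rw [Measure.toSphere_real_apply_univ]
  field_simp

lemma exists_isQuadraticSupergradient_setIntegral_closedBall [Nontrivial E] (hφ : Measurable φ)
    (hC : ∀ y, |φ y| ≤ C) {c κ : ℝ} {ρ : ℝ → ℝ} {s : Set ℝ} {R : ℝ}
    (hdecr : ∀ y, ‖y‖ ≤ R → ∀ t ∈ Set.Icc (0 : ℝ) 1,
      φ y + c * (‖y‖ ^ finrank ℝ E - (t * ‖y‖) ^ finrank ℝ E) ≤ φ (t • y))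
    (hρ : ∀ v ∈ s, ρ v ∈ Set.Icc 0 R) (hpow : ∀ v ∈ s, ρ v ^ finrank ℝ E = κ * v) :
    ∃ ψ, IsQuadraticSupergradient (fun v ↦ ∫ y in closedBall 0 (ρ v), φ y ∂μ) ψ
      (c * μ.real (ball 0 1) / 2 * κ ^ 2) s := by
  obtain ⟨Ψ, hΨ⟩ := exists_setIntegral_closedBall_sub_le μ hφ hC hdecr
  refine ⟨fun v ↦ Ψ (ρ v) * κ, fun u hu v hv ↦ (hΨ _ (hρ u hu) _ (hρ v hv)).trans_eq ?_⟩
  rw [hpow u hu, hpow v hv]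
  ring

end Polar

section Nearest

variable {ι : Type*} [LinearOrder ι] {F : ι → Prop} {d d' : ι → ℝ} {j j' l : ι}

/-- Among the candidates selected by `F`, the index `j` minimizes the distance `d`, ties being
broken by the order of the indices. The tie-breaking makes the nearest candidate unique. -/
def IsNearest (F : ι → Prop) (d : ι → ℝ) (j : ι) : Prop :=
  F j ∧ ∀ l, F l → toLex (d j, j) ≤ toLex (d l, l)

lemma IsNearest.le (h : IsNearest F d j) (hl : F l) : d j ≤ d l := by
  rcases Prod.Lex.toLex_le_toLex.1 (h.2 l hl) with hlt | heq
  exacts [hlt.le, heq.1.le]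

lemma IsNearest.eq (h : IsNearest F d j) (h' : IsNearest F d j') : j = j' :=
  congrArg Prod.snd (toLex_inj.1 (le_antisymm (h.2 j' h'.1) (h'.2 j h.1)))

lemma isNearest_of_forall_lt (hj : F j) (h : ∀ l ≠ j, d j < d l) : IsNearest F d j := by
  refine ⟨hj, fun l _ ↦ Prod.Lex.toLex_le_toLex.2 ?_⟩
  rcases eq_or_ne l j with rfl | hlj
  exacts [.inr ⟨rfl, le_rfl⟩, .inl (h l hlj)]

lemma IsNearest.of_add_le_add (h : IsNearest F d j) (hd : ∀ l, d' j + d l ≤ d' l + d j) :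
    IsNearest F d' j := by
  refine ⟨h.1, fun l hl ↦ Prod.Lex.toLex_le_toLex.2 ?_⟩
  rcases Prod.Lex.toLex_le_toLex.1 (h.2 l hl) with hlt | ⟨heq, hle⟩
  · exact .inl (by linarith [hd l])
  · have hd'l : d' j ≤ d' l := by linarith [hd l]
    exact hd'l.lt_or_eq.imp_right (⟨·, hle⟩)

lemma exists_isNearest_and_le_iff [Finite ι] {ρ : ℝ} :
    (∃ j, IsNearest F d j ∧ d j ≤ ρ) ↔ ∃ j, F j ∧ d j ≤ ρ := by
  refine ⟨fun ⟨j, hj, hjρ⟩ ↦ ⟨j, hj.1, hjρ⟩, fun ⟨l, hl, hlρ⟩ ↦ ?_⟩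
  obtain ⟨j, hj, hmin⟩ :=
    Set.exists_min_image {j | F j} (fun j ↦ toLex (d j, j)) (Set.toFinite _) ⟨l, hl⟩
  have hnear : IsNearest F d j := ⟨hj, hmin⟩
  exact ⟨j, hnear, (hnear.le hl).trans hlρ⟩

lemma measurableSet_isNearest [Countable ι] {X : Type*} [MeasurableSpace X] {F : X → ι → Prop}
    {d : X → ι → ℝ} (hF : ∀ l, MeasurableSet {x | F x l}) (hd : ∀ l, Measurable fun x ↦ d x l)
    (j : ι) : MeasurableSet {x | IsNearest (F x) (d x) j} := by
  simp only [IsNearest, Prod.Lex.toLex_le_toLex, Set.ofPred_and, Set.ofPred_forall]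
  exact (hF j).inter <| .iInter fun l ↦ (hF l).imp <| .union (measurableSet_lt (hd j) (hd l)) <|
    .inter (measurableSet_eq_fun (hd j) (hd l)) (.const _)

end Nearest

section Capture

open Metric

variable {ι Ω E : Type*} [LinearOrder ι] [NormedAddCommGroup E]

/-- The event that a supply placed at displacement `y` from the demand `D ω j` lands in the region
`Q` and has `j` as its nearest demand among those selected by `F ω`. -/
def captureEvent (F : Ω → ι → Prop) (D : Ω → ι → E) (Q : Set E) (j : ι) (y : E) : Set Ω :=
  {ω | D ω j + y ∈ Q ∧ IsNearest (F ω) (fun l ↦ dist (D ω j + y) (D ω l)) j}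

/-- The density, at the displacement `y`, of the displacement from the nearest demand selected by
`F` to a supply uniformly distributed in the region `Q`. -/
def captureDensity [Fintype ι] [MeasurableSpace Ω] (P : Measure Ω) (F : Ω → ι → Prop)
    (D : Ω → ι → E) (Q : Set E) (y : E) : ℝ :=
  ∑ j, P.real (captureEvent F D Q j y)

section Monotone

variable [NormedSpace ℝ E] {F : Ω → ι → Prop} {D : Ω → ι → E} {Q : Set E} {j j' : ι} {y : E}
  {t : ℝ} {ω : Ω}

-- Moving from `y` to `t • y` shortens the distance to `D ω j` by exactly the length of the move,
-- and to every other demand by at most that length.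
lemma mem_captureEvent_smul (hQ : Convex ℝ Q) (ht : t ∈ Set.Icc (0 : ℝ) 1) (hω : D ω j ∈ Q)
    (h : ω ∈ captureEvent F D Q j y) : ω ∈ captureEvent F D Q j (t • y) := by
  refine ⟨hQ.add_smul_mem hω h.1 ht, h.2.of_add_le_add fun l ↦ ?_⟩
  have hmove : dist (D ω j + y) (D ω j + t • y) = ‖y‖ - t * ‖y‖ := by
    rw [dist_add_left, dist_eq_norm, show y - t • y = (1 - t) • y by rw [sub_smul, one_smul],
      norm_smul, Real.norm_of_nonneg (sub_nonneg.2 ht.2), one_sub_mul]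
  have htri := dist_triangle (D ω j + y) (D ω j + t • y) (D ω l)
  rw [dist_self_add_left, dist_self_add_left, norm_smul, Real.norm_of_nonneg ht.1]
  linarith

end Monotone

section Density

variable [MeasurableSpace Ω] {F : Ω → ι → Prop} {D : Ω → ι → E} {Q : Set E}

lemma abs_captureDensity_le [Fintype ι] (P : Measure Ω) [IsProbabilityMeasure P] (y : E) :
    |captureDensity P F D Q y| ≤ Fintype.card ι := by
  rw [captureDensity, abs_of_nonneg (Finset.sum_nonneg fun j _ ↦ measureReal_nonneg)]
  calc ∑ j, P.real (captureEvent F D Q j y) ≤ ∑ _j : ι, (1 : ℝ) :=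
        Finset.sum_le_sum fun j _ ↦ measureReal_le_one
    _ = Fintype.card ι := by simp

variable [MeasurableSpace E] [BorelSpace E] [SecondCountableTopology E]
  (hF : ∀ l, MeasurableSet {ω | F ω l}) (hD : ∀ l, Measurable fun ω ↦ D ω l)

include hF hD

lemma measurableSet_isNearest_and_dist_le [Countable ι] (j : ι) (ρ : ℝ) :
    MeasurableSet {p : Ω × E |
      IsNearest (F p.1) (fun l ↦ dist p.2 (D p.1 l)) j ∧ dist p.2 (D p.1 j) ≤ ρ} := by
  have hdist (l : ι) : Measurable fun p : Ω × E ↦ dist p.2 (D p.1 l) :=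
    measurable_snd.dist ((hD l).comp measurable_fst)
  exact (measurableSet_isNearest (fun l ↦ measurable_fst (hF l)) hdist j).inter
    (measurableSet_le (hdist j) measurable_const)

variable (hQ : MeasurableSet Q)

include hQ

lemma measurableSet_captureEvent_prod [Countable ι] (j : ι) :
    MeasurableSet {p : Ω × E | p.1 ∈ captureEvent F D Q j p.2} := by
  have hmove : Measurable fun p : Ω × E ↦ D p.1 j + p.2 :=
    ((hD j).comp measurable_fst).add measurable_snd
  exact (hmove hQ).inter <| measurableSet_isNearest (fun l ↦ measurable_fst (hF l))
    (fun l ↦ hmove.dist ((hD l).comp measurable_fst)) j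

lemma measurable_measure_captureEvent [Countable ι] (P : Measure Ω) [SFinite P] (j : ι) :
    Measurable fun y ↦ P (captureEvent F D Q j y) :=
  measurable_measure_prodMk_right (measurableSet_captureEvent_prod hF hD hQ j)

lemma measurable_captureDensity [Fintype ι] (P : Measure Ω) [SFinite P] :
    Measurable (captureDensity P F D Q) :=
  Finset.measurable_fun_sum _ fun j _ ↦
    (measurable_measure_captureEvent hF hD hQ P j).ennreal_toReal

variable (ν : Measure E) [ν.IsAddLeftInvariant] [SFinite ν]

lemma prod_isNearest_and_dist_le_eq_lintegral [Countable ι] (P : Measure Ω) [SFinite P] (j : ι)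
    (ρ : ℝ) :
    (P.prod (ν.restrict Q)) {p | IsNearest (F p.1) (fun l ↦ dist p.2 (D p.1 l)) j ∧
      dist p.2 (D p.1 j) ≤ ρ} = ∫⁻ y in closedBall 0 ρ, P (captureEvent F D Q j y) ∂ν := by
  have hhit := measurableSet_isNearest_and_dist_le hF hD j ρ
  have hcapture := measurableSet_captureEvent_prod hF hD hQ j
  have hslice (ω : Ω) : ν.restrict Q (Prod.mk ω ⁻¹' {p | IsNearest (F p.1)
      (fun l ↦ dist p.2 (D p.1 l)) j ∧ dist p.2 (D p.1 j) ≤ ρ}) =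
        ν.restrict (closedBall 0 ρ) (Prod.mk ω ⁻¹' {p | p.1 ∈ captureEvent F D Q j p.2}) := by
    rw [Measure.restrict_apply (measurable_prodMk_left hhit),
      Measure.restrict_apply (measurable_prodMk_left hcapture), ← measure_preimage_add ν (D ω j)]
    congr 1
    ext y
    simp only [Set.mem_preimage, Set.mem_inter_iff, Set.mem_ofPred_eq, captureEvent,
      mem_closedBall_zero_iff, dist_self_add_left]
    tauto
  rw [Measure.prod_apply hhit]
  simp only [hslice]
  rw [← Measure.prod_apply hcapture, Measure.prod_apply_symm hcapture]
  rfl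

theorem prod_exists_dist_le_eq_integral_captureDensity [Fintype ι] [ProperSpace E]
    [IsFiniteMeasureOnCompacts ν] [IsFiniteMeasure (ν.restrict Q)] (P : Measure Ω)
    [IsProbabilityMeasure P] (ρ : ℝ) :
    (P.prod (ν.restrict Q)).real {p | ∃ j, F p.1 j ∧ dist p.2 (D p.1 j) ≤ ρ} =
      ∫ y in closedBall 0 ρ, captureDensity P F D Q y ∂ν := by
  have hsplit : {p : Ω × E | ∃ j, F p.1 j ∧ dist p.2 (D p.1 j) ≤ ρ} =
      ⋃ j ∈ Finset.univ, {p | IsNearest (F p.1) (fun l ↦ dist p.2 (D p.1 l)) j ∧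
        dist p.2 (D p.1 j) ≤ ρ} := by
    ext p
    simp [exists_isNearest_and_le_iff]
  have hmeas (j : ι) := measurable_measure_captureEvent hF hD hQ P j
  have hint (j : ι) : IntegrableOn (fun y ↦ P.real (captureEvent F D Q j y)) (closedBall 0 ρ) ν :=
    Measure.integrableOn_of_bounded (M := 1) measure_closedBall_lt_top.ne
      (hmeas j).ennreal_toReal.aestronglyMeasurable (ae_of_all _ fun y ↦ by
        simp [Real.norm_of_nonneg measureReal_nonneg])
  rw [hsplit, measureReal_biUnion_finset]
  · simp only [captureDensity]
    rw [integral_finsetSum _ fun j _ ↦ hint j]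
    refine Finset.sum_congr rfl fun j _ ↦ ?_
    rw [measureReal_def, prod_isNearest_and_dist_le_eq_lintegral hF hD hQ]
    exact (integral_toReal (hmeas j).aemeasurable (ae_of_all _ fun y ↦ measure_lt_top _ _)).symm
  · exact fun j _ j' _ hne ↦ Set.disjoint_left.2 fun p h h' ↦ hne (h.1.eq h'.1)
  · exact fun j _ ↦ measurableSet_isNearest_and_dist_le hF hD j ρ

end Density

end Capture

section Product

variable {ι : Type*} [Fintype ι]

lemma measurePreserving_update [DecidableEq ι] {X : ι → Type*} [∀ i, MeasurableSpace (X i)]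
    (μ : ∀ i, Measure (X i)) [∀ i, IsProbabilityMeasure (μ i)] (i : ι) :
    MeasurePreserving (fun p : (∀ i, X i) × X i ↦ Function.update p.1 i p.2)
      ((Measure.pi μ).prod (μ i)) (Measure.pi μ) := by
  refine ⟨measurable_update', (Measure.pi_eq fun s hs ↦ ?_).symm⟩
  have hpre : (fun p : (∀ i, X i) × X i ↦ Function.update p.1 i p.2) ⁻¹' Set.univ.pi s =
      Set.univ.pi (Function.update s i Set.univ) ×ˢ s i := by
    ext ⟨x, a⟩
    simp only [Set.mem_preimage, Set.update_mem_pi_iff, Set.mem_prod, Set.mem_univ_pi]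
    refine and_congr (forall_congr' fun l ↦ ?_) (by simp)
    rcases eq_or_ne l i with rfl | hl <;> simp [*]
  rw [Measure.map_apply measurable_update' (.univ_pi hs), hpre, Measure.prod_prod, Measure.pi_pi]
  simp only [Function.apply_update (fun j ↦ μ j), measure_univ]
  rw [Finset.prod_update_of_mem (Finset.mem_univ i), one_mul, Finset.sdiff_singleton_eq_erase,
    Finset.prod_erase_mul _ _ (Finset.mem_univ i)]

lemma mul_measure_le_prod_apply {X Y : Type*} [MeasurableSpace X] [MeasurableSpace Y]
    (μ : Measure X) [SFinite μ] (ν : Measure Y) [SFinite ν] {U : Set (X × Y)}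
    (hU : MeasurableSet U) {T : Set Y} (hT : MeasurableSet T) {c : ENNReal}
    (h : ∀ y ∈ T, c ≤ μ ((fun x ↦ (x, y)) ⁻¹' U)) : c * ν T ≤ μ.prod ν U := by
  rw [Measure.prod_apply_symm hU, ← lintegral_indicator_const hT]
  exact lintegral_mono fun y ↦ Set.indicator_apply_le' (h y) fun _ ↦ zero_le

variable {X : Type*} [MeasurableSpace X] (μ : Measure X)

lemma measurePreserving_comp_perm [SigmaFinite μ] (π : Equiv.Perm ι) :
    MeasurePreserving (fun f : ι → X ↦ f ∘ π) (Measure.pi fun _ ↦ μ) (Measure.pi fun _ ↦ μ) :=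
  measurePreserving_arrowCongr' (fun _ ↦ μ) (fun _ ↦ μ) π.symm (.refl X) fun _ ↦ .id μ

lemma prod_mul_measure_le_pi [IsProbabilityMeasure μ] [DecidableEq ι] (j : ι) {K : Set X}
    (hK : MeasurableSet K) {A : ι → X → Set X}
    (hA : MeasurableSet {x : ι → X | x j ∈ K ∧ ∀ l ≠ j, x l ∈ A l (x j)})
    {a : ι → ENNReal} (ha : ∀ x ∈ K, ∀ l ≠ j, a l ≤ μ (A l x)) :
    (∏ l ∈ Finset.univ.erase j, a l) * μ K ≤
      Measure.pi (fun _ ↦ μ) {x : ι → X | x j ∈ K ∧ ∀ l ≠ j, x l ∈ A l (x j)} := by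
  have hupdate := measurePreserving_update (fun _ : ι ↦ μ) j
  rw [← hupdate.measure_preimage hA.nullMeasurableSet]
  refine mul_measure_le_prod_apply _ _ (hupdate.measurable hA) hK fun x hx ↦ ?_
  calc ∏ l ∈ Finset.univ.erase j, a l ≤ ∏ l ∈ Finset.univ.erase j, μ (A l x) :=
        Finset.prod_le_prod' fun l hl ↦ ha x hx l (Finset.ne_of_mem_erase hl)
    _ = Measure.pi (fun _ ↦ μ) (Set.univ.pi (Function.update (A · x) j Set.univ)) := by
        rw [Measure.pi_pi]
        simp only [Function.apply_update (fun _ ↦ μ), measure_univ]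
        rw [Finset.prod_update_of_mem (Finset.mem_univ j), one_mul, Finset.sdiff_singleton_eq_erase]
    _ ≤ _ := by
        refine measure_mono fun z hz ↦ ?_
        simp only [Set.mem_preimage, Set.mem_ofPred_eq, Function.update_self]
        refine ⟨hx, fun l hl ↦ ?_⟩
        simpa [hl] using hz l

end Product

section Crescent

open Metric Module

variable {E : Type*} [NormedAddCommGroup E] [NormedSpace ℝ E] {y z : E} {t R : ℝ}

/-- Relative to a demand at the origin, the locations of a second demand that is strictly
nearer than the origin to a supply at `y`, but strictly farther than the origin from a supply at
`t • y`. -/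
def crescent (y : E) (t : ℝ) : Set E :=
  ball y ‖y‖ \ closedBall (t • y) (t * ‖y‖)

lemma norm_lt_of_mem_crescent (h : z ∈ crescent y t) : ‖z‖ < 2 * ‖y‖ := by
  have hball := mem_ball_iff_norm.1 h.1
  linarith [norm_le_norm_sub_add z y]

section Nearest

variable {ι : Type*} [LinearOrder ι] {D : ι → E} {F : ι → Prop} {j j' : ι}

lemma isNearest_smul_of_mem_crescent (hR : 3 * ‖y‖ ≤ R) (ht : t ∈ Set.Icc (0 : ℝ) 1)
    (hFj : F j) (hj' : D j' - D j ∈ crescent y t)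
    (hfar : ∀ l ≠ j, l ≠ j' → R < ‖D l - D j‖) :
    IsNearest F (fun l ↦ dist (D j + t • y) (D l)) j := by
  refine isNearest_of_forall_lt hFj fun l hl ↦ ?_
  have hdist : dist (D j + t • y) (D l) = ‖D l - D j - t • y‖ := by
    rw [dist_comm, dist_eq_norm, sub_sub]
  rw [dist_self_add_left, norm_smul, Real.norm_of_nonneg ht.1, hdist]
  by_cases hlj' : l = j'
  · rw [hlj', ← not_le, ← mem_closedBall_iff_norm]
    exact hj'.2
  · have hty : ‖t • y‖ = t * ‖y‖ := by rw [norm_smul, Real.norm_of_nonneg ht.1]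
    have hty1 : t * ‖y‖ ≤ ‖y‖ := mul_le_of_le_one_left (norm_nonneg _) ht.2
    linarith [norm_sub_norm_le (D l - D j) (t • y), hfar l hl hlj', norm_nonneg y]

lemma not_isNearest_of_mem_crescent (hFj' : F j') (hj' : D j' - D j ∈ crescent y t) :
    ¬ IsNearest F (fun l ↦ dist (D j + y) (D l)) j := by
  intro hnear
  have hle := hnear.le hFj'
  have hlt := mem_ball_iff_norm.1 hj'.1
  rw [dist_self_add_left, dist_comm, dist_eq_norm, ← sub_sub] at hle
  exact hlt.not_ge hle

end Nearest

variable [MeasurableSpace E] [BorelSpace E]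

lemma measurableSet_crescent (y : E) (t : ℝ) : MeasurableSet (crescent y t) :=
  measurableSet_ball.diff measurableSet_closedBall

lemma le_measureReal_crescent [FiniteDimensional ℝ E] [Nontrivial E] (ν : Measure E)
    [ν.IsAddHaarMeasure] (y : E) (ht : 0 ≤ t) :
    ν.real (ball 0 1) * (‖y‖ ^ finrank ℝ E - (t * ‖y‖) ^ finrank ℝ E) ≤
      ν.real (crescent y t) := by
  have hdiff := le_measureReal_sdiff (μ := ν) (s₁ := ball y ‖y‖)
    (s₂ := closedBall (t • y) (t * ‖y‖)) (h := measure_closedBall_lt_top.ne)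
  rw [← Measure.addHaar_real_closedBall_eq_addHaar_real_ball,
    Measure.addHaar_real_closedBall _ _ (norm_nonneg y),
    Measure.addHaar_real_closedBall _ _ (by positivity)] at hdiff
  rw [crescent]
  linarith

end Crescent

section Placement

open Metric Module

/-- The law of independent supply locations, indexed by `κ`, and demand locations, indexed by `ι`,
all with distribution `γ`. -/
def placementLaw (κ ι : Type*) [Fintype κ] [Fintype ι] {E : Type*} [MeasurableSpace E]
    (γ : Measure E) : Measure ((κ → E) × (ι → E)) :=
  (Measure.pi fun _ ↦ γ).prod (Measure.pi fun _ ↦ γ)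

instance {κ ι : Type*} [Fintype κ] [Fintype ι] {E : Type*} [MeasurableSpace E] (γ : Measure E)
    [IsProbabilityMeasure γ] : IsProbabilityMeasure (placementLaw κ ι γ) := by
  unfold placementLaw
  infer_instance

lemma placementLaw_ae_snd_mem {κ ι E : Type*} [Fintype κ] [Fintype ι] [MeasurableSpace E]
    {Q : Set E} (ν : Measure E) [IsProbabilityMeasure (ν.restrict Q)] (hQ : MeasurableSet Q)
    (j : ι) : ∀ᵐ ω ∂placementLaw κ ι (ν.restrict Q), ω.2 j ∈ Q := by
  have hsnd : MeasurePreserving Prod.snd (placementLaw κ ι (ν.restrict Q)) _ :=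
    measurePreserving_snd
  exact ((measurePreserving_eval _ j).comp hsnd).quasiMeasurePreserving.ae (ae_restrict_mem hQ)

variable {κ ι E : Type*} [NormedAddCommGroup E] [NormedSpace ℝ E] {K Q : Set E} {y : E}
  {t R : ℝ} {j j' j'' : ι} {p : ENNReal}

/-- The demand configurations in which demand `j` lies in `K`, demand `j'` lies in the crescent
around it, and all other demands are farther than `3 * R` from it. -/
def crescentDemands (K : Set E) (R : ℝ) (y : E) (t : ℝ) (j j' : ι) : Set (ι → E) :=
  {D | D j ∈ K ∧ ∀ l ≠ j, D l - D j ∈ if l = j' then crescent y t else (closedBall 0 (3 * R))ᶜ}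

/-- The event that the demands are in a crescent configuration and all supplies are farther than
`3 * R` from demand `j`. It forces `j` to be captured from the displacement `t • y` but not
from `y`. -/
def crescentEvent (κ : Type*) (K : Set E) (R : ℝ) (y : E) (t : ℝ) (j j' : ι) :
    Set ((κ → E) × (ι → E)) :=
  {ω | ω.2 ∈ crescentDemands K R y t j j' ∧ ∀ i, ω.1 i ∈ (closedBall (ω.2 j) (3 * R))ᶜ}

lemma disjoint_crescentEvent (hy : ‖y‖ ≤ R) (hj' : j' ≠ j) (hne : j' ≠ j'') :
    Disjoint (crescentEvent κ K R y t j j') (crescentEvent κ K R y t j j'') := by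
  refine Set.disjoint_left.2 fun ω h h' ↦ ?_
  have hnear := h.1.2 j' hj'
  have hfar := h'.1.2 j' hj'
  simp only [if_pos, if_neg hne, Set.mem_compl_iff,
    mem_closedBall_zero_iff, not_le] at hnear hfar
  linarith [norm_lt_of_mem_crescent hnear, norm_nonneg y]

section Capture

variable [LinearOrder ι] {F : (κ → E) × (ι → E) → ι → Prop}

lemma crescentEvent_subset_captureEvent_sdiff
    (hF : ∀ ω l, (∀ i, R < dist (ω.1 i) (ω.2 l)) → F ω l)
    (hK : ∀ x ∈ K, ∀ z, ‖z‖ ≤ 2 * R → x + z ∈ Q) (hy : ‖y‖ ≤ R) (ht : t ∈ Set.Icc (0 : ℝ) 1)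
    (hne : j' ≠ j) :
    crescentEvent κ K R y t j j' ⊆
      captureEvent F Prod.snd Q j (t • y) \ captureEvent F Prod.snd Q j y := by
  rintro ω ⟨⟨hjK, hdemand⟩, hsupply⟩
  have hR : 0 ≤ R := (norm_nonneg y).trans hy
  have hj' : ω.2 j' - ω.2 j ∈ crescent y t := by simpa using hdemand j' hne
  have hfar (i : κ) : 3 * R < dist (ω.1 i) (ω.2 j) := by simpa using hsupply i
  have hFj : F ω j := hF ω j fun i ↦ by linarith [hfar i]
  have hFj' : F ω j' := hF ω j' fun i ↦ by
    have htri := dist_triangle (ω.1 i) (ω.2 j') (ω.2 j)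
    rw [dist_eq_norm (ω.2 j')] at htri
    linarith [norm_lt_of_mem_crescent hj', hfar i]
  have hty : ‖t • y‖ ≤ 2 * R := by
    rw [norm_smul, Real.norm_of_nonneg ht.1]
    linarith [mul_le_of_le_one_left (norm_nonneg y) ht.2]
  refine ⟨⟨hK _ hjK _ hty, ?_⟩, fun h ↦ not_isNearest_of_mem_crescent hFj' hj' h.2⟩
  refine isNearest_smul_of_mem_crescent (R := 3 * R) (by linarith) ht hFj hj' fun l hl hlj' ↦ ?_
  simpa [hlj'] using hdemand l hl

end Capture

variable [MeasurableSpace E] [BorelSpace E]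

lemma measurableSet_crescent_or_far (R : ℝ) (y : E) (t : ℝ) (j l : ι) :
    MeasurableSet (if l = j then crescent y t else (closedBall 0 (3 * R))ᶜ) := by
  split_ifs
  exacts [measurableSet_crescent y t, measurableSet_closedBall.compl]

section Measurability

variable [SecondCountableTopology E] [Countable ι] (hK : MeasurableSet K) (R : ℝ) (y : E) (t : ℝ)
  (j j' : ι)

include hK

lemma measurableSet_crescentDemands : MeasurableSet (crescentDemands K R y t j j') := by
  simp only [crescentDemands, Set.ofPred_and, Set.ofPred_forall]
  refine (measurable_pi_apply j hK).inter <| .iInter fun l ↦ .iInter fun _ ↦ ?_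
  exact ((measurable_pi_apply l).sub (measurable_pi_apply j))
    (measurableSet_crescent_or_far R y t j' l)

lemma measurableSet_crescentEvent [Countable κ] :
    MeasurableSet (crescentEvent κ K R y t j j') := by
  simp only [crescentEvent, Set.ofPred_and, Set.ofPred_forall]
  refine (measurable_snd (measurableSet_crescentDemands hK R y t j j')).inter <|
    .iInter fun i ↦ .compl <| measurableSet_le ?_ measurable_const
  exact ((measurable_pi_apply i).comp measurable_fst).dist
    ((measurable_pi_apply j).comp measurable_snd)

end Measurability

section Probability

variable {ν : Measure E} [ν.IsAddLeftInvariant]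

lemma measure_crescent_le_restrict (hK : ∀ x ∈ K, ∀ z, ‖z‖ ≤ 2 * R → x + z ∈ Q) (hy : ‖y‖ ≤ R)
    {x : E} (hx : x ∈ K) : ν (crescent y t) ≤ ν.restrict Q ((· - x) ⁻¹' crescent y t) := by
  rw [Measure.restrict_apply (measurable_sub_const x (measurableSet_crescent y t)),
    ← measure_preimage_add ν x ((· - x) ⁻¹' crescent y t ∩ Q)]
  refine measure_mono fun z hz ↦ ⟨by simpa using hz, hK x hx z ?_⟩
  linarith [norm_lt_of_mem_crescent hz]

variable [SecondCountableTopology E] [Fintype κ] [Fintype ι] [IsProbabilityMeasure (ν.restrict Q)]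

lemma le_pi_crescentDemands (hKm : MeasurableSet K)
    (hK : ∀ x ∈ K, ∀ z, ‖z‖ ≤ 2 * R → x + z ∈ Q)
    (hp : ∀ x : E, p ≤ ν.restrict Q (closedBall x (3 * R))ᶜ) (hy : ‖y‖ ≤ R) (hne : j' ≠ j) :
    ν (crescent y t) * p ^ Fintype.card ι * ν.restrict Q K ≤
      Measure.pi (fun _ : ι ↦ ν.restrict Q) (crescentDemands K R y t j j') := by
  have hp1 : p ≤ 1 := (hp 0).trans prob_le_one
  refine le_trans ?_ (prod_mul_measure_le_pi (ν.restrict Q) j hKm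
    (A := fun l x ↦ (· - x) ⁻¹' if l = j' then crescent y t else (closedBall 0 (3 * R))ᶜ)
    (a := Function.update (fun _ ↦ p) j' (ν (crescent y t)))
    (measurableSet_crescentDemands hKm R y t j j') fun x hx l _ ↦ ?_)
  · rw [Finset.prod_update_of_mem (by simp [hne]), Finset.prod_const]
    have hpow := pow_le_pow_right_of_le_one' hp1
      (Finset.card_le_univ (Finset.univ.erase j \ {j'}))
    gcongr
  · rcases eq_or_ne l j' with rfl | hl
    · simpa using measure_crescent_le_restrict hK hy hx
    · simp only [Function.update_of_ne hl, if_neg hl]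
      refine (hp x).trans (measure_mono fun z hz ↦ ?_)
      simpa [dist_eq_norm] using hz

lemma le_placementLaw_crescentEvent (hKm : MeasurableSet K)
    (hK : ∀ x ∈ K, ∀ z, ‖z‖ ≤ 2 * R → x + z ∈ Q)
    (hp : ∀ x : E, p ≤ ν.restrict Q (closedBall x (3 * R))ᶜ) (hy : ‖y‖ ≤ R) (hne : j' ≠ j) :
    p ^ Fintype.card κ * (ν (crescent y t) * p ^ Fintype.card ι * ν.restrict Q K) ≤
      placementLaw κ ι (ν.restrict Q) (crescentEvent κ K R y t j j') := by
  refine (mul_le_mul_right (le_pi_crescentDemands hKm hK hp hy hne) _).trans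
    (mul_measure_le_prod_apply _ _ (measurableSet_crescentEvent hKm R y t j j')
      (measurableSet_crescentDemands hKm R y t j j') fun D hD ↦ ?_)
  calc p ^ Fintype.card κ = ∏ _i : κ, p := by simp
    _ ≤ ∏ _i : κ, ν.restrict Q (closedBall (D j) (3 * R))ᶜ :=
        Finset.prod_le_prod' fun i _ ↦ hp (D j)
    _ = Measure.pi (fun _ ↦ ν.restrict Q) (Set.univ.pi fun _ : κ ↦ (closedBall (D j) (3 * R))ᶜ) :=
        (Measure.pi_pi _ _).symm
    _ ≤ Measure.pi (fun _ ↦ ν.restrict Q) ((fun S ↦ (S, D)) ⁻¹' crescentEvent κ K R y t j j') :=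
        measure_mono fun S hS ↦ ⟨hD, fun i ↦ hS i (Set.mem_univ i)⟩

lemma le_measureReal_placementLaw_crescentEvent (hKm : MeasurableSet K)
    (hK : ∀ x ∈ K, ∀ z, ‖z‖ ≤ 2 * R → x + z ∈ Q) {p : ℝ} (hp0 : 0 ≤ p)
    (hp : ∀ x : E, p ≤ (ν.restrict Q).real (closedBall x (3 * R))ᶜ) (hy : ‖y‖ ≤ R)
    (hne : j' ≠ j) :
    p ^ Fintype.card κ * (ν.real (crescent y t) * p ^ Fintype.card ι * (ν.restrict Q).real K) ≤
      (placementLaw κ ι (ν.restrict Q)).real (crescentEvent κ K R y t j j') := by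
  have hp' (x : E) : ENNReal.ofReal p ≤ ν.restrict Q (closedBall x (3 * R))ᶜ :=
    (ENNReal.ofReal_le_iff_le_toReal (measure_ne_top _ _)).2 (hp x)
  have hle := ENNReal.toReal_mono (measure_ne_top _ _)
    (le_placementLaw_crescentEvent (κ := κ) (t := t) hKm hK hp' hy hne)
  simpa only [measureReal_def, ENNReal.toReal_mul, ENNReal.toReal_pow,
    ENNReal.toReal_ofReal hp0] using hle

end Probability

section Increment

variable [LinearOrder ι] [Fintype κ] [Fintype ι] {F : (κ → E) × (ι → E) → ι → Prop}
  (hF : ∀ ω l, (∀ i, R < dist (ω.1 i) (ω.2 l)) → F ω l)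
  (hQ : Convex ℝ Q) (hQm : MeasurableSet Q) (hKm : MeasurableSet K)
  (hK : ∀ x ∈ K, ∀ z, ‖z‖ ≤ 2 * R → x + z ∈ Q) (hy : ‖y‖ ≤ R) (ht : t ∈ Set.Icc (0 : ℝ) 1)

include hF hQ hQm hKm hK hy ht

lemma measureReal_captureEvent_add_sum_le [SecondCountableTopology E] (ν : Measure E)
    [IsProbabilityMeasure (ν.restrict Q)] (j : ι) :
    (placementLaw κ ι (ν.restrict Q)).real (captureEvent F Prod.snd Q j y) +
        ∑ j' ∈ Finset.univ.erase j,
          (placementLaw κ ι (ν.restrict Q)).real (crescentEvent κ K R y t j j') ≤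
      (placementLaw κ ι (ν.restrict Q)).real (captureEvent F Prod.snd Q j (t • y)) := by
  have hsub {j' : ι} (hj' : j' ∈ Finset.univ.erase j) :=
    crescentEvent_subset_captureEvent_sdiff (κ := κ) hF hK hy ht (Finset.ne_of_mem_erase hj')
  have hmeas (j' : ι) := measurableSet_crescentEvent (κ := κ) hKm R y t j j'
  have hdisj : Disjoint (captureEvent F Prod.snd Q j y)
      (⋃ j' ∈ Finset.univ.erase j, crescentEvent κ K R y t j j') :=
    Set.disjoint_iUnion₂_right.2 fun j' hj' ↦
      Set.disjoint_left.2 fun ω hω hω' ↦ (hsub hj' hω').2 hω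
  rw [← measureReal_biUnion_finset (fun j' hj' j'' _ hne ↦
      disjoint_crescentEvent hy (Finset.ne_of_mem_erase hj') hne) fun j' _ ↦ hmeas j',
    ← measureReal_union hdisj (Finset.measurableSet_biUnion _ fun j' _ ↦ hmeas j')
      (measure_ne_top _ _) (measure_ne_top _ _)]
  refine ENNReal.toReal_mono (measure_ne_top _ _) (measure_mono_ae ?_)
  filter_upwards [placementLaw_ae_snd_mem (κ := κ) ν hQm j] with ω hω h
  rcases h with h | h
  · exact mem_captureEvent_smul hQ ht hω h
  · obtain ⟨j', hj', h⟩ := Set.mem_iUnion₂.1 h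
    exact (hsub hj' h).1

theorem captureDensity_add_le_captureDensity_smul [FiniteDimensional ℝ E] [Nontrivial E]
    (ν : Measure E) [ν.IsAddHaarMeasure] [IsProbabilityMeasure (ν.restrict Q)] {p : ℝ}
    (hp0 : 0 ≤ p) (hp : ∀ x : E, p ≤ (ν.restrict Q).real (closedBall x (3 * R))ᶜ) :
    captureDensity (placementLaw κ ι (ν.restrict Q)) F Prod.snd Q y +
        Fintype.card ι * (Fintype.card ι - 1 : ℕ) *
          (p ^ Fintype.card κ * p ^ Fintype.card ι * (ν.restrict Q).real K * ν.real (ball 0 1)) *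
            (‖y‖ ^ finrank ℝ E - (t * ‖y‖) ^ finrank ℝ E) ≤
      captureDensity (placementLaw κ ι (ν.restrict Q)) F Prod.snd Q (t • y) := by
  have : SecondCountableTopology E := secondCountable_of_proper
  set P := placementLaw κ ι (ν.restrict Q)
  set q := p ^ Fintype.card κ * p ^ Fintype.card ι * (ν.restrict Q).real K * ν.real (ball 0 1) *
    (‖y‖ ^ finrank ℝ E - (t * ‖y‖) ^ finrank ℝ E)
  have hcrescent {j j' : ι} (hne : j' ≠ j) : q ≤ P.real (crescentEvent κ K R y t j j') := by
    refine le_trans ?_ (le_measureReal_placementLaw_crescentEvent hKm hK hp0 hp hy hne)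
    have hball := mul_le_mul_of_nonneg_left (le_measureReal_crescent ν y ht.1)
      (show 0 ≤ p ^ Fintype.card κ * p ^ Fintype.card ι * (ν.restrict Q).real K by positivity)
    linear_combination hball
  have hdemand (j : ι) : P.real (captureEvent F Prod.snd Q j y) + (Fintype.card ι - 1 : ℕ) * q ≤
      P.real (captureEvent F Prod.snd Q j (t • y)) := by
    refine le_trans ?_ (measureReal_captureEvent_add_sum_le hF hQ hQm hKm hK hy ht ν j)
    have hsum := Finset.card_nsmul_le_sum (Finset.univ.erase j) _ q
      fun j' hj' ↦ hcrescent (Finset.ne_of_mem_erase hj')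
    rw [nsmul_eq_mul, Finset.card_erase_of_mem (Finset.mem_univ j), Finset.card_univ] at hsum
    gcongr
  calc _ = ∑ j, (P.real (captureEvent F Prod.snd Q j y) + (Fintype.card ι - 1 : ℕ) * q) := by
        rw [Finset.sum_add_distrib, Finset.sum_const, Finset.card_univ, nsmul_eq_mul,
          captureDensity]
        ring
    _ ≤ _ := Finset.sum_le_sum fun j _ ↦ hdemand j

end Increment

end Placement

section Cube

variable {k : ℕ} {a b : ℝ}

/-- The cube `[a, b]^k` in Euclidean space. -/
def cube (k : ℕ) (a b : ℝ) : Set (EuclideanSpace ℝ (Fin k)) :=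
  {x | ∀ i, x i ∈ Set.Icc a b}

lemma measurableSet_cube (k : ℕ) (a b : ℝ) : MeasurableSet (cube k a b) := by
  simp only [cube, Set.ofPred_forall]
  exact .iInter fun i ↦ measurableSet_Icc.preimage (by fun_prop)

lemma convex_cube (k : ℕ) (a b : ℝ) : Convex ℝ (cube k a b) :=
  fun _ hx _ hy _ _ hs ht hst i ↦ convex_Icc a b (hx i) (hy i) hs ht hst

lemma volume_cube (k : ℕ) (a b : ℝ) : volume (cube k a b) = ENNReal.ofReal (b - a) ^ k := by
  rw [← (PiLp.volume_preserving_toLp (Fin k)).measure_preimage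
    (measurableSet_cube k a b).nullMeasurableSet]
  have hpre : WithLp.toLp 2 ⁻¹' cube k a b = Set.Icc (fun _ ↦ a) fun _ ↦ b := by
    ext x
    simp [cube, Pi.le_def, forall_and]
  rw [hpre, Real.volume_Icc_pi]
  simp

lemma add_mem_cube {s : ℝ} {x z : EuclideanSpace ℝ (Fin k)} (hx : x ∈ cube k (a + s) (b - s))
    (hz : ‖z‖ ≤ s) : x + z ∈ cube k a b := fun i ↦ by
  have hzi := abs_le.1 ((PiLp.norm_apply_le z i).trans hz)
  have hxi := hx i
  simp only [Set.mem_Icc, PiLp.add_apply] at hxi ⊢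
  constructor <;> linarith

instance : IsProbabilityMeasure (volume.restrict (cube k 0 1)) :=
  ⟨by simp [volume_cube]⟩

lemma measureReal_restrict_cube {s : ℝ} (hs0 : 0 ≤ s) (hs : s ≤ 1 / 2) :
    (volume.restrict (cube k 0 1)).real (cube k (0 + s) (1 - s)) = (1 - 2 * s) ^ k := by
  have hsub : cube k (0 + s) (1 - s) ⊆ cube k 0 1 := fun x hx i ↦
    Set.Icc_subset_Icc (by linarith) (by linarith) (hx i)
  rw [measureReal_restrict_apply (measurableSet_cube k _ _), Set.inter_eq_left.2 hsub,
    measureReal_def, volume_cube, ENNReal.toReal_pow, ENNReal.toReal_ofReal (by linarith)]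
  ring

lemma one_sub_le_measureReal_compl_closedBall [Nonempty (Fin k)] (x : EuclideanSpace ℝ (Fin k))
    {R : ℝ} (hR : 0 ≤ R) :
    1 - R ^ k * volume.real (Metric.ball (0 : EuclideanSpace ℝ (Fin k)) 1) ≤
      (volume.restrict (cube k 0 1)).real (Metric.closedBall x R)ᶜ := by
  have hle : (volume.restrict (cube k 0 1)).real (Metric.closedBall x R) ≤
      volume.real (Metric.closedBall x R) :=
    ENNReal.toReal_mono measure_closedBall_lt_top.ne (Measure.restrict_apply_le _ _)
  rw [Measure.addHaar_real_closedBall volume _ hR, finrank_euclideanSpace_fin] at hle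
  rw [probReal_compl_eq_one_sub measurableSet_closedBall]
  linarith

end Cube

section Resampling

lemma measurePreserving_update_supply {κ ι E : Type*} [Fintype κ] [Fintype ι] [DecidableEq κ]
    [MeasurableSpace E] (γ : Measure E) [IsProbabilityMeasure γ] (i : κ) :
    MeasurePreserving
      (fun p : ((κ → E) × (ι → E)) × E ↦ (Function.update p.1.1 i p.2, p.1.2))
      ((placementLaw κ ι γ).prod γ) (placementLaw κ ι γ) := by
  have hassoc := measurePreserving_prodAssoc (Measure.pi fun _ : κ ↦ γ)
    (Measure.pi fun _ : ι ↦ γ) γ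
  have hswap := (MeasurePreserving.id (Measure.pi fun _ : κ ↦ γ)).prod
    (Measure.measurePreserving_swap (μ := Measure.pi fun _ : ι ↦ γ) (ν := γ))
  have hassoc' := (measurePreserving_prodAssoc (Measure.pi fun _ : κ ↦ γ) γ
    (Measure.pi fun _ : ι ↦ γ)).symm
  exact ((measurePreserving_update (fun _ : κ ↦ γ) i).prod (.id _)).comp
    (hassoc'.comp (hswap.comp hassoc))

end Resampling

section Service

variable {k N a m : ℕ} {r r' : Fin a → ℝ} {S S' : Fin a → EuclideanSpace ℝ (Fin k)}
  {D : Fin m → EuclideanSpace ℝ (Fin k)} {i : Fin a}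

/-- The joint law of `a` supply and `m` demand locations, independent and uniform on `[0,1]^k`. -/
abbrev cubePlacementLaw (k a m : ℕ) :
    Measure ((Fin a → EuclideanSpace ℝ (Fin k)) × (Fin m → EuclideanSpace ℝ (Fin k))) :=
  placementLaw (Fin a) (Fin m) (volume.restrict (cube k 0 1))

lemma measurable_adjOf (k N m : ℕ) (r : Fin a → ℝ) :
    Measurable fun ω : (Fin a → EuclideanSpace ℝ (Fin k)) × (Fin m → EuclideanSpace ℝ (Fin k)) ↦
      adjOf k N ω.1 r ω.2 := by
  refine measurable_pi_lambda _ fun i ↦ measurable_pi_lambda _ fun j ↦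
    measurableSet_setOfPred.1 ?_
  exact measurableSet_le (by fun_prop) measurable_const

lemma integrable_comp_adjOf (k N m : ℕ) (r : Fin a → ℝ) (f : (Fin a → Fin m → Prop) → ℝ) :
    Integrable (fun ω ↦ f (adjOf k N ω.1 r ω.2)) (cubePlacementLaw k a m) :=
  Integrable.of_finite.comp_measurable (measurable_adjOf k N m r)

lemma muU_eq_integral (k N m : ℕ) (r : Fin a → ℝ) :
    muU k N m r =
      ∫ ω, (matchingNumber (adjOf k N ω.1 r ω.2) : ℝ) ∂cubePlacementLaw k a m :=
  (integral_prod (μ := Measure.pi fun _ ↦ volume.restrict (cube k 0 1))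
    (ν := Measure.pi fun _ ↦ volume.restrict (cube k 0 1)) _
    (integrable_comp_adjOf k N m r fun adj ↦ (matchingNumber adj : ℝ))).symm

lemma adjOf_of_le {j : Fin m} (hr : 0 ≤ r i) (hle : r i ≤ r' i)
    (h : adjOf k N S r D i j) : adjOf k N S r' D i j :=
  h.trans (by gcongr)

lemma muU_comp_perm (k N m : ℕ) (r : Fin a → ℝ) (π : Equiv.Perm (Fin a)) :
    muU k N m (r ∘ π) = muU k N m r := by
  have hperm : MeasurePreserving (Prod.map (fun S : Fin a → EuclideanSpace ℝ (Fin k) ↦ S ∘ π) id)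
      (cubePlacementLaw k a m) (cubePlacementLaw k a m) :=
    (measurePreserving_comp_perm _ π).prod (.id _)
  have hmeas : Measurable fun ω : (Fin a → EuclideanSpace ℝ (Fin k)) × _ ↦
      (matchingNumber (adjOf k N ω.1 (r ∘ π) (ω.2 : Fin m → _)) : ℝ) :=
    (measurable_of_countable fun adj ↦ (matchingNumber adj : ℝ)).comp
      (measurable_adjOf k N m (r ∘ π))
  rw [muU_eq_integral, ← hperm.map_eq,
    integral_map hperm.aemeasurable hmeas.aestronglyMeasurable, muU_eq_integral]
  refine integral_congr_ae (ae_of_all _ fun ω ↦ ?_)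
  exact congrArg Nat.cast (matchingNumber_comp_perm (adjOf k N ω.1 r ω.2) π)

lemma isSymmetricStable_muU (k N m : ℕ) : IsSymmetricStable (muU k N m (a := a)) where
  comp_perm := muU_comp_perm k N m
  le_add_card {r r'} s hr h := by
    have hint (r : Fin a → ℝ) := integrable_comp_adjOf k N m r fun adj ↦ (matchingNumber adj : ℝ)
    calc muU k N m r
      _ ≤ ∫ ω, ((matchingNumber (adjOf k N ω.1 r' ω.2) : ℝ) + s.card)
            ∂cubePlacementLaw k a m := by
          rw [muU_eq_integral]
          refine integral_mono (hint r) ((hint r').add (integrable_const _)) fun ω ↦ ?_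
          have hle : matchingNumber (adjOf k N ω.1 r ω.2) ≤
              matchingNumber (adjOf k N ω.1 r' ω.2) + s.card :=
            matchingNumber_le_add_card s fun i hi j ↦ adjOf_of_le (hr i) (h i hi)
          exact (Nat.cast_le.2 hle).trans_eq (Nat.cast_add _ _)
      _ = muU k N m r' + s.card := by
          rw [integral_add (hint r') (integrable_const _), muU_eq_integral]
          simp

lemma eraseSupply_adjOf_congr (hS : ∀ i' ≠ i, S i' = S' i') (hr : ∀ i' ≠ i, r i' = r' i') :
    eraseSupply (adjOf k N S r D) i = eraseSupply (adjOf k N S' r' D) i := by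
  ext i' j
  exact and_congr_right fun hi' ↦ by rw [adjOf, adjOf, hS i' hi', hr i' hi']

/-- With supply `i` deleted, some maximum matching leaves demand `j` unmatched; supply `i` then
contributes to the matching number exactly when such a demand lies within its range. -/
def IsSpareDemand (k N : ℕ) (r : Fin a → ℝ) (i : Fin a)
    (ω : (Fin a → EuclideanSpace ℝ (Fin k)) × (Fin m → EuclideanSpace ℝ (Fin k)))
    (j : Fin m) : Prop :=
  IsInessential (eraseSupply (adjOf k N ω.1 r ω.2) i) j

lemma isSpareDemand_update (x : EuclideanSpace ℝ (Fin k)) :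
    IsSpareDemand k N r i (Function.update S i x, D) = IsSpareDemand k N r i (S, D) := by
  unfold IsSpareDemand
  rw [eraseSupply_adjOf_congr (fun i' hi' ↦ Function.update_of_ne hi' x S) fun _ _ ↦ rfl]

lemma measurableSet_isSpareDemand (k N : ℕ) (r : Fin a → ℝ) (i : Fin a) (j : Fin m) :
    MeasurableSet {ω | IsSpareDemand k N r i ω j} :=
  measurable_adjOf k N m r
    (Set.toFinite {adj | IsInessential (eraseSupply adj i) j}).measurableSet

lemma measurableSet_exists_isSpareDemand (k N m : ℕ) (r : Fin a → ℝ) (i : Fin a) (ρ : ℝ) :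
    MeasurableSet {ω : (Fin a → EuclideanSpace ℝ (Fin k)) × (Fin m → EuclideanSpace ℝ (Fin k)) |
      ∃ j, IsSpareDemand k N r i ω j ∧ dist (ω.1 i) (ω.2 j) ≤ ρ} := by
  simp only [Set.ofPred_exists, Set.ofPred_and]
  exact .iUnion fun j ↦ (measurableSet_isSpareDemand k N r i j).inter
    (measurableSet_le (by fun_prop) measurable_const)

/-- The density of the displacement from the nearest spare demand to supply `i`. -/
abbrev spareDensity (k N m : ℕ) (r : Fin a → ℝ) (i : Fin a) : EuclideanSpace ℝ (Fin k) → ℝ :=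
  captureDensity (cubePlacementLaw k a m) (IsSpareDemand k N r i) Prod.snd (cube k 0 1)

lemma measureReal_exists_isSpareDemand (k N m : ℕ) (r : Fin a → ℝ) (i : Fin a) (ρ : ℝ) :
    (cubePlacementLaw k a m).real
        {ω | ∃ j, IsSpareDemand k N r i ω j ∧ dist (ω.1 i) (ω.2 j) ≤ ρ} =
      ∫ y in Metric.closedBall 0 ρ, spareDensity k N m r i y := by
  rw [← prod_exists_dist_le_eq_integral_captureDensity (measurableSet_isSpareDemand k N r i)
      (fun l ↦ by fun_prop) (measurableSet_cube k 0 1) volume,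
    ← (measurePreserving_update_supply (volume.restrict (cube k 0 1)) i).measureReal_preimage
      (measurableSet_exists_isSpareDemand k N m r i ρ).nullMeasurableSet]
  simp only [Set.preimage_ofPred_eq, isSpareDemand_update, Function.update_self]

theorem muU_update_eq (k N m : ℕ) (r : Fin a → ℝ) (i : Fin a) (v : ℝ) :
    muU k N m (Function.update r i v) =
      ∫ ω, (matchingNumber (eraseSupply (adjOf k N ω.1 r ω.2) i) : ℝ) ∂cubePlacementLaw k a m +
      ∫ y in Metric.closedBall 0 ((v / N) ^ (1 / k : ℝ)), spareDensity k N m r i y := by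
  set ρ := (v / N : ℝ) ^ (1 / k : ℝ)
  have hhit := measurableSet_exists_isSpareDemand k N m r i ρ
  have hone : Integrable 1 (cubePlacementLaw k a m) := integrable_const (1 : ℝ)
  rw [← measureReal_exists_isSpareDemand, ← integral_indicator_one hhit, ← integral_add
    (integrable_comp_adjOf k N m r fun adj ↦ (matchingNumber (eraseSupply adj i) : ℝ))
    (hone.indicator hhit), muU_eq_integral]
  refine integral_congr_ae (ae_of_all _ fun ω ↦ ?_)
  have herase : eraseSupply (adjOf k N ω.1 (Function.update r i v) ω.2) i =
      eraseSupply (adjOf k N ω.1 r ω.2) i :=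
    eraseSupply_adjOf_congr (fun _ _ ↦ rfl) fun i' hi' ↦ Function.update_of_ne hi' v r
  have hrange (j : Fin m) : adjOf k N ω.1 (Function.update r i v) ω.2 i j ↔
      dist (ω.1 i) (ω.2 j) ≤ ρ := by
    rw [adjOf, Function.update_self]
  beta_reduce
  rw [matchingNumber_eq_eraseSupply_add _ i, herase]
  simp only [hrange, Nat.cast_add, Nat.cast_ite, Nat.cast_one, Nat.cast_zero,
    Set.indicator_apply, Set.mem_ofPred_eq, IsSpareDemand, Pi.one_apply]

lemma isSpareDemand_of_forall_lt_dist {R : ℝ} (hR : ∀ i, (r i / N) ^ (1 / k : ℝ) ≤ R)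
    {ω : (Fin a → EuclideanSpace ℝ (Fin k)) × (Fin m → EuclideanSpace ℝ (Fin k))} {j : Fin m}
    (h : ∀ i, R < dist (ω.1 i) (ω.2 j)) : IsSpareDemand k N r i ω j :=
  isInessential_of_isolated fun i' hadj ↦ ((hR i').trans_lt (h i')).not_ge hadj.2

end Service

section Concavity

variable {k N a m : ℕ} {r : Fin a → ℝ} {M R p : ℝ} {y : EuclideanSpace ℝ (Fin k)} {t : ℝ}

lemma spareDensity_add_le_spareDensity_smul [Nonempty (Fin k)] (i : Fin a) (hR0 : 0 ≤ R)
    (hR : R ≤ 1 / 8) (hrange : ∀ i, (r i / N) ^ (1 / k : ℝ) ≤ R) (hp0 : 0 ≤ p)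
    (hp : p ≤ 1 - (3 * R) ^ k * volume.real (Metric.ball (0 : EuclideanSpace ℝ (Fin k)) 1))
    (hy : ‖y‖ ≤ R) (ht : t ∈ Set.Icc (0 : ℝ) 1) :
    spareDensity k N m r i y + m * (m - 1 : ℕ) * (p ^ a * p ^ m * (1 / 2) ^ k *
        volume.real (Metric.ball (0 : EuclideanSpace ℝ (Fin k)) 1)) *
          (‖y‖ ^ k - (t * ‖y‖) ^ k) ≤ spareDensity k N m r i (t • y) := by
  have hinner : (volume.restrict (cube k 0 1)).real (cube k (0 + 1 / 4) (1 - 1 / 4)) =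
      (1 / 2) ^ k := by
    rw [measureReal_restrict_cube (by norm_num) (by norm_num)]
    norm_num
  have hle := captureDensity_add_le_captureDensity_smul (κ := Fin a) (ι := Fin m)
    (K := cube k (0 + 1 / 4) (1 - 1 / 4)) (F := IsSpareDemand k N r i)
    (fun ω l h ↦ isSpareDemand_of_forall_lt_dist hrange h) (convex_cube k 0 1)
    (measurableSet_cube k 0 1) (measurableSet_cube k _ _)
    (fun x hx z hz ↦ add_mem_cube hx (by linarith)) hy ht volume hp0
    fun x ↦ hp.trans (one_sub_le_measureReal_compl_closedBall x (by positivity))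
  rwa [hinner, finrank_euclideanSpace_fin, Fintype.card_fin, Fintype.card_fin] at hle

lemma exists_isQuadraticSupergradient_muU_update [Nonempty (Fin k)] (hM : 0 ≤ M)
    (hN : M * 8 ^ k ≤ N) (hr : ∀ i, r i ∈ Set.Icc 0 M) (i : Fin a) (hp0 : 0 ≤ p)
    (hp : p ≤ 1 - 3 ^ k * M / N * volume.real (Metric.ball (0 : EuclideanSpace ℝ (Fin k)) 1)) :
    ∃ ψ, IsQuadraticSupergradient (fun v ↦ muU k N m (Function.update r i v)) ψ
      (m * (m - 1 : ℕ) * (p ^ a * p ^ m * (1 / 2) ^ k *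
        volume.real (Metric.ball (0 : EuclideanSpace ℝ (Fin k)) 1)) *
          volume.real (Metric.ball (0 : EuclideanSpace ℝ (Fin k)) 1) / 2 * (N : ℝ)⁻¹ ^ 2)
      (Set.Icc 0 M) := by
  set ρ : ℝ → ℝ := fun v ↦ (v / N) ^ (1 / k : ℝ) with hρ
  have hk : k ≠ 0 := Fin.pos_iff_nonempty.2 ‹_› |>.ne'
  have hρ_pow {v : ℝ} (hv : 0 ≤ v) : ρ v ^ k = v / N := by
    rw [hρ, one_div]
    exact Real.rpow_inv_natCast_pow (by positivity) hk
  have hρ_mem {v : ℝ} (hv : v ∈ Set.Icc 0 M) : ρ v ∈ Set.Icc 0 (ρ M) :=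
    ⟨Real.rpow_nonneg (div_nonneg hv.1 N.cast_nonneg) _, Real.rpow_le_rpow
      (div_nonneg hv.1 N.cast_nonneg) (div_le_div_of_nonneg_right hv.2 N.cast_nonneg)
      (by positivity)⟩
  have hρM : ρ M ≤ 1 / 8 := by
    refine le_of_pow_le_pow_left₀ hk (by norm_num) ?_
    rw [hρ_pow hM, one_div_pow]
    exact div_le_of_le_mul₀ N.cast_nonneg (by positivity)
      (by rwa [one_div_mul_eq_div, le_div_iff₀ (by positivity)])
  obtain ⟨ψ, hψ⟩ := exists_isQuadraticSupergradient_setIntegral_closedBall (κ := (N : ℝ)⁻¹)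
    volume
    (measurable_captureDensity (D := Prod.snd) (measurableSet_isSpareDemand k N r i)
      (fun l ↦ by fun_prop) (measurableSet_cube k 0 1) (cubePlacementLaw k a m))
    (abs_captureDensity_le _)
    (fun y hy t ht ↦ by
      rw [finrank_euclideanSpace_fin]
      exact spareDensity_add_le_spareDensity_smul i (hρ_mem ⟨hM, le_rfl⟩).1 hρM
        (fun i ↦ (hρ_mem (hr i)).2) hp0 (by rwa [mul_pow, hρ_pow hM, ← mul_div_assoc]) hy ht)
    (fun v hv ↦ hρ_mem hv)
    (fun v hv ↦ by rw [finrank_euclideanSpace_fin, hρ_pow hv.1, inv_mul_eq_div])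
  refine ⟨ψ, fun u hu v hv ↦ ?_⟩
  beta_reduce
  rw [muU_update_eq, muU_update_eq, add_sub_add_left_eq_sub]
  exact hψ u hu v hv

lemma exp_neg_two_mul_le_one_sub_pow {x : ℝ} (hx0 : 0 ≤ x) (hx : x ≤ 1 / 2) (j : ℕ) :
    Real.exp (-(2 * (j * x))) ≤ (1 - x) ^ j := by
  have hexp : Real.exp (-(2 * x)) ≤ 1 - x := by
    rw [Real.exp_neg, inv_le_iff_one_le_mul₀ (Real.exp_pos _)]
    nlinarith [Real.add_one_le_exp (2 * x)]
  calc Real.exp (-(2 * (j * x))) = Real.exp (-(2 * x)) ^ j := by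
        rw [← Real.exp_nat_mul]
        ring_nf
    _ ≤ (1 - x) ^ j := by gcongr

lemma sq_div_two_le_mul_pred {m : ℕ} (hm : 2 ≤ m) : (m : ℝ) ^ 2 / 2 ≤ m * (m - 1 : ℕ) := by
  have : (2 : ℝ) ≤ m := mod_cast hm
  rw [Nat.cast_pred (by omega)]
  nlinarith

/-- A strong concavity constant of `v ↦ muU k n m (update r i v)` on `[0, M]` when `m = β n`, for
all large `n`. A demand is isolated with probability of order `(1 - q / n) ^ (n + m)`, where
`q := 3 ^ k * M * V` and `V` is the volume of the unit ball; the exponentials bound this from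
below. -/
def concavityConstant (k : ℕ) (M β : ℝ) : ℝ :=
  let V := volume.real (Metric.ball (0 : EuclideanSpace ℝ (Fin k)) 1)
  let q := 3 ^ k * M * V
  β ^ 2 / 2 * (Real.exp (-(2 * q)) * Real.exp (-(2 * (β * q))) * (1 / 2) ^ k * V) * V / 2

lemma concavityConstant_pos (k : ℕ) (M : ℝ) {β : ℝ} (hβ : 0 < β) :
    0 < concavityConstant k M β := by
  have hV : 0 < volume.real (Metric.ball (0 : EuclideanSpace ℝ (Fin k)) 1) :=
    ENNReal.toReal_pos (Metric.measure_ball_pos _ _ one_pos).ne' measure_ball_lt_top.ne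
  unfold concavityConstant
  positivity

lemma concavityConstant_le {β : ℝ} (hM : 0 ≤ M) (hN0 : 0 < N) (hm : (m : ℝ) = β * N)
    (hm2 : 2 ≤ m) {q : ℝ}
    (hq : q = 3 ^ k * M * volume.real (Metric.ball (0 : EuclideanSpace ℝ (Fin k)) 1))
    (hqN : 2 * q ≤ N) :
    concavityConstant k M β ≤ m * (m - 1 : ℕ) * ((1 - q / N) ^ N * (1 - q / N) ^ m *
      (1 / 2) ^ k * volume.real (Metric.ball (0 : EuclideanSpace ℝ (Fin k)) 1)) *
        volume.real (Metric.ball (0 : EuclideanSpace ℝ (Fin k)) 1) / 2 * (N : ℝ)⁻¹ ^ 2 := by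
  have hN : (0 : ℝ) < N := Nat.cast_pos.2 hN0
  have hqN0 : 0 ≤ q / N := by rw [hq]; positivity
  have hqN1 : q / N ≤ 1 / 2 := by rw [div_le_iff₀ hN]; linarith
  have hp0 : 0 ≤ 1 - q / N := by linarith
  have hpN : Real.exp (-(2 * q)) ≤ (1 - q / N) ^ N := by
    simpa only [mul_div_cancel₀ q hN.ne'] using exp_neg_two_mul_le_one_sub_pow hqN0 hqN1 N
  have hpm : Real.exp (-(2 * (β * q))) ≤ (1 - q / N) ^ m := by
    have hmq : (m : ℝ) * (q / N) = β * q := by rw [hm]; field_simp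
    simpa only [hmq] using exp_neg_two_mul_le_one_sub_pow hqN0 hqN1 m
  have hβm : β ^ 2 / 2 = (m : ℝ) ^ 2 / 2 * (N : ℝ)⁻¹ ^ 2 := by rw [hm]; field_simp
  rw [concavityConstant, ← hq, hβm, mul_right_comm _ ((N : ℝ)⁻¹ ^ 2),
    mul_right_comm _ ((N : ℝ)⁻¹ ^ 2), mul_div_right_comm _ ((N : ℝ)⁻¹ ^ 2)]
  gcongr
  exact sq_div_two_le_mul_pred hm2

theorem exists_forall_isQuadraticSupergradient_muU_update {k : ℕ} (hk : 0 < k) {M β : ℝ}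
    (hM : 0 ≤ M) (hβ : 0 < β) :
    ∃ N : ℕ, ∀ n ≥ N, ∀ m : ℕ, (m : ℝ) = β * n →
      ∀ r : Fin n → ℝ, (∀ i, r i ∈ Set.Icc 0 M) → ∀ i, ∃ ψ,
        IsQuadraticSupergradient (fun v ↦ muU k n m (Function.update r i v)) ψ
          (concavityConstant k M β) (Set.Icc 0 M) := by
  have : Nonempty (Fin k) := Fin.pos_iff_nonempty.1 hk
  set q := 3 ^ k * M * volume.real (Metric.ball (0 : EuclideanSpace ℝ (Fin k)) 1) with hq
  refine ⟨⌈max 1 (max (2 * q) (max (2 / β) (M * 8 ^ k)))⌉₊, fun n hn m hm r hr i ↦ ?_⟩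
  simp only [ge_iff_le, Nat.ceil_le, max_le_iff] at hn
  obtain ⟨hn1, hnq, hnβ, hnM⟩ := hn
  have hn0 : (0 : ℝ) < n := by linarith
  have hqn : q / n ≤ 1 :=
    (div_le_one hn0).2 ((le_mul_of_one_le_left (by positivity) one_le_two).trans hnq)
  have hm2 : 2 ≤ m := by
    rw [div_le_iff₀' hβ, ← hm] at hnβ
    exact_mod_cast hnβ
  obtain ⟨ψ, hψ⟩ := exists_isQuadraticSupergradient_muU_update (m := m) (p := 1 - q / n) hM hnM
    hr i (sub_nonneg.2 hqn) (by rw [div_mul_eq_mul_div])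
  exact ⟨ψ, hψ.mono (concavityConstant_le hM (Nat.cast_pos.1 hn0) hm hm2 hq hnq)⟩

end Concavity

section Final

lemma sum_abs_descSort_sub_le {n : ℕ} {M : ℝ} {r r' : Fin n → ℝ}
    (hr : ∀ i, r i ∈ Set.Icc 0 M) (hr' : ∀ i, r' i ∈ Set.Icc 0 M) :
    ∑ i, |descSort r i - descSort r' i| ≤ M * n := by
  have hterm (i : Fin n) : |descSort r i - descSort r' i| ≤ M :=
    abs_sub_le_of_nonneg_of_le (hr _).1 (hr _).2 (hr' _).1 (hr' _).2
  calc _ ≤ ∑ _i : Fin n, M := Finset.sum_le_sum fun i _ ↦ hterm i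
    _ = M * n := by simp [mul_comm]

lemma inv_le_min_one_zpow_neg {e : ℝ} {k : ℕ} (hk : 0 < k) (he0 : 0 < e) (he1 : e ≤ 1) :
    e⁻¹ ≤ min e 1 ^ (-(k : ℤ)) := by
  rw [min_eq_left he1, zpow_neg, zpow_natCast]
  exact inv_anti₀ (by positivity) (pow_le_of_le_one he0.le he1 hk.ne')

-- The smoothing scale `δ = c θ² / 8` balances the gain `c θ² n` against the loss `4 δ n`.
lemma lt_sub_of_forall_smoothing_le {n k : ℕ} {M c α θ g : ℝ} (hk : 0 < k) (hM : 0 < M)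
    (hc : 0 < c) (hcM : c ≤ 8 / M ^ 2) (hα : 0 < α) (hαM : α ≤ min (c / (2 * M ^ 2)) (3 / M ^ 4))
    (hαc : α ≤ c ^ 2 / 256) (hθ : 0 < θ) (hθM : θ ≤ M)
    (h : ∀ δ, 0 < δ → δ ≤ 1 → c * θ ^ 2 * n - (4 * δ * n + 4 * δ⁻¹ ^ 2) ≤ g) :
    α * θ ^ 4 * n - min (α * θ ^ 4 / 3) 1 ^ (-(k : ℤ)) < g := by
  obtain ⟨hα1, hα3⟩ := le_min_iff.1 hαM
  rw [le_div_iff₀ (by positivity)] at hcM hα1 hα3 hαc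
  have hθ2 : θ ^ 2 ≤ M ^ 2 := by gcongr
  have hθ4 : θ ^ 4 ≤ M ^ 4 := by gcongr
  have hscale : c * θ ^ 2 / 8 ≤ 1 := by nlinarith
  have hgain : α * θ ^ 4 * n ≤ c * θ ^ 2 / 2 * n := by
    gcongr
    nlinarith [mul_le_mul_of_nonneg_left hθ2 (by positivity : 0 ≤ α * θ ^ 2)]
  have hloss : 4 * (c * θ ^ 2 / 8)⁻¹ ^ 2 < (α * θ ^ 4 / 3)⁻¹ := by
    have hrw : 4 * (c * θ ^ 2 / 8)⁻¹ ^ 2 = (c ^ 2 * θ ^ 4 / 256)⁻¹ := by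
      field_simp
      norm_num
    rw [hrw]
    gcongr 1
    nlinarith [pow_pos hθ 4]
  have hpenalty : (α * θ ^ 4 / 3)⁻¹ ≤ min (α * θ ^ 4 / 3) 1 ^ (-(k : ℤ)) :=
    inv_le_min_one_zpow_neg hk (by positivity) (by nlinarith)
  linarith [h (c * θ ^ 2 / 8) (by positivity) hscale]

theorem quantitative_schur_concavity_high_dim_general (k : ℕ) (hk : 0 < k) (M : ℝ) (hM : 0 < M) :
    ∃ B w : ℝ, 0 < B ∧ 0 < w ∧
      ∀ β : ℝ, 0 < β →
        ∃ N : ℕ, ∃ α : ℝ, 0 < α ∧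
          ∀ n : ℕ, N ≤ n → ∀ m : ℕ, (m : ℝ) = β * n →
            ∀ θ : ℝ, 0 < θ →
              ∀ r r' : Fin n → ℝ,
                (∀ i, r i ∈ Set.Icc (0 : ℝ) M) → (∀ i, r' i ∈ Set.Icc (0 : ℝ) M) →
                Majorizes r r' →
                θ * n < ∑ i, |descSort r i - descSort r' i| →
                α * θ ^ 4 * n - B * (min (α * θ ^ 4 / 3) w) ^ (-(k : ℤ)) <
                  muU k n m r' - muU k n m r := by
  refine ⟨1, 1, one_pos, one_pos, fun β hβ ↦ ?_⟩
  obtain ⟨N, hconc⟩ := exists_forall_isQuadraticSupergradient_muU_update hk hM.le hβ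
  set c := min (concavityConstant k M β) (8 / M ^ 2)
  have hc : 0 < c := lt_min (concavityConstant_pos k M hβ) (by positivity)
  refine ⟨N, min (min (c / (2 * M ^ 2)) (3 / M ^ 4)) (c ^ 2 / 256), by positivity,
    fun n hn m hm θ hθ r r' hr hr' hmaj hdist ↦ ?_⟩
  have hθM : θ ≤ M :=
    (lt_of_mul_lt_mul_right (hdist.trans_le (sum_abs_descSort_sub_le hr hr')) n.cast_nonneg).le
  rw [one_mul]
  refine lt_sub_of_forall_smoothing_le hk hM hc (min_le_right _ _) (by positivity)
    (min_le_left _ _) (min_le_right _ _) hθ hθM fun δ hδ hδ1 ↦ ?_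
  refine (isSymmetricStable_muU k n m).le_sub_of_majorizes hc.le hθ.le hδ hδ1
    (fun r hr i ↦ ?_) hr hr' hmaj hdist.le
  obtain ⟨ψ, hψ⟩ := hconc n hn m hm r hr i
  exact ⟨ψ, hψ.mono (min_le_left _ _)⟩

end Final

/-- **Quantitative Schur-concavity in dimension `k ≥ 2`.**
Fix `k ≥ 2` and `M ≥ 1`. There exist positive constants `B`, `w` depending only on
`(k, M)` such that for any demand-to-supply ratio `β > 0` with `M ≥ max {1, 1/β}`,
there exist a positive constant `α` and an integer `N` (depending only on `(k, β, M)`)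
such that for any `θ > 0` and any `r, r' ∈ [0,M]^n` with `r ⪰ r'` and
`‖r^↓ - r'^↓‖₁ > θ n`, and all `n ≥ N` with `m = βn`:
`μ_m(r') - μ_m(r) > α θ⁴ n - B (min {α θ⁴/3, w})^{-k}`. -/
theorem quantitative_schur_concavity_high_dim (k : ℕ) (hk : 2 ≤ k) (M : ℝ) (hM1 : 1 ≤ M) :
    ∃ B w : ℝ, 0 < B ∧ 0 < w ∧
      ∀ β : ℝ, 0 < β → max 1 β⁻¹ ≤ M →
        ∃ N : ℕ, ∃ α : ℝ, 0 < α ∧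
          ∀ n : ℕ, N ≤ n → ∀ m : ℕ, (m : ℝ) = β * n →
            ∀ θ : ℝ, 0 < θ →
              ∀ r r' : Fin n → ℝ,
                (∀ i, r i ∈ Set.Icc (0 : ℝ) M) → (∀ i, r' i ∈ Set.Icc (0 : ℝ) M) →
                Majorizes r r' →
                θ * n < ∑ i, |descSort r i - descSort r' i| →
                α * θ ^ 4 * n - B * (min (α * θ ^ 4 / 3) w) ^ (-(k : ℤ)) <
                  muU k n m r' - muU k n m r := by
  obtain ⟨B, w, hB, hw, h⟩ :=
    quantitative_schur_concavity_high_dim_general k (by omega) M (by linarith)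
  exact ⟨B, w, hB, hw, fun β hβ _ ↦ h β hβ⟩

end
end

section
/- Geometric properties of special pattern cells: Fix k ≥ 2, M ≥ 1, n ∈ ℕ, and 0 ≤ 2τ ≤ r₂ ≤ M. With w' = 6M^{1/k}, R = (1/10)(r₂/n)^{1/k}, R' = (1 − 10^{−k})^{1/k}(r₂/n)^{1/k}, R'' = (r₂/n)^{1/k}, R''' = √k·w'/n^{1/k} + 2(M/n)^{1/k}, and A an axis-aligned hypercube of side length w'/n^{1/k} with center x_A contained in [0,1]^k, the following hold. (P1) Vol(B(x_A, R'') \ B(x_A, R')) = Vol(B(x_A, R)) = κ_k·r₂/(10^k·n) ≥ κ_k·2τ/(10^k·n). (P2) For any x₀ ∈ B(x_A, R) and x₁ ∈ B(x_A, R'') \ B(x_A, R'), the map ℓ ↦ I(ℓ; x₀, x₁) is convex on [r₂ − 2τ, r₂], and there exists a constant α > 0 depending only on M and k such that I(r₂; x₀, x₁) − 2I(r₂ − τ; x₀, x₁) + I(r₂ − 2τ; x₀, x₁) ≥ (α/n)·τ². (P3) B(x_A, R'' + (M/n)^{1/k}) ⊆ A and A ⊆ B(x_A, R'''). (P4) Every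 point d ∈ [0,1]^k \ B(x_A, R''') satisfies dist(d, A) > 2(M/n)^{1/k}. -/
/-!
The perpendicular bisector of two centers cuts the intersection of two balls of equal radius into
two congruent spherical caps `{‖q‖ ≤ ρ, h ≤ ⟪e, q⟫}`, with `2 h` the distance of the centers.
Between the radii `s < t`, the cap gains a region containing the shell of the sector of cosine
`h / s` and contained in the shell of the sector of cosine `h / t`. Sectors scale like `ρ ^ k`,
which is proportional to the volume parameter `ℓ`, so in this parameter the volume of the unit
sector of cosine `h / ρ` is, up to a factor, a subgradient of the volume of the intersection;
hence convexity. As `ℓ` grows by `τ`, the cosine falls by a multiple of `τ` and, in dimension at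
least two, the volume of the sector grows by a multiple of that, as long as the cosine stays away
from `0` and `1`. This makes the second difference at least a multiple of `τ ^ 2`. For centers in
the core and in the outer shell of a cell, the distance of the centers is between `4 / 5` and
`11 / 10 < √2` times the radius; the factor `√2` allows for the decrease of the radius when `ℓ` is
halved.
-/

open MeasureTheory

noncomputable section

/-- `I(ℓ; x₀, x₁)` : the volume of the intersection of the two closed balls of radius
`(ℓ/n)^{1/k}` centered at `x₀` and `x₁`. -/
def ballInter (k n : ℕ) (x₀ x₁ : EuclideanSpace ℝ (Fin k)) (ℓ : ℝ) : ℝ :=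
  (volume (Metric.closedBall x₀ ((ℓ / (n : ℝ)) ^ ((1 : ℝ) / (k : ℝ))) ∩
    Metric.closedBall x₁ ((ℓ / (n : ℝ)) ^ ((1 : ℝ) / (k : ℝ))))).toReal

section

open Metric Module Set
open scoped RealInnerProductSpace

section Subgradient

variable {s : Set ℝ} {f φ : ℝ → ℝ}

lemma convexOn_of_forall_interior_subgradient (hs : Convex ℝ s)
    (hφ : ∀ v ∈ interior s, ∀ u ∈ s, φ v * (u - v) ≤ f u - f v) : ConvexOn ℝ s f := by
  refine LinearOrder.convexOn_of_lt hs fun x hx y hy hxy a b ha hb hab => ?_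
  obtain ⟨hxz, hzy⟩ : a • x + b • y ∈ Ioo x y := by
    rw [← openSegment_eq_Ioo hxy]
    exact ⟨a, b, ha, hb, hab, rfl⟩
  set z := a • x + b • y with hz
  have hz_mem : z ∈ interior s :=
    interior_maximal (Ioo_subset_Icc_self.trans (hs.ordConnected.out hx hy)) isOpen_Ioo ⟨hxz, hzy⟩
  have hz_avg : a * (φ z * (x - z)) + b * (φ z * (y - z)) = 0 := by
    simp only [hz, smul_eq_mul]
    linear_combination (-φ (a * x + b * y) * (a * x + b * y)) * hab
  have hfz : (a + b) * f z = f z := by rw [hab, one_mul]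
  have hx_le := mul_le_mul_of_nonneg_left (hφ z hz_mem x hx) ha.le
  have hy_le := mul_le_mul_of_nonneg_left (hφ z hz_mem y hy) hb.le
  simp only [smul_eq_mul]
  linarith

lemma half_mul_subgradient_sub_le_secondDiff {r τ : ℝ}
    (hr_τ : ∀ u ∈ ({r - 2 * τ, r - τ / 2} : Set ℝ),
      φ (r - τ) * (u - (r - τ)) ≤ f u - f (r - τ))
    (hr_half : φ (r - τ / 2) * (r - (r - τ / 2)) ≤ f r - f (r - τ / 2)) :
    τ / 2 * (φ (r - τ / 2) - φ (r - τ)) ≤ f r - 2 * f (r - τ) + f (r - 2 * τ) := by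
  have hleft := hr_τ (r - 2 * τ) (by simp)
  have hright := hr_τ (r - τ / 2) (by simp)
  linarith

end Subgradient

section Isometry
variable {E F : Type*} [NormedAddCommGroup E] [InnerProductSpace ℝ E] [FiniteDimensional ℝ E]
  [NormedAddCommGroup F] [InnerProductSpace ℝ F] [FiniteDimensional ℝ F]

lemma exists_orthonormalBasis_apply_zero_eq {m : ℕ} (hE : finrank ℝ E = m + 1) {e : E}
    (he : ‖e‖ = 1) : ∃ b : OrthonormalBasis (Fin (m + 1)) ℝ E, b 0 = e := by
  have h_orthonormal : Orthonormal ℝ (({0} : Set (Fin (m + 1))).domRestrict fun _ => e) :=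
    ⟨fun _ => he, fun i j hij => absurd (Subsingleton.elim i j) hij⟩
  obtain ⟨b, hb⟩ := h_orthonormal.exists_orthonormalBasis_extension_of_card_eq (by simpa using hE)
  exact ⟨b, hb 0 rfl⟩

lemma exists_linearIsometryEquiv_apply_eq (hEF : finrank ℝ E = finrank ℝ F) {e : E} {f : F}
    (he : ‖e‖ = 1) (hf : ‖f‖ = 1) : ∃ L : E ≃ₗᵢ[ℝ] F, L e = f := by
  have : Nontrivial E := ⟨e, 0, norm_ne_zero_iff.mp (by simp [he])⟩
  obtain ⟨m, hm⟩ := Nat.exists_eq_add_one.mpr (finrank_pos (R := ℝ) (M := E))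
  obtain ⟨b, rfl⟩ := exists_orthonormalBasis_apply_zero_eq hm he
  obtain ⟨c, rfl⟩ := exists_orthonormalBasis_apply_zero_eq (hEF ▸ hm) hf
  exact ⟨b.equiv c (Equiv.refl _), by simp⟩

end Isometry

/-- The spherical cap of height threshold `h` in direction `e`, cut from the ball of radius `r`
about the origin. -/
def sphericalCap {E : Type*} [NormedAddCommGroup E] [InnerProductSpace ℝ E] (e : E) (h r : ℝ) :
    Set E :=
  {q | ‖q‖ ≤ r ∧ h ≤ ⟪e, q⟫}

/-- The spherical sector: the part of the ball of radius `r` about the origin whose points make an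
angle of cosine at least `a` with the unit vector `e`. -/
def sphericalSector {E : Type*} [NormedAddCommGroup E] [InnerProductSpace ℝ E] (e : E) (a r : ℝ) :
    Set E :=
  {q | ‖q‖ ≤ r ∧ a * ‖q‖ ≤ ⟪e, q⟫}

section CapsAndSectors

section Inclusions
variable {E : Type*} [NormedAddCommGroup E] [InnerProductSpace ℝ E] {e : E} {a b h r s t : ℝ}

lemma sphericalCap_subset_closedBall : sphericalCap e h r ⊆ closedBall 0 r :=
  fun _ hq => mem_closedBall_zero_iff.mpr hq.1

lemma sphericalSector_subset_closedBall : sphericalSector e a r ⊆ closedBall 0 r :=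
  fun _ hq => mem_closedBall_zero_iff.mpr hq.1

lemma sphericalCap_mono_radius (hst : s ≤ t) : sphericalCap e h s ⊆ sphericalCap e h t :=
  fun _ hq => ⟨hq.1.trans hst, hq.2⟩

lemma sphericalSector_mono_radius (hst : s ≤ t) :
    sphericalSector e a s ⊆ sphericalSector e a t :=
  fun _ hq => ⟨hq.1.trans hst, hq.2⟩

lemma sphericalSector_anti (hab : a ≤ b) : sphericalSector e b r ⊆ sphericalSector e a r :=
  fun q hq => ⟨hq.1, (mul_le_mul_of_nonneg_right hab (norm_nonneg q)).trans hq.2⟩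

lemma sphericalSector_sdiff_subset_sphericalCap_sdiff (hh : 0 ≤ h) (hs : 0 < s) :
    sphericalSector e (h / s) t \ sphericalSector e (h / s) s ⊆
      sphericalCap e h t \ sphericalCap e h s := by
  rintro q ⟨⟨hqt, hq⟩, hqs⟩
  have hs_lt : s < ‖q‖ := not_le.mp fun hle => hqs ⟨hle, hq⟩
  refine ⟨⟨hqt, le_trans ?_ hq⟩, fun hcap => hs_lt.not_ge hcap.1⟩
  rw [div_mul_eq_mul_div, le_div_iff₀ hs]
  gcongr

lemma sphericalCap_sdiff_subset_sphericalSector_sdiff (hh : 0 ≤ h) (ht : 0 < t) :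
    sphericalCap e h t \ sphericalCap e h s ⊆
      sphericalSector e (h / t) t \ sphericalSector e (h / t) s := by
  rintro q ⟨⟨hqt, hq⟩, hqs⟩
  refine ⟨⟨hqt, le_trans ?_ hq⟩, fun hsector => hqs ⟨hsector.1, hq⟩⟩
  rw [div_mul_eq_mul_div, div_le_iff₀ ht]
  gcongr

open Pointwise in
lemma sphericalSector_eq_smul (hr : 0 ≤ r) :
    sphericalSector e a r = r • sphericalSector e a 1 := by
  rcases hr.eq_or_lt with rfl | hr
  · rw [zero_smul_set ⟨0, by simp [sphericalSector]⟩]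
    ext q
    simp +contextual [sphericalSector]
  · ext q
    rw [mem_smul_set_iff_inv_smul_mem₀ hr.ne']
    simp only [sphericalSector, mem_ofPred_eq, norm_smul, norm_inv, Real.norm_eq_abs,
      abs_of_pos hr, inner_smul_right, mul_left_comm a, inv_mul_le_iff₀ hr, mul_one,
      mul_inv_cancel_left₀ hr.ne']

end Inclusions

section Volume
variable {E : Type*} [NormedAddCommGroup E] [InnerProductSpace ℝ E] [MeasurableSpace E]
  [BorelSpace E] {e : E} {a h r s t : ℝ}

lemma measurableSet_sphericalCap : MeasurableSet (sphericalCap e h r) := by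
  unfold sphericalCap
  measurability

lemma measurableSet_sphericalSector : MeasurableSet (sphericalSector e a r) := by
  unfold sphericalSector
  measurability

variable [FiniteDimensional ℝ E]

lemma volume_sphericalCap_ne_top : volume (sphericalCap e h r) ≠ ⊤ :=
  measure_ne_top_of_subset sphericalCap_subset_closedBall measure_closedBall_lt_top.ne

lemma volume_sphericalSector_ne_top : volume (sphericalSector e a r) ≠ ⊤ :=
  measure_ne_top_of_subset sphericalSector_subset_closedBall measure_closedBall_lt_top.ne

lemma measureReal_sphericalCap_neg :
    volume.real (sphericalCap (-e) h r) = volume.real (sphericalCap e h r) := by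
  rw [← (Measure.measurePreserving_neg volume).measureReal_preimage
    measurableSet_sphericalCap.nullMeasurableSet]
  simp [sphericalCap]

lemma measureReal_sphericalSector_map {F : Type*} [NormedAddCommGroup F] [InnerProductSpace ℝ F]
    [MeasurableSpace F] [BorelSpace F] [FiniteDimensional ℝ F] (L : E ≃ₗᵢ[ℝ] F) :
    volume.real (sphericalSector (L e) a r) = volume.real (sphericalSector e a r) := by
  rw [← L.measurePreserving.measureReal_preimage measurableSet_sphericalSector.nullMeasurableSet]
  simp [sphericalSector]

lemma measureReal_sphericalSector (hr : 0 ≤ r) :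
    volume.real (sphericalSector e a r) =
      r ^ finrank ℝ E * volume.real (sphericalSector e a 1) := by
  rw [sphericalSector_eq_smul hr, measureReal_def, Measure.addHaar_smul_of_nonneg _ hr,
    ENNReal.toReal_mul, ENNReal.toReal_ofReal (by positivity), measureReal_def]

lemma measureReal_sphericalSector_sdiff (hs : 0 ≤ s) (hst : s ≤ t) :
    volume.real (sphericalSector e a t \ sphericalSector e a s) =
      (t ^ finrank ℝ E - s ^ finrank ℝ E) * volume.real (sphericalSector e a 1) := by
  rw [measureReal_sdiff (sphericalSector_mono_radius hst) measurableSet_sphericalSector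
    volume_sphericalSector_ne_top, measureReal_sphericalSector (hs.trans hst),
    measureReal_sphericalSector hs, sub_mul]

lemma mul_measureReal_sphericalSector_le_sphericalCap_sub (hh : 0 ≤ h) (hs : 0 < s)
    (hst : s ≤ t) :
    (t ^ finrank ℝ E - s ^ finrank ℝ E) * volume.real (sphericalSector e (h / s) 1) ≤
      volume.real (sphericalCap e h t) - volume.real (sphericalCap e h s) := by
  rw [← measureReal_sphericalSector_sdiff hs.le hst,
    ← measureReal_sdiff (sphericalCap_mono_radius hst) measurableSet_sphericalCap
      volume_sphericalCap_ne_top]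
  exact measureReal_mono (sphericalSector_sdiff_subset_sphericalCap_sdiff hh hs)
    (measure_ne_top_of_subset sdiff_subset volume_sphericalCap_ne_top)

lemma sphericalCap_sub_le_mul_measureReal_sphericalSector (hh : 0 ≤ h) (hs : 0 ≤ s) (ht : 0 < t)
    (hst : s ≤ t) :
    volume.real (sphericalCap e h t) - volume.real (sphericalCap e h s) ≤
      (t ^ finrank ℝ E - s ^ finrank ℝ E) * volume.real (sphericalSector e (h / t) 1) := by
  rw [← measureReal_sphericalSector_sdiff hs hst,
    ← measureReal_sdiff (sphericalCap_mono_radius hst) measurableSet_sphericalCap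
      volume_sphericalCap_ne_top]
  exact measureReal_mono (sphericalCap_sdiff_subset_sphericalSector_sdiff hh ht)
    (measure_ne_top_of_subset sdiff_subset volume_sphericalSector_ne_top)

end Volume
end CapsAndSectors

section SectorBand

lemma mul_le_iff_div_sqrt_mul_le {a ρ t q : ℝ} (ha₀ : 0 ≤ a) (ha₁ : a < 1) (hρ : 0 ≤ ρ)
    (hq : 0 ≤ q) (hq_sq : q ^ 2 = ρ ^ 2 + t ^ 2) : a * q ≤ t ↔ a / √(1 - a ^ 2) * ρ ≤ t := by
  have h_pos : 0 < 1 - a ^ 2 := by nlinarith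
  rw [div_mul_eq_mul_div, div_le_iff₀ (Real.sqrt_pos.mpr h_pos)]
  rcases le_or_gt 0 t with ht | ht
  · have h_left : a * q ≤ t ↔ a ^ 2 * (ρ ^ 2 + t ^ 2) ≤ t ^ 2 := by
      rw [← sq_le_sq₀ (by positivity) ht, mul_pow, hq_sq]
    have h_right : a * ρ ≤ t * √(1 - a ^ 2) ↔ a ^ 2 * ρ ^ 2 ≤ t ^ 2 * (1 - a ^ 2) := by
      rw [← sq_le_sq₀ (by positivity) (by positivity), mul_pow, mul_pow, Real.sq_sqrt h_pos.le]
    rw [h_left, h_right]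
    constructor <;> intro h <;> linarith
  · have h_left : t < a * q := ht.trans_le (by positivity)
    have h_right : t * √(1 - a ^ 2) < a * ρ :=
      (mul_neg_of_neg_of_pos ht (Real.sqrt_pos.mpr h_pos)).trans_le (by positivity)
    exact iff_of_false h_left.not_ge h_right.not_ge

lemma sub_le_div_sqrt_one_sub_sq_sub {a b : ℝ} (ha : 0 ≤ a) (hab : a ≤ b) (hb : b < 1) :
    b - a ≤ b / √(1 - b ^ 2) - a / √(1 - a ^ 2) := by
  have hb_pos : 0 < √(1 - b ^ 2) := Real.sqrt_pos.mpr (by nlinarith)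
  have h_anti : 1 / √(1 - a ^ 2) ≤ 1 / √(1 - b ^ 2) :=
    one_div_le_one_div_of_le hb_pos (Real.sqrt_le_sqrt (by gcongr))
  have h_one_le : 1 ≤ 1 / √(1 - b ^ 2) :=
    one_le_one_div hb_pos (Real.sqrt_le_one.mpr (by nlinarith))
  calc b - a ≤ (b - a) * (1 / √(1 - b ^ 2)) := le_mul_of_one_le_right (by linarith) h_one_le
    _ ≤ (b - a) * (1 / √(1 - b ^ 2)) + a * (1 / √(1 - b ^ 2) - 1 / √(1 - a ^ 2)) :=
      le_add_of_nonneg_right (mul_nonneg ha (by linarith))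
    _ = b / √(1 - b ^ 2) - a / √(1 - a ^ 2) := by ring

lemma ofReal_mul_le_measure_regionBetween {X : Type*} [MeasurableSpace X] {μ : Measure X}
    [SFinite μ] {f g : X → ℝ} {s : Set X} {δ : ℝ} (hf : Measurable f) (hg : Measurable g)
    (hs : MeasurableSet s) (hfg : ∀ x ∈ s, δ ≤ g x - f x) :
    ENNReal.ofReal δ * μ s ≤ μ.prod volume (regionBetween f g s) := by
  rw [volume_regionBetween_eq_lintegral hf.aemeasurable hg.aemeasurable hs, ← setLIntegral_const]
  exact setLIntegral_mono' hs fun x hx => ENNReal.ofReal_le_ofReal (hfg x hx)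

lemma le_one_of_sq_eq_add_sq {β ρ t q : ℝ} (hβ : |β| < 1) (hρ : ρ ^ 2 ≤ 1 - β ^ 2) (ht : 0 ≤ t)
    (htq : t ≤ β * q) (hq_sq : q ^ 2 = ρ ^ 2 + t ^ 2) : q ≤ 1 := by
  have ht_sq : t ^ 2 ≤ β ^ 2 * q ^ 2 := by
    rw [← mul_pow]
    gcongr
  have h_pos : 0 < 1 - β ^ 2 := sub_pos.mpr ((sq_lt_one_iff_abs_lt_one β).mpr hβ)
  have hq_le : (1 - β ^ 2) * q ^ 2 ≤ (1 - β ^ 2) * 1 := by linarith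
  exact le_of_abs_le ((sq_le_one_iff_abs_le_one q).mp (le_of_mul_le_mul_left hq_le h_pos))

variable {H : Type*} [NormedAddCommGroup H] [InnerProductSpace ℝ H]

lemma inner_toLp_zero_one (q : WithLp 2 (H × ℝ)) :
    ⟪WithLp.toLp 2 ((0 : H), (1 : ℝ)), q⟫ = q.snd := by
  simp [WithLp.prod_inner_apply]

lemma preimage_regionBetween_subset_sphericalSector_sdiff {a b β : ℝ} (ha : 0 ≤ a)
    (hab : a ≤ b) (hbβ : b ≤ β) (hβ : β < 1) {s : Set H} (hs : s ⊆ ball 0 √(1 - β ^ 2)) :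
    (WithLp.ofLp : WithLp 2 (H × ℝ) → H × ℝ) ⁻¹'
        regionBetween (fun z => a / √(1 - a ^ 2) * ‖z‖) (fun z => b / √(1 - b ^ 2) * ‖z‖) s ⊆
      sphericalSector (WithLp.toLp 2 (0, 1)) a 1 \ sphericalSector (WithLp.toLp 2 (0, 1)) b 1 := by
  rintro q ⟨hqs, hqa, hqb⟩
  have hq_sq : ‖q‖ ^ 2 = ‖q.fst‖ ^ 2 + q.snd ^ 2 := by
    simpa using WithLp.prod_norm_sq_eq_of_L2 q
  have h_lower : a * ‖q‖ ≤ q.snd :=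
    (mul_le_iff_div_sqrt_mul_le ha (by linarith) (norm_nonneg _) (norm_nonneg _) hq_sq).mpr hqa.le
  have h_upper : q.snd < b * ‖q‖ := by
    rw [← not_le, mul_le_iff_div_sqrt_mul_le (by linarith) (by linarith) (norm_nonneg _)
      (norm_nonneg _) hq_sq]
    exact hqb.not_ge
  have hρ : ‖q.fst‖ ^ 2 ≤ 1 - β ^ 2 :=
    ((Real.lt_sqrt (norm_nonneg _)).mp (mem_ball_zero_iff.mp (hs hqs))).le
  have hq_le : ‖q‖ ≤ 1 :=
    le_one_of_sq_eq_add_sq (abs_lt.mpr ⟨by linarith, hβ⟩) hρ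
      ((mul_nonneg ha (norm_nonneg q)).trans h_lower) (h_upper.le.trans (by gcongr)) hq_sq
  rw [← inner_toLp_zero_one] at h_lower h_upper
  exact ⟨⟨hq_le, h_lower⟩, fun h => h_upper.not_ge h.2⟩

variable [MeasurableSpace H] [BorelSpace H] [FiniteDimensional ℝ H]

lemma measureReal_ball_sdiff_closedBall_pos [Nontrivial H] {r R : ℝ} (hr : 0 ≤ r) (hrR : r < R) :
    0 < volume.real (ball (0 : H) R \ closedBall 0 r) := by
  obtain ⟨z, hz⟩ := exists_norm_eq H (c := (r + R) / 2) (by linarith)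
  have hz_mem : z ∈ ball (0 : H) R \ closedBall 0 r := by
    simp only [mem_sdiff, mem_ball_zero_iff, mem_closedBall_zero_iff, hz]
    constructor <;> linarith
  exact ENNReal.toReal_pos ((isOpen_ball.sdiff isClosed_closedBall).measure_pos _ ⟨z, hz_mem⟩).ne'
    (measure_ne_top_of_subset sdiff_subset measure_ball_lt_top.ne)

lemma exists_mul_sub_le_measureReal_axis_sphericalSector_sub [Nontrivial H] {β : ℝ} (hβ₀ : 0 ≤ β)
    (hβ₁ : β < 1) : ∃ c : ℝ, 0 < c ∧ ∀ a b : ℝ, 0 ≤ a → a ≤ b → b ≤ β →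
      c * (b - a) ≤
        volume.real (sphericalSector (WithLp.toLp 2 ((0 : H), (1 : ℝ))) a 1) -
          volume.real (sphericalSector (WithLp.toLp 2 ((0 : H), (1 : ℝ))) b 1) := by
  set R := √(1 - β ^ 2)
  have hR_pos : 0 < R := Real.sqrt_pos.mpr (by nlinarith)
  set s := ball (0 : H) R \ closedBall 0 (R / 2)
  have hs_pos : 0 < volume.real s :=
    measureReal_ball_sdiff_closedBall_pos (by positivity) (by linarith)
  refine ⟨R / 2 * volume.real s, by positivity, fun a b ha hab hbβ => ?_⟩
  set lower : H → ℝ := fun z => a / √(1 - a ^ 2) * ‖z‖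
  set upper : H → ℝ := fun z => b / √(1 - b ^ 2) * ‖z‖
  have hs_meas : MeasurableSet s := measurableSet_ball.diff measurableSet_closedBall
  have h_gap : ∀ z ∈ s, R / 2 * (b - a) ≤ upper z - lower z := by
    intro z hz
    have hz_norm : R / 2 ≤ ‖z‖ := (not_le.mp (by simpa using hz.2)).le
    calc R / 2 * (b - a) ≤ ‖z‖ * (b / √(1 - b ^ 2) - a / √(1 - a ^ 2)) :=
          mul_le_mul hz_norm (sub_le_div_sqrt_one_sub_sq_sub ha hab (by linarith)) (by linarith)
            (norm_nonneg z)
      _ = upper z - lower z := by ring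
  have h_region := ofReal_mul_le_measure_regionBetween (μ := volume)
    (by fun_prop : Measurable lower) (by fun_prop : Measurable upper) hs_meas h_gap
  rw [← Measure.volume_eq_prod, ← (WithLp.volume_preserving_ofLp H ℝ).measure_preimage
    (measurableSet_regionBetween (by fun_prop) (by fun_prop) hs_meas).nullMeasurableSet]
    at h_region
  rw [← measureReal_sdiff (sphericalSector_anti hab) measurableSet_sphericalSector
    volume_sphericalSector_ne_top]
  have h_sdiff := ENNReal.toReal_mono
    (measure_ne_top_of_subset sdiff_subset volume_sphericalSector_ne_top)
    (h_region.trans (measure_mono (preimage_regionBetween_subset_sphericalSector_sdiff ha hab hbβ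
      hβ₁ sdiff_subset)))
  rw [ENNReal.toReal_mul, ENNReal.toReal_ofReal (mul_nonneg (by positivity) (by linarith))]
    at h_sdiff
  calc R / 2 * volume.real s * (b - a) = R / 2 * (b - a) * (volume s).toReal := by
        rw [measureReal_def]; ring
    _ ≤ _ := h_sdiff

variable {E : Type*} [NormedAddCommGroup E] [InnerProductSpace ℝ E] [MeasurableSpace E]
  [BorelSpace E] [FiniteDimensional ℝ E]

theorem exists_mul_sub_le_measureReal_sphericalSector_sub (hE : 2 ≤ finrank ℝ E) {β : ℝ}
    (hβ₀ : 0 ≤ β) (hβ₁ : β < 1) : ∃ c : ℝ, 0 < c ∧ ∀ e : E, ‖e‖ = 1 →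
      ∀ a b : ℝ, 0 ≤ a → a ≤ b → b ≤ β →
        c * (b - a) ≤
          volume.real (sphericalSector e a 1) - volume.real (sphericalSector e b 1) := by
  obtain ⟨m, hm⟩ : ∃ m, finrank ℝ E = m + 2 := ⟨_, (Nat.sub_add_cancel hE).symm⟩
  obtain ⟨c, hc, h_axis⟩ := exists_mul_sub_le_measureReal_axis_sphericalSector_sub
    (H := EuclideanSpace ℝ (Fin (m + 1))) hβ₀ hβ₁
  refine ⟨c, hc, fun e he a b ha hab hbβ => ?_⟩
  have h_finrank : finrank ℝ E =
      finrank ℝ (WithLp 2 (EuclideanSpace ℝ (Fin (m + 1)) × ℝ)) := by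
    rw [hm, (WithLp.linearEquiv 2 ℝ _).finrank_eq]
    simp
  obtain ⟨L, hL⟩ := exists_linearIsometryEquiv_apply_eq (f := WithLp.toLp 2 (0, 1)) h_finrank he
    (by simp)
  simpa only [← hL, measureReal_sphericalSector_map] using h_axis a b ha hab hbβ

end SectorBand

section Lens

section Halves
variable {E : Type*} [PseudoMetricSpace E] {x y : E} {r : ℝ}

/-- The half of the lens `closedBall x r ∩ closedBall y r` whose points are at least as close to
`y` as to `x`; there the condition coming from the ball about `y` is automatic. -/
def halfLens (x y : E) (r : ℝ) : Set E :=
  {p | dist p x ≤ r ∧ dist p y ≤ dist p x}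

lemma closedBall_inter_closedBall_eq_halfLens_union :
    closedBall x r ∩ closedBall y r = halfLens x y r ∪ halfLens y x r := by
  ext p
  simp only [halfLens, mem_inter_iff, mem_closedBall, mem_union, mem_ofPred_eq]
  grind

end Halves

variable {E : Type*} [NormedAddCommGroup E] [InnerProductSpace ℝ E] {x y e : E} {h r : ℝ}

lemma exists_norm_eq_one_and_sub_eq_smul (hxy : x ≠ y) :
    ∃ e : E, ‖e‖ = 1 ∧ y - x = (2 * (dist x y / 2)) • e := by
  have h_ne : ‖y - x‖ ≠ 0 := norm_ne_zero_iff.mpr (sub_ne_zero.mpr hxy.symm)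
  refine ⟨‖y - x‖⁻¹ • (y - x), norm_smul_inv_norm (norm_ne_zero_iff.mp h_ne), ?_⟩
  rw [mul_div_cancel₀ _ two_ne_zero, dist_comm, dist_eq_norm, smul_inv_smul₀ h_ne]

lemma halfLens_inter_halfLens_subset_perpBisector :
    halfLens x y r ∩ halfLens y x r ⊆ (AffineSubspace.perpBisector x y : Set E) :=
  fun _ hp => AffineSubspace.mem_perpBisector_iff_dist_eq.mpr (hp.2.2.antisymm hp.1.2)

lemma norm_sub_two_mul_smul_le_norm_iff (he : ‖e‖ = 1) (hh : 0 < h) (q : E) :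
    ‖q - (2 * h) • e‖ ≤ ‖q‖ ↔ h ≤ ⟪e, q⟫ := by
  have h_expand : ‖q - (2 * h) • e‖ ^ 2 = ‖q‖ ^ 2 + 4 * h * (h - ⟪e, q⟫) := by
    rw [norm_sub_sq_real, inner_smul_right, norm_smul, he, real_inner_comm, mul_one,
      Real.norm_eq_abs, sq_abs]
    ring
  rw [← sq_le_sq₀ (norm_nonneg _) (norm_nonneg _), h_expand, add_le_iff_nonpos_right]
  constructor <;> intro _ <;> nlinarith

lemma halfLens_eq_preimage_sphericalCap (he : ‖e‖ = 1) (hh : 0 < h) (hxy : y - x = (2 * h) • e) :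
    halfLens x y r = (· - x) ⁻¹' sphericalCap e h r := by
  ext p
  have hpy : p - y = p - x - (2 * h) • e := by rw [← hxy]; abel
  simp only [halfLens, sphericalCap, mem_preimage, mem_ofPred_eq, dist_eq_norm, hpy,
    norm_sub_two_mul_smul_le_norm_iff he hh]

variable [MeasurableSpace E] [BorelSpace E] [FiniteDimensional ℝ E]

lemma measurableSet_halfLens : MeasurableSet (halfLens x y r) := by
  unfold halfLens
  measurability

lemma measureReal_halfLens (he : ‖e‖ = 1) (hh : 0 < h) (hxy : y - x = (2 * h) • e) :
    volume.real (halfLens x y r) = volume.real (sphericalCap e h r) := by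
  rw [halfLens_eq_preimage_sphericalCap he hh hxy, (measurePreserving_sub_right volume
    x).measureReal_preimage measurableSet_sphericalCap.nullMeasurableSet]

lemma aedisjoint_halfLens (hxy : x ≠ y) : AEDisjoint volume (halfLens x y r) (halfLens y x r) := by
  refine measure_mono_null halfLens_inter_halfLens_subset_perpBisector
    (Measure.addHaar_affineSubspace _ _ ?_)
  rwa [Ne, AffineSubspace.perpBisector_eq_top]

lemma volume_halfLens_ne_top : volume (halfLens x y r) ≠ ⊤ :=
  measure_ne_top_of_subset (fun _ hp => hp.1 : halfLens x y r ⊆ closedBall x r)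
    measure_closedBall_lt_top.ne

theorem measureReal_closedBall_inter_closedBall (he : ‖e‖ = 1) (hh : 0 < h)
    (hxy : y - x = (2 * h) • e) :
    volume.real (closedBall x r ∩ closedBall y r) = 2 * volume.real (sphericalCap e h r) := by
  have hyx : x - y = (2 * h) • -e := by rw [smul_neg, ← hxy, neg_sub]
  have h_ne : x ≠ y := by
    rw [ne_comm, ← sub_ne_zero, hxy]
    exact smul_ne_zero (by positivity) (norm_ne_zero_iff.mp (by simp [he]))
  rw [closedBall_inter_closedBall_eq_halfLens_union,
    measureReal_union₀ measurableSet_halfLens.nullMeasurableSet (aedisjoint_halfLens h_ne)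
      volume_halfLens_ne_top volume_halfLens_ne_top, measureReal_halfLens he hh hxy,
    measureReal_halfLens (by rwa [norm_neg]) hh hyx, measureReal_sphericalCap_neg, two_mul]

end Lens

/-- The radius `(ℓ / ν) ^ (1 / d)`, whose `d`-th power is `ℓ / ν`: in dimension `d`, the volume of
the ball of this radius is proportional to `ℓ`. -/
def volumeRadius (d : ℕ) (ν ℓ : ℝ) : ℝ :=
  (ℓ / ν) ^ ((1 : ℝ) / (d : ℝ))

section VolumeRadius
variable {d : ℕ} {ν ℓ u v : ℝ}

lemma volumeRadius_nonneg (hν : 0 ≤ ν) (hℓ : 0 ≤ ℓ) : 0 ≤ volumeRadius d ν ℓ :=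
  Real.rpow_nonneg (div_nonneg hℓ hν) _

lemma volumeRadius_pos (hν : 0 < ν) (hℓ : 0 < ℓ) : 0 < volumeRadius d ν ℓ :=
  Real.rpow_pos_of_pos (div_pos hℓ hν) _

lemma volumeRadius_mono (hν : 0 ≤ ν) (hu : 0 ≤ u) (huv : u ≤ v) :
    volumeRadius d ν u ≤ volumeRadius d ν v :=
  Real.rpow_le_rpow (div_nonneg hu hν) (by gcongr) (by positivity)

lemma volumeRadius_pow (hd : d ≠ 0) (hν : 0 ≤ ν) (hℓ : 0 ≤ ℓ) : volumeRadius d ν ℓ ^ d = ℓ / ν := by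
  rw [volumeRadius, one_div, Real.rpow_inv_natCast_pow (div_nonneg hℓ hν) hd]

lemma volumeRadius_le_sqrt_two_mul (hd : 2 ≤ d) (hν : 0 ≤ ν) (hv : 0 ≤ v) (huv : u ≤ 2 * v)
    (hu : 0 ≤ u) : volumeRadius d ν u ≤ √2 * volumeRadius d ν v := by
  have hρ : 0 ≤ volumeRadius d ν v := volumeRadius_nonneg hν hv
  have h_two_le : 2 ≤ √2 ^ d :=
    calc (2 : ℝ) = √2 ^ 2 := (Real.sq_sqrt zero_le_two).symm
      _ ≤ √2 ^ d := pow_le_pow_right₀ (Real.one_le_sqrt.mpr one_le_two) hd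
  refine le_of_pow_le_pow_left₀ (n := d) (by lia) (by positivity) ?_
  calc volumeRadius d ν u ^ d = u / ν := volumeRadius_pow (by lia) hν hu
    _ ≤ 2 * (v / ν) := by rw [← mul_div_assoc]; gcongr
    _ ≤ √2 ^ d * (v / ν) := by gcongr
    _ = (√2 * volumeRadius d ν v) ^ d := by rw [mul_pow, volumeRadius_pow (by lia) hν hv]

lemma mul_pow_sub_pow_le_mul_div_sub_div {h s t : ℝ} (hh : 0 ≤ h) (hs : 0 < s) (hst : s ≤ t) :
    h * (t ^ d - s ^ d) ≤ d * t ^ (d + 1) * (h / s - h / t) := by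
  have ht : 0 < t := hs.trans_le hst
  have h_pow : t ^ d - s ^ d ≤ (t - s) * d * t ^ (d - 1) := by
    have := (le_abs_self _).trans (abs_pow_sub_pow_le t s d)
    rwa [abs_of_nonneg (sub_nonneg.mpr hst), abs_of_pos ht, abs_of_pos hs, max_eq_left hst] at this
  rcases d.eq_zero_or_pos with rfl | hd
  · simp
  calc h * (t ^ d - s ^ d) ≤ h * ((t - s) * d * t ^ (d - 1)) := by gcongr
    _ ≤ h * ((t - s) * d * t ^ (d - 1)) * (t / s) := by
      have := sub_nonneg.mpr hst
      exact le_mul_of_one_le_right (by positivity) ((one_le_div hs).mpr hst)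
    _ = d * t ^ (d + 1) * (h / s - h / t) := by
      obtain ⟨m, rfl⟩ := Nat.exists_eq_add_one.mpr hd
      rw [Nat.add_sub_cancel]
      field_simp
      ring

lemma mul_div_le_mul_div_volumeRadius_sub {h r τ : ℝ} (hd : d ≠ 0) (hν : 0 < ν) (hh : 0 ≤ h)
    (hτ : 0 ≤ τ) (hτr : τ < r) :
    h * (τ / 2 / ν) ≤ d * (volumeRadius d ν r * (r / ν)) *
      (h / volumeRadius d ν (r - τ) - h / volumeRadius d ν (r - τ / 2)) := by
  set ρ := volumeRadius d ν
  have hρ_pos : 0 < ρ (r - τ) := volumeRadius_pos hν (by linarith)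
  have hρ_mono : ρ (r - τ) ≤ ρ (r - τ / 2) := volumeRadius_mono hν.le (by linarith) (by linarith)
  have h_gap : 0 ≤ h / ρ (r - τ) - h / ρ (r - τ / 2) :=
    sub_nonneg.mpr (div_le_div_of_nonneg_left hh hρ_pos hρ_mono)
  calc h * (τ / 2 / ν) = h * (ρ (r - τ / 2) ^ d - ρ (r - τ) ^ d) := by
        rw [volumeRadius_pow hd hν.le (by linarith), volumeRadius_pow hd hν.le (by linarith)]
        ring
    _ ≤ d * ρ (r - τ / 2) ^ (d + 1) * (h / ρ (r - τ) - h / ρ (r - τ / 2)) :=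
        mul_pow_sub_pow_le_mul_div_sub_div hh hρ_pos hρ_mono
    _ ≤ d * ρ r ^ (d + 1) * (h / ρ (r - τ) - h / ρ (r - τ / 2)) := by
        have hρ_nonneg : 0 ≤ ρ (r - τ / 2) := hρ_pos.le.trans hρ_mono
        gcongr
        exact volumeRadius_mono hν.le (by linarith) (by linarith)
    _ = d * (ρ r * (r / ν)) * (h / ρ (r - τ) - h / ρ (r - τ / 2)) := by
        rw [pow_succ', volumeRadius_pow hd hν.le (by linarith)]

lemma mul_div_le_div_volumeRadius_sub {h lam r τ : ℝ} (hd : d ≠ 0) (hν : 0 < ν) (hlam : 0 ≤ lam)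
    (hτ : 0 ≤ τ) (hτr : τ < r) (hh : lam * volumeRadius d ν r ≤ 2 * h) :
    lam * τ / (4 * d * r) ≤ h / volumeRadius d ν (r - τ) - h / volumeRadius d ν (r - τ / 2) := by
  have hr : 0 < r := hτ.trans_lt hτr
  have hρ : 0 < volumeRadius d ν r := volumeRadius_pos hν hr
  have hh_nonneg : 0 ≤ h := by linarith [mul_nonneg hlam hρ.le]
  have h_gap := mul_div_le_mul_div_volumeRadius_sub hd hν hh_nonneg hτ hτr
  set gap := h / volumeRadius d ν (r - τ) - h / volumeRadius d ν (r - τ / 2)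
  set ρ := volumeRadius d ν r
  rw [div_le_iff₀ (by positivity)]
  refine le_of_mul_le_mul_right ?_ (div_pos hρ hν)
  calc lam * τ * (ρ / ν) = lam * ρ * (τ / ν) := by ring
    _ ≤ 2 * h * (τ / ν) := by gcongr
    _ = 4 * (h * (τ / 2 / ν)) := by ring
    _ ≤ 4 * (d * (ρ * (r / ν)) * gap) := by gcongr
    _ = gap * (4 * d * r) * (ρ / ν) := by ring

end VolumeRadius

section LensVolume
variable {E : Type*} [NormedAddCommGroup E] [InnerProductSpace ℝ E] [MeasurableSpace E]
  [BorelSpace E] [FiniteDimensional ℝ E]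

/-- The coordinate-free version of `ballInter`: the volume of the intersection of the two closed
balls of radius `volumeRadius (finrank ℝ E) ν ℓ` about `x` and `y`. -/
def lensVolume (ν : ℝ) (x y : E) (ℓ : ℝ) : ℝ :=
  volume.real (closedBall x (volumeRadius (finrank ℝ E) ν ℓ) ∩
    closedBall y (volumeRadius (finrank ℝ E) ν ℓ))

/-- The subgradient of `lensVolume ν x y` at `ℓ` when `y - x = (2 * h) • e` with `‖e‖ = 1`. The
sector is the cone with apex `x` over the spherical part of the boundary of `halfLens x y`, rescaled
to unit radius. -/
def lensSubgradient (ν : ℝ) (e : E) (h ℓ : ℝ) : ℝ :=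
  2 / ν * volume.real (sphericalSector e (h / volumeRadius (finrank ℝ E) ν ℓ) 1)

variable {x y e : E} {ν h : ℝ}

theorem lensSubgradient_mul_sub_le (he : ‖e‖ = 1) (hh : 0 < h) (hxy : y - x = (2 * h) • e)
    (hν : 0 < ν) {u v : ℝ} (hv : 0 < v) (hu : 0 ≤ u) :
    lensSubgradient ν e h v * (u - v) ≤ lensVolume ν x y u - lensVolume ν x y v := by
  have : Nontrivial E := ⟨e, 0, norm_ne_zero_iff.mp (by simp [he])⟩
  have hd : finrank ℝ E ≠ 0 := finrank_pos.ne'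
  have hu_pow := volumeRadius_pow hd hν.le hu
  have hv_pow := volumeRadius_pow hd hν.le hv.le
  have hv_pos := volumeRadius_pos (d := finrank ℝ E) hν hv
  simp only [lensSubgradient, lensVolume, measureReal_closedBall_inter_closedBall he hh hxy]
  rcases le_total v u with hvu | huv
  · have h_le := mul_measureReal_sphericalSector_le_sphericalCap_sub (e := e) hh.le hv_pos
      (volumeRadius_mono hν.le hv.le hvu)
    rw [hu_pow, hv_pow] at h_le
    linear_combination 2 * h_le
  · have h_le := sphericalCap_sub_le_mul_measureReal_sphericalSector (e := e) hh.le
      (volumeRadius_nonneg hν.le hu) hv_pos (volumeRadius_mono hν.le hu huv)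
    rw [hu_pow, hv_pow] at h_le
    linear_combination 2 * h_le

theorem convexOn_lensVolume (hν : 0 < ν) (hxy : x ≠ y) : ConvexOn ℝ (Ici 0) (lensVolume ν x y) := by
  obtain ⟨e, he, hyx⟩ := exists_norm_eq_one_and_sub_eq_smul hxy
  refine convexOn_of_forall_interior_subgradient (φ := lensSubgradient ν e (dist x y / 2))
    (convex_Ici 0) fun v hv u hu => ?_
  rw [interior_Ici] at hv
  exact lensSubgradient_mul_sub_le he (half_pos (dist_pos.mpr hxy)) hyx hν hv hu

lemma mul_div_le_lensSubgradient_sub {c β lam r τ : ℝ} (hc : 0 ≤ c) (hlam : 0 ≤ lam)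
    (h_sector : ∀ a b : ℝ, 0 ≤ a → a ≤ b → b ≤ β →
      c * (b - a) ≤ volume.real (sphericalSector e a 1) - volume.real (sphericalSector e b 1))
    (hd : finrank ℝ E ≠ 0) (hν : 0 < ν) (hτ : 0 ≤ τ) (hτr : τ < r) (hh : 0 ≤ h)
    (h_lower : lam * volumeRadius (finrank ℝ E) ν r ≤ 2 * h)
    (h_upper : h / volumeRadius (finrank ℝ E) ν (r - τ) ≤ β) :
    2 / ν * (c * (lam * τ / (4 * finrank ℝ E * r))) ≤
      lensSubgradient ν e h (r - τ / 2) - lensSubgradient ν e h (r - τ) := by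
  have h_left_pos : 0 < volumeRadius (finrank ℝ E) ν (r - τ) := volumeRadius_pos hν (by linarith)
  have h_right_pos : 0 < volumeRadius (finrank ℝ E) ν (r - τ / 2) :=
    volumeRadius_pos hν (by linarith)
  have h_le := h_sector (h / volumeRadius (finrank ℝ E) ν (r - τ / 2)) _ (by positivity)
    (div_le_div_of_nonneg_left hh h_left_pos
      (volumeRadius_mono hν.le (by linarith) (by linarith))) h_upper
  rw [lensSubgradient, lensSubgradient, ← mul_sub]
  gcongr
  refine le_trans ?_ h_le
  gcongr
  exact mul_div_le_div_volumeRadius_sub hd hν hlam hτ hτr h_lower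

theorem exists_mul_sq_le_lensVolume_secondDiff (hE : 2 ≤ finrank ℝ E) {lam Lam : ℝ}
    (hlam : 0 < lam) (hLam₀ : 0 ≤ Lam) (hLam : Lam < √2) :
    ∃ α : ℝ, 0 < α ∧ ∀ (ν r τ : ℝ) (x y : E), 0 < ν → 0 ≤ τ → 2 * τ ≤ r →
      lam * volumeRadius (finrank ℝ E) ν r ≤ dist x y →
      dist x y ≤ Lam * volumeRadius (finrank ℝ E) ν r →
      α / r / ν * τ ^ 2 ≤
        lensVolume ν x y r - 2 * lensVolume ν x y (r - τ) + lensVolume ν x y (r - 2 * τ) := by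
  have hβ : Lam * √2 / 2 < 1 := by
    nlinarith [Real.sq_sqrt zero_le_two, Real.sqrt_pos.mpr zero_lt_two]
  obtain ⟨c, hc, h_sector⟩ := exists_mul_sub_le_measureReal_sphericalSector_sub hE
    (by positivity) hβ
  refine ⟨c * lam / (4 * finrank ℝ E), by positivity, fun ν r τ x y hν hτ hτr h_lower h_upper => ?_⟩
  rcases hτ.eq_or_lt with rfl | hτ_pos
  · simp only [mul_zero, sub_zero]
    linarith
  have hρ : 0 < volumeRadius (finrank ℝ E) ν r := volumeRadius_pos hν (by linarith)
  have h_dist : 0 < dist x y := (mul_pos hlam hρ).trans_le h_lower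
  obtain ⟨e, he, hyx⟩ := exists_norm_eq_one_and_sub_eq_smul (dist_pos.mp h_dist)
  have h_cos : dist x y / 2 / volumeRadius (finrank ℝ E) ν (r - τ) ≤ Lam * √2 / 2 := by
    rw [div_le_iff₀ (volumeRadius_pos hν (by linarith))]
    have := volumeRadius_le_sqrt_two_mul (u := r) (v := r - τ) hE hν.le (by linarith) (by linarith)
      (by linarith)
    nlinarith
  have h_diff := mul_div_le_lensSubgradient_sub hc.le hlam.le (h_sector e he) (by lia) hν hτ
    (by linarith) (half_pos h_dist).le (by linarith) h_cos
  have h_subgradient {u v : ℝ} (hv : 0 < v) (hu : 0 ≤ u) :=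
    lensSubgradient_mul_sub_le he (half_pos h_dist) hyx hν hv hu
  calc c * lam / (4 * finrank ℝ E) / r / ν * τ ^ 2
      = τ / 2 * (2 / ν * (c * (lam * τ / (4 * finrank ℝ E * r)))) := by field_simp
    _ ≤ τ / 2 * (lensSubgradient ν e (dist x y / 2) (r - τ / 2) -
          lensSubgradient ν e (dist x y / 2) (r - τ)) := by gcongr
    _ ≤ _ := half_mul_subgradient_sub_le_secondDiff
      (fun u hu => h_subgradient (by linarith) (by grind))
      (h_subgradient (by linarith) (by linarith))

end LensVolume

section OuterShell

lemma one_sub_le_one_sub_pow_rpow {d : ℕ} {ε : ℝ} (hd : d ≠ 0) (hε₀ : 0 ≤ ε) (hε₁ : ε ≤ 1) :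
    1 - ε ≤ (1 - ε ^ d) ^ (1 / (d : ℝ)) := by
  have h_pow : ε ^ d ≤ ε := pow_le_of_le_one hε₀ hε₁ hd
  calc 1 - ε ≤ 1 - ε ^ d := by linarith
    _ ≤ (1 - ε ^ d) ^ (1 / (d : ℝ)) := Real.self_le_rpow_of_le_one (by linarith)
      (sub_le_self 1 (by positivity)) (one_div (d : ℝ) ▸ d.cast_inv_le_one)

section NormedSpace
variable {E : Type*} [NormedAddCommGroup E] [NormedSpace ℝ E] {x y z : E} {ε ρ : ℝ}

/-- The outer shell of the ball of radius `ρ` about `x` that has the same volume as the concentric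
ball of radius `ε * ρ`. -/
def outerShell (x : E) (ε ρ : ℝ) : Set E :=
  closedBall x ρ \ closedBall x ((1 - ε ^ finrank ℝ E) ^ (1 / (finrank ℝ E : ℝ)) * ρ)

lemma dist_le_of_mem_outerShell (hy : y ∈ closedBall x (ε * ρ)) (hz : z ∈ outerShell x ε ρ) :
    dist y z ≤ (1 + ε) * ρ := by
  have hy_le : dist y x ≤ ε * ρ := hy
  have hz_le : dist z x ≤ ρ := hz.1
  linarith [dist_triangle_right y z x]

variable [FiniteDimensional ℝ E] [Nontrivial E]

theorem measureReal_outerShell [MeasurableSpace E] [BorelSpace E] (μ : Measure E)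
    [μ.IsAddHaarMeasure] (hε₀ : 0 ≤ ε) (hε₁ : ε ≤ 1) (hρ : 0 ≤ ρ) :
    μ.real (outerShell x ε ρ) = μ.real (closedBall x (ε * ρ)) := by
  have h_base : 0 ≤ 1 - ε ^ finrank ℝ E := sub_nonneg.mpr (pow_le_one₀ hε₀ hε₁)
  set θ := (1 - ε ^ finrank ℝ E) ^ (1 / (finrank ℝ E : ℝ)) with hθ
  have : 0 ≤ θ := by positivity
  have hθ₁ : θ ≤ 1 :=
    Real.rpow_le_one h_base (sub_le_self 1 (by positivity)) (by positivity)
  have hθ_pow : θ ^ finrank ℝ E = 1 - ε ^ finrank ℝ E := by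
    rw [hθ, one_div, Real.rpow_inv_natCast_pow h_base finrank_pos.ne']
  rw [outerShell, measureReal_sdiff (closedBall_subset_closedBall (mul_le_of_le_one_left hρ hθ₁))
    measurableSet_closedBall measure_closedBall_lt_top.ne, Measure.addHaar_real_closedBall μ x hρ,
    Measure.addHaar_real_closedBall μ x (by positivity),
    Measure.addHaar_real_closedBall μ x (by positivity), mul_pow, mul_pow, hθ_pow]
  ring

lemma lt_dist_of_mem_outerShell (hε₀ : 0 ≤ ε) (hε₁ : ε ≤ 1) (hρ : 0 ≤ ρ)
    (hy : y ∈ closedBall x (ε * ρ)) (hz : z ∈ outerShell x ε ρ) :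
    (1 - 2 * ε) * ρ < dist y z := by
  have hy_le : dist y x ≤ ε * ρ := hy
  have hz_lt : (1 - ε ^ finrank ℝ E) ^ (1 / (finrank ℝ E : ℝ)) * ρ < dist z x := not_le.mp hz.2
  have h_inner : (1 - ε) * ρ ≤ (1 - ε ^ finrank ℝ E) ^ (1 / (finrank ℝ E : ℝ)) * ρ :=
    mul_le_mul_of_nonneg_right (one_sub_le_one_sub_pow_rpow finrank_pos.ne' hε₀ hε₁) hρ
  linarith [dist_triangle_left z x y]

end NormedSpace

variable {E : Type*} [NormedAddCommGroup E] [InnerProductSpace ℝ E] [FiniteDimensional ℝ E]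
  [MeasurableSpace E] [BorelSpace E]

lemma measureReal_closedBall_mul_volumeRadius [Nontrivial E] (x : E) {ε ν ℓ : ℝ} (hε : 0 ≤ ε)
    (hν : 0 ≤ ν) (hℓ : 0 ≤ ℓ) :
    volume.real (closedBall x (ε * volumeRadius (finrank ℝ E) ν ℓ)) =
      Real.pi ^ ((finrank ℝ E : ℝ) / 2) / Real.Gamma (1 + (finrank ℝ E : ℝ) / 2) *
        (ε ^ finrank ℝ E * (ℓ / ν)) := by
  have h_radius := mul_nonneg hε (volumeRadius_nonneg (d := finrank ℝ E) hν hℓ)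
  have : 0 < Real.Gamma ((finrank ℝ E : ℝ) / 2 + 1) := Real.Gamma_pos_of_pos (by positivity)
  have h_sqrt : √Real.pi ^ finrank ℝ E = Real.pi ^ ((finrank ℝ E : ℝ) / 2) := by
    rw [Real.sqrt_eq_rpow, ← Real.rpow_mul_natCast Real.pi_pos.le, one_div_mul_eq_div]
  rw [measureReal_def, InnerProductSpace.volume_closedBall, ENNReal.toReal_mul,
    ENNReal.toReal_pow, ENNReal.toReal_ofReal h_radius, ENNReal.toReal_ofReal (by positivity),
    h_sqrt, mul_pow, volumeRadius_pow finrank_pos.ne' hν hℓ, add_comm _ (1 : ℝ), mul_comm]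

theorem convexOn_lensVolume_of_mem_outerShell [Nontrivial E] {x y z : E} {ε ν r : ℝ} (hε₀ : 0 ≤ ε)
    (hε : ε ≤ 1 / 2) (hν : 0 < ν) (hr : 0 ≤ r)
    (hy : y ∈ closedBall x (ε * volumeRadius (finrank ℝ E) ν r))
    (hz : z ∈ outerShell x ε (volumeRadius (finrank ℝ E) ν r)) :
    ConvexOn ℝ (Ici 0) (lensVolume ν y z) := by
  have hρ := volumeRadius_nonneg (d := finrank ℝ E) hν.le hr
  exact convexOn_lensVolume hν (dist_pos.mp
    ((mul_nonneg (by linarith) hρ).trans_lt (lt_dist_of_mem_outerShell hε₀ (by linarith) hρ hy hz)))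

theorem exists_mul_sq_le_lensVolume_secondDiff_of_mem_outerShell (hE : 2 ≤ finrank ℝ E) {ε : ℝ}
    (hε₀ : 0 ≤ ε) (hε : 1 + ε < √2) :
    ∃ α : ℝ, 0 < α ∧ ∀ (ν r τ : ℝ) (x y z : E), 0 < ν → 0 ≤ τ → 2 * τ ≤ r →
      y ∈ closedBall x (ε * volumeRadius (finrank ℝ E) ν r) →
      z ∈ outerShell x ε (volumeRadius (finrank ℝ E) ν r) →
      α / r / ν * τ ^ 2 ≤
        lensVolume ν y z r - 2 * lensVolume ν y z (r - τ) + lensVolume ν y z (r - 2 * τ) := by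
  have : Nontrivial E := nontrivial_of_finrank_pos (R := ℝ) (by lia)
  have hε_lt : ε < 1 / 2 := by
    nlinarith [Real.sq_sqrt (zero_le_two (α := ℝ)), Real.sqrt_nonneg 2]
  obtain ⟨α, hα, h_secondDiff⟩ := exists_mul_sq_le_lensVolume_secondDiff hE (lam := 1 - 2 * ε)
    (by linarith) (by linarith) hε
  refine ⟨α, hα, fun ν r τ x y z hν hτ hτr hy hz => ?_⟩
  have hρ := volumeRadius_nonneg (d := finrank ℝ E) hν.le (by linarith : 0 ≤ r)
  exact h_secondDiff ν r τ y z hν hτ hτr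
    (lt_dist_of_mem_outerShell hε₀ (by linarith) hρ hy hz).le (dist_le_of_mem_outerShell hy hz)

end OuterShell

section Cubes

/-- The axis-aligned cube of side `2 * a` centered at `x`. -/
def euclideanCube {ι : Type*} (x : EuclideanSpace ℝ ι) (a : ℝ) : Set (EuclideanSpace ℝ ι) :=
  {y | ∀ i, |y i - x i| ≤ a}

variable {ι : Type*} [Fintype ι] {x : EuclideanSpace ℝ ι} {a : ℝ}

lemma closedBall_subset_euclideanCube : closedBall x a ⊆ euclideanCube x a := fun y hy i =>
  (PiLp.norm_apply_le (y - x) i).trans (mem_closedBall_iff_norm.mp hy)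

lemma euclideanCube_subset_closedBall (ha : 0 ≤ a) :
    euclideanCube x a ⊆ closedBall x (√(Fintype.card ι) * a) := by
  intro y hy
  rw [mem_closedBall, EuclideanSpace.dist_eq]
  refine Real.sqrt_le_iff.mpr ⟨by positivity, ?_⟩
  calc ∑ i, dist (y i) (x i) ^ 2 ≤ ∑ _ : ι, a ^ 2 :=
        Finset.sum_le_sum fun i _ => pow_le_pow_left₀ dist_nonneg (hy i) 2
    _ = (√(Fintype.card ι) * a) ^ 2 := by simp [mul_pow]

lemma lt_infDist_of_subset_closedBall {X : Type*} [PseudoMetricSpace X] {A : Set X} {c d : X}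
    {b r s : ℝ} (hA : A.Nonempty) (hAr : A ⊆ closedBall c r) (hrs : r + b ≤ s)
    (hd : d ∉ closedBall c s) : b < infDist d A := by
  have h_lt : s < dist d c := not_le.mp hd
  refine (by linarith : b < dist d c - r).trans_le ((le_infDist hA).mpr fun y hy => ?_)
  have hy_le : dist y c ≤ r := hAr hy
  linarith [dist_triangle d y c]

end Cubes

lemma ballInter_eq_lensVolume {k n : ℕ} (x₀ x₁ : EuclideanSpace ℝ (Fin k)) :
    ballInter k n x₀ x₁ = lensVolume n x₀ x₁ := by
  ext ℓ
  rw [ballInter, lensVolume, volumeRadius, finrank_euclideanSpace_fin, measureReal_def]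

lemma outerShell_one_tenth {k : ℕ} (x : EuclideanSpace ℝ (Fin k)) (ρ : ℝ) :
    outerShell x (1 / 10) ρ = closedBall x ρ \
      closedBall x ((1 - (10 : ℝ) ^ (-(k : ℤ))) ^ ((1 : ℝ) / (k : ℝ)) * ρ) := by
  simp [outerShell]

section SpecialPatternCell
variable {k : ℕ} {ν M r : ℝ} {x : EuclideanSpace ℝ (Fin k)}

lemma measureReal_closedBall_one_tenth_mul_volumeRadius (hk : k ≠ 0) (hν : 0 ≤ ν) (hr : 0 ≤ r) :
    volume.real (closedBall x (1 / 10 * volumeRadius k ν r)) =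
      Real.pi ^ ((k : ℝ) / 2) / Real.Gamma (1 + (k : ℝ) / 2) * r / (10 ^ k * ν) := by
  have : NeZero k := ⟨hk⟩
  have h_ball := measureReal_closedBall_mul_volumeRadius x (by norm_num : (0 : ℝ) ≤ 1 / 10) hν hr
  rw [finrank_euclideanSpace_fin] at h_ball
  rw [h_ball, one_div_pow]
  ring

theorem exists_convexOn_lensVolume_and_mul_sq_le_secondDiff (hk : 2 ≤ k) :
    ∃ α : ℝ, 0 < α ∧ ∀ (ν M τ r : ℝ) (x x₀ x₁ : EuclideanSpace ℝ (Fin k)),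
      0 < ν → 0 ≤ τ → 2 * τ ≤ r → r ≤ M → x₀ ∈ closedBall x (1 / 10 * volumeRadius k ν r) →
      x₁ ∈ outerShell x (1 / 10) (volumeRadius k ν r) →
      ConvexOn ℝ (Icc (r - 2 * τ) r) (lensVolume ν x₀ x₁) ∧
      α / M / ν * τ ^ 2 ≤ lensVolume ν x₀ x₁ r - 2 * lensVolume ν x₀ x₁ (r - τ) +
        lensVolume ν x₀ x₁ (r - 2 * τ) := by
  have : NeZero k := ⟨by lia⟩
  have h_finrank : finrank ℝ (EuclideanSpace ℝ (Fin k)) = k := finrank_euclideanSpace_fin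
  have h_tenth : (0 : ℝ) ≤ 1 / 10 := by norm_num
  obtain ⟨α, hα, h_secondDiff⟩ := exists_mul_sq_le_lensVolume_secondDiff_of_mem_outerShell
    (h_finrank.symm ▸ hk) h_tenth (Real.lt_sqrt_of_sq_lt (by norm_num))
  rw [h_finrank] at h_secondDiff
  refine ⟨α, hα, fun ν M τ r x x₀ x₁ hν hτ hτr hrM hx₀ hx₁ => ⟨?_, ?_⟩⟩
  · have h_convex : ConvexOn ℝ (Ici 0) (lensVolume ν x₀ x₁) :=
      convexOn_lensVolume_of_mem_outerShell (r := r) h_tenth (by norm_num) hν (by linarith)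
        (by rwa [h_finrank]) (by rwa [h_finrank])
    exact h_convex.subset (fun ℓ hℓ => (sub_nonneg.mpr hτr).trans hℓ.1) (convex_Icc _ _)
  · refine le_trans ?_ (h_secondDiff ν r τ x x₀ x₁ hν hτ hτr hx₀ hx₁)
    rcases hτ.eq_or_lt with rfl | hτ_pos
    · simp
    · have hr : 0 < r := by linarith
      gcongr

lemma setOf_abs_sub_le_eq_euclideanCube (hν : 0 ≤ ν) (hM : 0 ≤ M) :
    {y : EuclideanSpace ℝ (Fin k) | ∀ i, |y i - x i| ≤
      6 * M ^ ((1 : ℝ) / (k : ℝ)) / (2 * ν ^ ((1 : ℝ) / (k : ℝ)))} =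
        euclideanCube x (3 * volumeRadius k ν M) := by
  have h_side : 6 * M ^ ((1 : ℝ) / (k : ℝ)) / (2 * ν ^ ((1 : ℝ) / (k : ℝ))) =
      3 * volumeRadius k ν M := by
    rw [volumeRadius, Real.div_rpow hM hν]
    ring
  simp only [h_side, euclideanCube]

lemma sqrt_mul_rpow_div_rpow_eq_volumeRadius (hν : 0 ≤ ν) (hM : 0 ≤ M) :
    √k * (6 * M ^ ((1 : ℝ) / (k : ℝ))) / ν ^ ((1 : ℝ) / (k : ℝ)) =
      2 * (√k * (3 * volumeRadius k ν M)) := by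
  rw [volumeRadius, Real.div_rpow hM hν]
  ring

lemma closedBall_add_volumeRadius_subset_euclideanCube (hν : 0 ≤ ν) (hr : 0 ≤ r) (hrM : r ≤ M) :
    closedBall x (volumeRadius k ν r + volumeRadius k ν M) ⊆
      euclideanCube x (3 * volumeRadius k ν M) := by
  have hρM : 0 ≤ volumeRadius k ν M := volumeRadius_nonneg hν (hr.trans hrM)
  have hρ_le : volumeRadius k ν r ≤ volumeRadius k ν M := volumeRadius_mono hν hr hrM
  exact (closedBall_subset_closedBall (by linarith)).trans closedBall_subset_euclideanCube

end SpecialPatternCell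

theorem special_pattern_cell_properties_general (k : ℕ) (hk : 2 ≤ k) :
    ∃ α : ℝ, 0 < α ∧
      ∀ ν M τ r₂ : ℝ, 0 < ν → 0 < M → 0 ≤ τ → 2 * τ ≤ r₂ → r₂ ≤ M →
      ∀ x_A : EuclideanSpace ℝ (Fin k),
      ∀ w' R R' R'' R''' : ℝ,
        w' = 6 * M ^ ((1 : ℝ) / (k : ℝ)) →
        R = (1 / 10) * (r₂ / ν) ^ ((1 : ℝ) / (k : ℝ)) →
        R' = (1 - (10 : ℝ) ^ (-(k : ℤ))) ^ ((1 : ℝ) / (k : ℝ)) *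
          (r₂ / ν) ^ ((1 : ℝ) / (k : ℝ)) →
        R'' = (r₂ / ν) ^ ((1 : ℝ) / (k : ℝ)) →
        R''' = √k * w' / ν ^ ((1 : ℝ) / (k : ℝ)) + 2 * (M / ν) ^ ((1 : ℝ) / (k : ℝ)) →
      ∀ A : Set (EuclideanSpace ℝ (Fin k)),
        A = {y | ∀ i, |y i - x_A i| ≤ w' / (2 * ν ^ ((1 : ℝ) / (k : ℝ)))} →
        (volume.real (closedBall x_A R'' \ closedBall x_A R') = volume.real (closedBall x_A R) ∧
          volume.real (closedBall x_A R) =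
            Real.pi ^ ((k : ℝ) / 2) / Real.Gamma (1 + (k : ℝ) / 2) * r₂ / (10 ^ k * ν) ∧
          Real.pi ^ ((k : ℝ) / 2) / Real.Gamma (1 + (k : ℝ) / 2) * (2 * τ) / (10 ^ k * ν) ≤
            volume.real (closedBall x_A R)) ∧
        (∀ x₀ ∈ closedBall x_A R, ∀ x₁ ∈ closedBall x_A R'' \ closedBall x_A R',
          ConvexOn ℝ (Icc (r₂ - 2 * τ) r₂) (lensVolume ν x₀ x₁) ∧
          α / M / ν * τ ^ 2 ≤ lensVolume ν x₀ x₁ r₂ - 2 * lensVolume ν x₀ x₁ (r₂ - τ) +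
            lensVolume ν x₀ x₁ (r₂ - 2 * τ)) ∧
        (closedBall x_A (R'' + (M / ν) ^ ((1 : ℝ) / (k : ℝ))) ⊆ A ∧ A ⊆ closedBall x_A R''') ∧
        ∀ d ∉ closedBall x_A R''', 2 * (M / ν) ^ ((1 : ℝ) / (k : ℝ)) < infDist d A := by
  have : NeZero k := ⟨by lia⟩
  obtain ⟨α, hα, h_lens⟩ := exists_convexOn_lensVolume_and_mul_sq_le_secondDiff hk
  refine ⟨α, hα, ?_⟩
  rintro ν M τ r₂ hν hM hτ hτr hrM x_A _ _ _ _ _ rfl rfl rfl rfl rfl _ rfl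
  rw [← outerShell_one_tenth, setOf_abs_sub_le_eq_euclideanCube hν.le hM.le,
    sqrt_mul_rpow_div_rpow_eq_volumeRadius hν.le hM.le, ← volumeRadius.eq_def k ν r₂,
    ← volumeRadius.eq_def k ν M]
  have hr : 0 ≤ r₂ := by linarith
  have hρM : 0 ≤ 3 * volumeRadius k ν M :=
    mul_nonneg zero_le_three (volumeRadius_nonneg hν.le hM.le)
  have h_diag : 0 ≤ √k * (3 * volumeRadius k ν M) := by positivity
  have h_core := measureReal_closedBall_one_tenth_mul_volumeRadius (x := x_A) (NeZero.ne k) hν.le hr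
  have h_cube := euclideanCube_subset_closedBall (x := x_A) hρM
  rw [Fintype.card_fin] at h_cube
  refine ⟨⟨measureReal_outerShell _ (by norm_num) (by norm_num) (volumeRadius_nonneg hν.le hr),
      h_core, ?_⟩,
    fun x₀ hx₀ x₁ hx₁ => h_lens ν M τ r₂ x_A x₀ x₁ hν hτ hτr hrM hx₀ hx₁,
    ⟨closedBall_add_volumeRadius_subset_euclideanCube hν.le hr hrM,
      h_cube.trans (closedBall_subset_closedBall (by linarith))⟩,
    fun d => lt_infDist_of_subset_closedBall
      ⟨x_A, closedBall_subset_euclideanCube (mem_closedBall_self hρM)⟩ h_cube (by linarith)⟩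
  rw [h_core]
  have := Real.Gamma_pos_of_pos (by positivity : 0 < 1 + (k : ℝ) / 2)
  gcongr

end

/-- **Geometric properties of special pattern cells.**
Fix `k ≥ 2` and `M ≥ 1`.  With `w' = 6M^{1/k}`, `R = (1/10)(r₂/n)^{1/k}`,
`R' = (1 - 10^{-k})^{1/k}(r₂/n)^{1/k}`, `R'' = (r₂/n)^{1/k}`,
`R''' = √k w'/n^{1/k} + 2(M/n)^{1/k}`, and `A` the axis-aligned hypercube of side
`w'/n^{1/k}` centered at `x_A`, contained in `[0,1]^k`, the properties (P1)-(P4) hold,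
with the constant in (P2) depending only on `M` and `k`. -/
theorem special_pattern_cell_properties (k : ℕ) (hk : 2 ≤ k) (M : ℝ) (hM : 1 ≤ M) :
    ∃ α : ℝ, 0 < α ∧
      ∀ n : ℕ, 1 ≤ n → ∀ τ r₂ : ℝ, 0 ≤ τ → 2 * τ ≤ r₂ → r₂ ≤ M →
      ∀ x_A : EuclideanSpace ℝ (Fin k),
      ∀ w' R R' R'' R''' : ℝ,
        w' = 6 * M ^ ((1 : ℝ) / (k : ℝ)) →
        R = (1 / 10) * (r₂ / (n : ℝ)) ^ ((1 : ℝ) / (k : ℝ)) →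
        R' = (1 - (10 : ℝ) ^ (-(k : ℤ))) ^ ((1 : ℝ) / (k : ℝ)) *
          (r₂ / (n : ℝ)) ^ ((1 : ℝ) / (k : ℝ)) →
        R'' = (r₂ / (n : ℝ)) ^ ((1 : ℝ) / (k : ℝ)) →
        R''' = Real.sqrt k * w' / (n : ℝ) ^ ((1 : ℝ) / (k : ℝ)) +
          2 * (M / (n : ℝ)) ^ ((1 : ℝ) / (k : ℝ)) →
      ∀ A : Set (EuclideanSpace ℝ (Fin k)),
        A = {y | ∀ i, |y i - x_A i| ≤ w' / (2 * (n : ℝ) ^ ((1 : ℝ) / (k : ℝ)))} →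
        A ⊆ {y | ∀ i, y i ∈ Set.Icc (0 : ℝ) 1} →
        -- (P1)
        (((volume (Metric.closedBall x_A R'' \ Metric.closedBall x_A R')).toReal =
            (volume (Metric.closedBall x_A R)).toReal ∧
          (volume (Metric.closedBall x_A R)).toReal =
            (Real.pi ^ ((k : ℝ) / 2) / Real.Gamma (1 + (k : ℝ) / 2)) * r₂ /
              (10 ^ k * (n : ℝ)) ∧
          (Real.pi ^ ((k : ℝ) / 2) / Real.Gamma (1 + (k : ℝ) / 2)) * (2 * τ) /
              (10 ^ k * (n : ℝ)) ≤
            (volume (Metric.closedBall x_A R)).toReal) ∧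
        -- (P2)
        (∀ x₀ ∈ Metric.closedBall x_A R,
          ∀ x₁ ∈ Metric.closedBall x_A R'' \ Metric.closedBall x_A R',
            ConvexOn ℝ (Set.Icc (r₂ - 2 * τ) r₂) (ballInter k n x₀ x₁) ∧
            α / (n : ℝ) * τ ^ 2 ≤
              ballInter k n x₀ x₁ r₂ - 2 * ballInter k n x₀ x₁ (r₂ - τ) +
                ballInter k n x₀ x₁ (r₂ - 2 * τ)) ∧
        -- (P3)
        (Metric.closedBall x_A (R'' + (M / (n : ℝ)) ^ ((1 : ℝ) / (k : ℝ))) ⊆ A ∧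
          A ⊆ Metric.closedBall x_A R''') ∧
        -- (P4)
        (∀ d : EuclideanSpace ℝ (Fin k), (∀ i, d i ∈ Set.Icc (0 : ℝ) 1) →
          d ∉ Metric.closedBall x_A R''' →
            2 * (M / (n : ℝ)) ^ ((1 : ℝ) / (k : ℝ)) < Metric.infDist d A)) := by
  obtain ⟨α, hα, h_cell⟩ := special_pattern_cell_properties_general k hk
  refine ⟨α / M, by positivity, fun n hn τ r₂ hτ hτr hrM x_A w' R R' R'' R''' hw hR hR' hR'' hR'''
    A hA _ => ?_⟩
  obtain ⟨hP1, hP2, hP3, hP4⟩ := h_cell n M τ r₂ (by positivity) (by positivity) hτ hτr hrM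
    x_A w' R R' R'' R''' hw hR hR' hR'' hR''' A hA
  exact ⟨hP1, by simpa only [ballInter_eq_lensVolume] using hP2, hP3, fun d _ => hP4 d⟩

end
end
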